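/- Let $n \ge 1$ and let $\Omega_1 \subset \mathbb{R}^n$ be a bounded connected (nonempty) domain with smooth boundary; let $\mathcal{H}^n$ denote the $n$-dimensional Hausdorff (i.e. Lebesgue) measure. Let $1 < p < \infty$ and $1 \le q < p^*$, where $p^* = pn/(n-p)$ if $p < n$ and $p^* = \infty$ if $p \ge n$. For $v \in W^{1,p}(\Omega_1)$ write $\|v\|^p_{W^{1,p}(\Omega_1)} = \int_{\Omega_1} |\nabla v|^p + |v|^p \, dx$, and for $0 < \alpha < 1$ set $$\mathbb{S}(\alpha) := \inf\left\{ \frac{\|v\|^p_{W^{1,p}(\Omega_1)}}{\|v\|^p_{L^q(\Omega_1)}} : v \in W^{1,p}(\Omega_1),\ v \not\equiv 0,\ \mathcal{H}^n(\{x \in \Omega_1 : v(x) = 0\}) \ge \alpha\, \mathcal{H}^n(\Omega_1) \right\}.$$ Then for every $0 < \alpha < 1$ there exists $v_\alpha \in W^{1,p}(\Omega_1)$, $v_\alpha \not\equiv 0$, with $\mathcal{H}^n(\{x \in \Omega_1 : v_\alpha(x) = 0\}) = \alpha\, \mathcal{H}^n(\Omega_1)$ such that $$\mathbb{S}(\alpha)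 = \frac{\|v_\alpha\|^p_{W^{1,p}(\Omega_1)}}{\|v_\alpha\|^p_{L^q(\Omega_1)}}.$$ Moreover, $\alpha \mapsto \mathbb{S}(\alpha)$ is strictly increasing on $(0,1)$. -/

import Mathlib

open MeasureTheory Set Bornology
open scoped ENNReal RealInnerProductSpace ContDiff

noncomputable section

/-- `g` is a weak (distributional) gradient of `u` on the open set `Ω`, tested against
`C_c^∞(Ω)`. -/
def IsWeakGradient {n : ℕ} (Ω : Set (EuclideanSpace ℝ (Fin n)))
    (u : EuclideanSpace ℝ (Fin n) → ℝ)
    (g : EuclideanSpace ℝ (Fin n) → EuclideanSpace ℝ (Fin n)) : Prop :=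
  ∀ φ : EuclideanSpace ℝ (Fin n) → ℝ, ContDiff ℝ ∞ φ → HasCompactSupport φ → tsupport φ ⊆ Ω →
    ∀ e : EuclideanSpace ℝ (Fin n),
      ∫ x in Ω, u x * fderiv ℝ φ x e = - ∫ x in Ω, φ x * ⟪g x, e⟫

/-- `u ∈ W^{1,p}(Ω)` with weak gradient `g`. Both `u` and `g` are in `L^p(Ω)`, which includes
their a.e. measurability; `g` is determined by `u` up to a null subset of `Ω`. -/
def MemW1p {n : ℕ} (Ω : Set (EuclideanSpace ℝ (Fin n))) (p : ℝ)
    (u : EuclideanSpace ℝ (Fin n) → ℝ)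
    (g : EuclideanSpace ℝ (Fin n) → EuclideanSpace ℝ (Fin n)) : Prop :=
  MemLp u (ENNReal.ofReal p) (volume.restrict Ω) ∧
    MemLp g (ENNReal.ofReal p) (volume.restrict Ω) ∧
    IsWeakGradient Ω u g

/-- `‖u‖_{W^{1,p}(Ω)}^p = ∫_Ω |∇u|^p + |u|^p`, where `g` is the weak gradient of `u`. -/
def sobolevEnergy {n : ℕ} (Ω : Set (EuclideanSpace ℝ (Fin n))) (p : ℝ)
    (u : EuclideanSpace ℝ (Fin n) → ℝ)
    (g : EuclideanSpace ℝ (Fin n) → EuclideanSpace ℝ (Fin n)) : ℝ :=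
  ∫ x in Ω, ‖g x‖ ^ p + |u x| ^ p

/-- `‖u‖_{L^q(Ω)}^q = ∫_Ω |u|^q`. -/
def intLqPow {n : ℕ} (Ω : Set (EuclideanSpace ℝ (Fin n))) (q : ℝ)
    (u : EuclideanSpace ℝ (Fin n) → ℝ) : ℝ :=
  ∫ x in Ω, |u x| ^ q

/-- The quotient `‖u‖_{W^{1,p}(Ω)}^p / ‖u‖_{L^q(Ω)}^p`. -/
def sobolevQuotient {n : ℕ} (Ω : Set (EuclideanSpace ℝ (Fin n))) (p q : ℝ)
    (u : EuclideanSpace ℝ (Fin n) → ℝ)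
    (g : EuclideanSpace ℝ (Fin n) → EuclideanSpace ℝ (Fin n)) : ℝ :=
  sobolevEnergy Ω p u g / (intLqPow Ω q u) ^ (p / q)

/-- `𝕊(α)`: the infimum of the quotient over the `v ∈ W^{1,p}(Ω)`, not a.e. zero, that vanish on
a subset of `Ω` of measure at least `α |Ω|`. -/
def interiorConst {n : ℕ} (Ω : Set (EuclideanSpace ℝ (Fin n))) (p q α : ℝ) : ℝ :=
  sInf { r | ∃ v g, MemW1p Ω p v g ∧ 0 < intLqPow Ω q v ∧
    ENNReal.ofReal α * volume Ω ≤ volume {x ∈ Ω | v x = 0} ∧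
    r = sobolevQuotient Ω p q v g }

/-- `Ω` has a smooth boundary: near each boundary point, `Ω` is the sublevel set `{f < 0}` of a
`C^∞` function `f` with nonvanishing differential at that point. -/
def HasSmoothBoundary {n : ℕ} (Ω : Set (EuclideanSpace ℝ (Fin n))) : Prop :=
  ∀ x ∈ frontier Ω, ∃ (U : Set (EuclideanSpace ℝ (Fin n))) (f : EuclideanSpace ℝ (Fin n) → ℝ),
    IsOpen U ∧ x ∈ U ∧ ContDiffOn ℝ ∞ f U ∧ fderiv ℝ f x ≠ 0 ∧
      Ω ∩ U = {y ∈ U | f y < 0}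

end

open Filter Topology

/-!
A smooth domain satisfies a local cone condition, and averaging along cones shows that a bounded
sequence in `W^{1,p}` has a subsequence converging in `L^q` for every subcritical `q`. Applied to a
minimizing sequence with `‖v‖_q = 1`, this gives a limit of norm one. By uniform convexity of `L^p`
its energy is at most the infimum, and its zero set has measure at least `α |Ω|`, since convergence
in measure does not destroy zeros.

The zero set of a minimizer `v`, which may be taken nonnegative, cannot be larger than required.
Otherwise `v` could be increased on any small ball without violating the constraint. Comparing `v`
with `v + ε ψ (v + δ) ^ (1 - p)`, where `ψ` is a cutoff, bounds `∫ |∇ log (1 + v / δ)| ^ p` on a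
smaller ball uniformly in `δ`. If `v` vanished on a set of positive measure in that ball, the
Poincaré inequality would bound `log (1 + v / δ)` in `L¹` uniformly in `δ`, so letting `δ → 0` shows
that `v` vanishes almost everywhere there. Hence each small ball meets the zero set in a null or
a conull set, and as `Ω` is connected `v` vanishes almost everywhere or almost nowhere in `Ω`, which
is absurd.

Strict monotonicity follows: if `𝕊(β) ≤ 𝕊(α)` with `α < β`, then a minimizer for `β` is also one for
`α`, but its zero set has measure `β |Ω| > α |Ω|`.
-/

variable {n : ℕ} {Ω : Set (EuclideanSpace ℝ (Fin n))} {u : EuclideanSpace ℝ (Fin n) → ℝ}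
  {g : EuclideanSpace ℝ (Fin n) → EuclideanSpace ℝ (Fin n)}

local notation "𝔼" => EuclideanSpace ℝ (Fin n)

/-! ### Translations along a segment -/

section Translation

variable {E F : Type*} [NormedAddCommGroup E] [NormedSpace ℝ E] [MeasurableSpace E] [BorelSpace E]
  [NormedAddCommGroup F] {μ : Measure E}

section SecondCountable

variable [SecondCountableTopology E] [SFinite μ] [μ.IsAddRightInvariant]

theorem measurePreserving_add_smul_prod (ν : Measure ℝ) [SFinite ν] (z : E) :
    MeasurePreserving (fun a : E × ℝ => (a.1 + a.2 • z, a.2)) (μ.prod ν) (μ.prod ν) := by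
  have hshear : MeasurePreserving (fun a : ℝ × E => (a.1, a.2 + a.1 • z)) (ν.prod μ) (ν.prod μ) :=
    (MeasurePreserving.id ν).skew_product (g := fun t y => y + t • z)
      (measurable_snd.add (measurable_fst.smul_const z))
      (.of_forall fun t => map_add_right_eq_self μ (t • z))
  exact Measure.measurePreserving_swap.comp (hshear.comp Measure.measurePreserving_swap)

theorem integrable_comp_add_smul_prod {f : E → F} (hf : Integrable f μ) (ν : Measure ℝ)
    [IsFiniteMeasure ν] (z : E) :
    Integrable (fun a : E × ℝ => f (a.1 + a.2 • z)) (μ.prod ν) :=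
  (measurePreserving_add_smul_prod ν z).integrable_comp_of_integrable (hf.comp_fst ν)

theorem lintegral_lintegral_add_smul {f : E → ℝ≥0∞} (hf : AEMeasurable f μ) (z : E) :
    ∫⁻ y, ∫⁻ t in Ioc (0 : ℝ) 1, f (y + t • z) ∂volume ∂μ = ∫⁻ y, f y ∂μ := by
  rw [lintegral_lintegral_swap]
  · simp_rw [lintegral_add_right_eq_self (μ := μ) f]
    simp
  · exact hf.comp_fst.comp_quasiMeasurePreserving
      (measurePreserving_add_smul_prod _ z).quasiMeasurePreserving

end SecondCountable

section FiniteDimensional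

variable [FiniteDimensional ℝ E] [μ.IsAddHaarMeasure]

theorem tendsto_integral_norm_translate_sub {f : E → F} (hf : Integrable f μ) :
    Tendsto (fun z => ∫ x, ‖f (x + z) - f x‖ ∂μ) (𝓝 0) (𝓝 0) := by
  let T : E → C(E, E) := fun z => ⟨fun x => x + z, by fun_prop⟩
  have hT : Continuous T :=
    (ContinuousMap.curry ⟨fun a : E × E => a.2 + a.1, by fun_prop⟩).continuous
  have hmp : ∀ z, MeasurePreserving (T z) μ μ := fun z => measurePreserving_add_right μ z
  have hlim := (tendsto_const_nhds (x := hf.toL1 f) (f := 𝓝 (0 : E))).compMeasurePreservingLp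
    (hT.tendsto 0) hmp (hmp 0) ENNReal.one_ne_top
  have hcoe : ∀ z, (Lp.compMeasurePreserving (T z) (hmp z) (hf.toL1 f) : E → F)
      =ᵐ[μ] fun x => f (x + z) := fun z =>
    (Lp.coeFn_compMeasurePreserving _ (hmp z)).trans
      ((hmp z).quasiMeasurePreserving.ae_eq_comp hf.coeFn_toL1)
  refine (tendsto_iff_norm_sub_tendsto_zero.1 hlim).congr fun z => ?_
  rw [L1.norm_eq_integral_norm]
  refine integral_congr_ae ?_
  filter_upwards [hcoe z, hcoe 0, Lp.coeFn_sub
    (Lp.compMeasurePreserving (T z) (hmp z) (hf.toL1 f))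
    (Lp.compMeasurePreserving (T 0) (hmp 0) (hf.toL1 f))] with x hz h0 hsub
  rw [hsub, Pi.sub_apply, hz, h0, add_zero]

theorem exists_seq_ae_tendsto_translate {f : E → F} (hf : Integrable f μ) (e : E) :
    ∃ s : ℕ → ℝ, Tendsto s atTop (𝓝[>] 0) ∧
      ∀ᵐ x ∂μ, Tendsto (fun k => f (x + s k • e)) atTop (𝓝 (f x)) := by
  have hs : Tendsto (fun k : ℕ => 1 / ((k : ℝ) + 1)) atTop (𝓝[>] 0) :=
    tendsto_nhdsWithin_iff.2 ⟨tendsto_one_div_add_atTop_nhds_zero_nat,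
      .of_forall fun _ => mem_Ioi.2 Nat.one_div_pos_of_nat⟩
  have hse : Tendsto (fun k : ℕ => (1 / ((k : ℝ) + 1)) • e) atTop (𝓝 0) := by
    simpa using (hs.mono_right nhdsWithin_le_nhds).smul_const e
  have hL1 := (tendsto_integral_norm_translate_sub hf).comp hse
  have hmeas : TendstoInMeasure μ (fun (k : ℕ) x => f (x + (1 / ((k : ℝ) + 1)) • e)) atTop f := by
    refine tendstoInMeasure_of_tendsto_eLpNorm one_ne_zero
      (fun k => (hf.comp_add_right _).aestronglyMeasurable) hf.aestronglyMeasurable ?_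
    refine (ENNReal.ofReal_zero ▸ ENNReal.tendsto_ofReal hL1).congr fun k => ?_
    rw [eLpNorm_one_eq_lintegral_enorm]
    exact ofReal_integral_norm_eq_lintegral_enorm ((hf.comp_add_right _).sub hf)
  obtain ⟨ns, hns, hae⟩ := hmeas.exists_seq_tendsto_ae
  exact ⟨_, hs.comp hns.tendsto_atTop, hae⟩

theorem integrable_intervalIntegral_add_smul {f : E → ℝ} (hf : Integrable f μ) (z : E) :
    Integrable (fun y => ∫ t in (0 : ℝ)..1, f (y + t • z)) μ := by
  simp_rw [intervalIntegral.integral_of_le zero_le_one]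
  exact (integrable_comp_add_smul_prod hf _ z).integral_prod_left

theorem integral_norm_segment_average_sub_le {f : E → ℝ} (hf : Integrable f μ) (z : E) :
    ∫ y, ‖(∫ t in (0 : ℝ)..1, f (y + t • z)) - f y‖ ∂μ ≤
      ∫ t in Ioc (0 : ℝ) 1, ∫ y, ‖f (y + t • z) - f y‖ ∂μ := by
  have hprod := integrable_comp_add_smul_prod hf (volume.restrict (Ioc (0 : ℝ) 1)) z
  have hdiff : Integrable (fun a : E × ℝ => f (a.1 + a.2 • z) - f a.1)
      (μ.prod (volume.restrict (Ioc (0 : ℝ) 1))) := hprod.sub (hf.comp_fst _)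
  rw [← integral_integral_swap (f := fun y t => ‖f (y + t • z) - f y‖) hdiff.norm]
  refine integral_mono_ae ((integrable_intervalIntegral_add_smul hf z).sub hf).norm
    hdiff.norm.integral_prod_left ?_
  filter_upwards [hprod.prod_right_ae] with y hy
  calc ‖(∫ t in (0 : ℝ)..1, f (y + t • z)) - f y‖
      = ‖∫ t in Ioc (0 : ℝ) 1, (f (y + t • z) - f y)‖ := by
        rw [intervalIntegral.integral_of_le zero_le_one, integral_sub hy (integrable_const _)]
        simp
    _ ≤ _ := norm_integral_le_integral_norm _

theorem tendsto_integral_norm_segment_average_sub {f : E → ℝ} (hf : Integrable f μ) (e : E) :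
    Tendsto (fun h : ℝ => ∫ y, ‖(∫ t in (0 : ℝ)..1, f (y + t • (h • e))) - f y‖ ∂μ)
      (𝓝 0) (𝓝 0) := by
  have hsmall : ∀ t : ℝ, Tendsto (fun h : ℝ => t • (h • e)) (𝓝 0) (𝓝 0) := fun t => by
    have : Continuous fun h : ℝ => t • (h • e) := by fun_prop
    simpa using this.tendsto 0
  have hbound : ∀ z, ∫ y, ‖f (y + z) - f y‖ ∂μ ≤ (∫ y, ‖f y‖ ∂μ) + ∫ y, ‖f y‖ ∂μ := fun z =>
    calc ∫ y, ‖f (y + z) - f y‖ ∂μ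
        ≤ ∫ y, (‖f (y + z)‖ + ‖f y‖) ∂μ :=
          integral_mono ((hf.comp_add_right z).sub hf).norm
            ((hf.comp_add_right z).norm.add hf.norm) fun y => norm_sub_le _ _
      _ = (∫ y, ‖f y‖ ∂μ) + ∫ y, ‖f y‖ ∂μ := by
          rw [integral_add (hf.comp_add_right z).norm hf.norm,
            integral_add_right_eq_self (fun y => ‖f y‖) z]
  have hlim : Tendsto (fun h : ℝ => ∫ t in Ioc (0 : ℝ) 1, ∫ y, ‖f (y + t • (h • e)) - f y‖ ∂μ)
      (𝓝 0) (𝓝 (∫ _ in Ioc (0 : ℝ) 1, (0 : ℝ))) := by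
    refine tendsto_integral_filter_of_dominated_convergence
      (fun _ => (∫ y, ‖f y‖ ∂μ) + ∫ y, ‖f y‖ ∂μ) (.of_forall fun h => ?_)
      (.of_forall fun h => .of_forall fun t => ?_) (integrable_const _)
      (.of_forall fun t => (tendsto_integral_norm_translate_sub hf).comp (hsmall t))
    · exact ((integrable_comp_add_smul_prod hf _ (h • e)).sub
        (hf.comp_fst _)).norm.integral_prod_right.aestronglyMeasurable
    · rw [Real.norm_of_nonneg (integral_nonneg fun _ => norm_nonneg _)]
      exact hbound _
  rw [integral_zero] at hlim
  exact squeeze_zero (fun h => integral_nonneg fun _ => norm_nonneg _)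
    (fun h => integral_norm_segment_average_sub_le hf (h • e)) hlim

end FiniteDimensional

end Translation

/-! ### The fundamental theorem of calculus along segments -/

theorem integrable_mul_of_hasCompactSupport {E : Type*} [NormedAddCommGroup E]
    [MeasurableSpace E] [BorelSpace E] {μ : Measure E} {f φ : E → ℝ} (hφ : Continuous φ)
    (hc : HasCompactSupport φ) (hf : Integrable f μ) : Integrable (fun x => φ x * f x) μ :=
  hf.locallyIntegrable.integrable_smul_left_of_hasCompactSupport hφ hc

theorem integral_mul_translate_sub {E : Type*} [NormedAddCommGroup E] [MeasurableSpace E]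
    [BorelSpace E] {μ : Measure E} [μ.IsAddRightInvariant]
    {f φ : E → ℝ} (hf : Integrable f μ) (hφ : Continuous φ) (hc : HasCompactSupport φ) (z : E) :
    ∫ x, φ x * (f (x + z) - f x) ∂μ = ∫ x, (φ (x - z) - φ x) * f x ∂μ := by
  have hφf := integrable_mul_of_hasCompactSupport hφ hc hf
  have hφfz := integrable_mul_of_hasCompactSupport hφ hc (hf.comp_add_right z)
  have hφzf : Integrable (fun x => φ (x - z) * f x) μ := by
    simpa using hφfz.comp_sub_right z
  simp_rw [mul_sub, sub_mul]
  rw [integral_sub hφfz hφf, integral_sub hφzf hφf,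
    ← integral_add_right_eq_self (fun x => φ (x - z) * f x) z]
  simp

section DifferenceQuotient

variable {E : Type*} [NormedAddCommGroup E] [NormedSpace ℝ E] [MeasurableSpace E] [BorelSpace E]
  [FiniteDimensional ℝ E] {μ : Measure E} [μ.IsAddHaarMeasure]

/-- The difference quotient of `f` with step `h` in the direction `e`; its limit as `h ↓ 0` is used
to recognise weak derivatives. It is `0` for `h = 0`. -/
noncomputable def diffQuot (f : E → ℝ) (h : ℝ) (e x : E) : ℝ :=
  h⁻¹ * (f (x + h • e) - f x)

theorem tendsto_integral_mul_diffQuot {f φ : E → ℝ} (hf : Integrable f μ) (hφ : ContDiff ℝ 1 φ)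
    (hc : HasCompactSupport φ) (e : E) :
    Tendsto (fun h => ∫ x, φ x * diffQuot f h e x ∂μ) (𝓝[>] 0)
      (𝓝 (-∫ x, fderiv ℝ φ x e * f x ∂μ)) := by
  obtain ⟨C, hC⟩ := ContDiff.lipschitzWith_of_hasCompactSupport hc hφ one_ne_zero
  have hlim := hC.integral_inv_smul_sub_mul_tendsto_integral_lineDeriv_mul hf (-e)
  simp_rw [(hφ.differentiable one_ne_zero _).lineDeriv_eq_fderiv, map_neg, neg_mul,
    integral_neg] at hlim
  refine hlim.congr fun h => ?_
  simp_rw [diffQuot, smul_neg, ← sub_eq_add_neg, smul_eq_mul, mul_assoc, mul_left_comm (φ _),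
    integral_const_mul, integral_mul_translate_sub hf hφ.continuous hc]

end DifferenceQuotient

theorem intervalIntegral_fderiv_sub_smul {E : Type*} [NormedAddCommGroup E] [NormedSpace ℝ E]
    {φ : E → ℝ} (hφ : ContDiff ℝ 1 φ) (x z : E) :
    ∫ t in (0 : ℝ)..1, fderiv ℝ φ (x - t • z) z = φ x - φ (x - z) := by
  have hderiv : ∀ t : ℝ, HasDerivAt (fun t : ℝ => φ (x - t • z)) (-fderiv ℝ φ (x - t • z) z) t :=
    fun t => by
      have hline : HasDerivAt (fun t : ℝ => x - t • z) (-z) t := by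
        simpa using ((hasDerivAt_id t).smul_const z).const_sub x
      rw [← map_neg]
      exact (hφ.differentiable one_ne_zero _).hasFDerivAt.comp_hasDerivAt t hline
  have hcont : Continuous fun t : ℝ => fderiv ℝ φ (x - t • z) z :=
    ((hφ.continuous_fderiv one_ne_zero).comp (by fun_prop)).clm_apply continuous_const
  rw [← neg_inj, ← intervalIntegral.integral_neg,
    intervalIntegral.integral_eq_sub_of_hasDerivAt (fun t _ => hderiv t)
      (hcont.neg.intervalIntegrable 0 1)]
  simp

theorem IsWeakGradient.integral_mul_inner_translate (hΩ : MeasurableSet Ω)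
    (h : IsWeakGradient Ω u g) {φ : 𝔼 → ℝ} (hφ : ContDiff ℝ ∞ φ) (hc : HasCompactSupport φ)
    {w : 𝔼} (hw : ∀ y ∈ tsupport φ, y + w ∈ Ω) (e : 𝔼) :
    ∫ y, φ y * ⟪Ω.indicator g (y + w), e⟫ = -∫ x in Ω, u x * fderiv ℝ φ (x - w) e := by
  have hsupp : tsupport (fun x => φ (x - w)) ⊆ Ω := fun x hx => by
    simpa using hw _ (tsupport_comp_subset_preimage φ (f := fun x : 𝔼 => x - w) (by fun_prop) hx)
  have hsmooth : ContDiff ℝ ∞ fun x => φ (x - w) := hφ.comp (contDiff_id.sub contDiff_const)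
  have hcomp : HasCompactSupport fun x => φ (x - w) :=
    hc.comp_homeomorph (Homeomorph.subRight w)
  have hweak := h (fun x => φ (x - w)) hsmooth hcomp hsupp e
  simp_rw [fderiv_comp_sub] at hweak
  rw [hweak, neg_neg, ← integral_add_right_eq_self _ (-w), ← integral_indicator hΩ]
  refine integral_congr_ae (.of_forall fun x => ?_)
  by_cases hx : x ∈ Ω <;> simp [hx, sub_eq_add_neg]

theorem IsWeakGradient.integral_mul_segment_average (hΩ : MeasurableSet Ω)
    (h : IsWeakGradient Ω u g) (hu : IntegrableOn u Ω) (hg : IntegrableOn g Ω)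
    {φ : 𝔼 → ℝ} (hφ : ContDiff ℝ ∞ φ) (hc : HasCompactSupport φ) {z : 𝔼}
    (hz : ∀ y ∈ tsupport φ, ∀ t ∈ Icc (0 : ℝ) 1, y + t • z ∈ Ω) :
    ∫ y, φ y * ∫ t in (0 : ℝ)..1, ⟪Ω.indicator g (y + t • z), z⟫ =
      ∫ x in Ω, u x * (φ (x - z) - φ x) := by
  have hφ1 : ContDiff ℝ 1 φ := hφ.of_le (mod_cast le_top)
  have hgz : Integrable fun x => ⟪Ω.indicator g x, z⟫ :=
    ((integrable_indicator_iff hΩ).2 hg).inner_const z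
  obtain ⟨C, hC⟩ := hc.exists_bound_of_continuous hφ.continuous
  obtain ⟨C', hC'⟩ := (hc.fderiv_apply ℝ z).exists_bound_of_continuous
    ((hφ1.continuous_fderiv one_ne_zero).clm_apply continuous_const)
  have hint : Integrable (fun a : 𝔼 × ℝ => φ a.1 * ⟪Ω.indicator g (a.1 + a.2 • z), z⟫)
      (volume.prod (volume.restrict (Ioc 0 1))) :=
    (integrable_comp_add_smul_prod hgz _ z).bdd_mul
      (hφ.continuous.comp continuous_fst).aestronglyMeasurable (.of_forall fun a => hC a.1)
  have hint' : Integrable (fun a : 𝔼 × ℝ => u a.1 * fderiv ℝ φ (a.1 - a.2 • z) z)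
      ((volume.restrict Ω).prod (volume.restrict (Ioc 0 1))) :=
    (hu.integrable.comp_fst _).mul_bdd (c := C')
      (((hφ1.continuous_fderiv one_ne_zero).comp
        (by fun_prop : Continuous fun a : 𝔼 × ℝ => a.1 - a.2 • z)).clm_apply
        continuous_const).aestronglyMeasurable (.of_forall fun a => hC' _)
  calc ∫ y, φ y * ∫ t in (0 : ℝ)..1, ⟪Ω.indicator g (y + t • z), z⟫
      = ∫ t in Ioc (0 : ℝ) 1, ∫ y, φ y * ⟪Ω.indicator g (y + t • z), z⟫ := by
        simp_rw [intervalIntegral.integral_of_le zero_le_one, ← integral_const_mul]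
        exact integral_integral_swap hint
    _ = ∫ t in Ioc (0 : ℝ) 1, -∫ x in Ω, u x * fderiv ℝ φ (x - t • z) z :=
        setIntegral_congr_fun measurableSet_Ioc fun t ht =>
          h.integral_mul_inner_translate hΩ hφ hc (fun y hy => hz y hy t ⟨ht.1.le, ht.2⟩) z
    _ = -∫ x in Ω, ∫ t in Ioc (0 : ℝ) 1, u x * fderiv ℝ φ (x - t • z) z := by
        rw [integral_neg, ← integral_integral_swap
          (f := fun x t => u x * fderiv ℝ φ (x - t • z) z) hint']
    _ = _ := by
        simp_rw [integral_const_mul, ← intervalIntegral.integral_of_le zero_le_one,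
          intervalIntegral_fderiv_sub_smul hφ1, ← integral_neg, ← mul_neg, neg_sub]

theorem IsWeakGradient.ae_translate_sub (hΩ : MeasurableSet Ω) (h : IsWeakGradient Ω u g)
    (hu : IntegrableOn u Ω) (hg : IntegrableOn g Ω) {W : Set 𝔼} (hW : IsOpen W) {z : 𝔼}
    (hz : ∀ y ∈ W, ∀ t ∈ Icc (0 : ℝ) 1, y + t • z ∈ Ω) :
    ∀ᵐ y, y ∈ W → u (y + z) - u y = ∫ t in (0 : ℝ)..1, ⟪g (y + t • z), z⟫ := by
  set v := Ω.indicator u with hv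
  have hvi : Integrable v := (integrable_indicator_iff hΩ).2 hu
  have havg := integrable_intervalIntegral_add_smul
    (((integrable_indicator_iff hΩ).2 hg).inner_const z) z
  have hdiff : Integrable fun y => v (y + z) - v y := (hvi.comp_add_right z).sub hvi
  have hae := hW.ae_eq_zero_of_integral_contDiff_smul_eq_zero (μ := volume)
    ((hdiff.sub havg).locallyIntegrable.locallyIntegrableOn W) fun φ hφ hc hsupp => ?_
  · filter_upwards [hae] with y hy hyW
    have hmem : ∀ t ∈ Icc (0 : ℝ) 1, y + t • z ∈ Ω := hz y hyW
    have h0 : y ∈ Ω := by simpa using hmem 0 ⟨le_rfl, zero_le_one⟩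
    have h1 : y + z ∈ Ω := by simpa using hmem 1 ⟨zero_le_one, le_rfl⟩
    have hseg : ∫ t in (0 : ℝ)..1, ⟪Ω.indicator g (y + t • z), z⟫ =
        ∫ t in (0 : ℝ)..1, ⟪g (y + t • z), z⟫ :=
      intervalIntegral.integral_congr fun t ht => by
        rw [uIcc_of_le zero_le_one] at ht
        simp only [indicator_of_mem (hmem t ht)]
    rw [← sub_eq_zero, ← hseg, ← indicator_of_mem h0 u, ← indicator_of_mem h1 u]
    exact hy hyW
  · have hφd := integrable_mul_of_hasCompactSupport hφ.continuous hc hdiff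
    have hφa := integrable_mul_of_hasCompactSupport hφ.continuous hc havg
    have hΩv : ∫ x, (φ (x - z) - φ x) * v x = ∫ x in Ω, u x * (φ (x - z) - φ x) := by
      rw [← integral_indicator hΩ]
      refine integral_congr_ae (.of_forall fun x => ?_)
      by_cases hx : x ∈ Ω <;> simp [hv, hx, mul_comm]
    calc ∫ y, φ y • (v (y + z) - v y - ∫ t in (0 : ℝ)..1, ⟪Ω.indicator g (y + t • z), z⟫)
        = (∫ y, φ y * (v (y + z) - v y))
            - ∫ y, φ y * ∫ t in (0 : ℝ)..1, ⟪Ω.indicator g (y + t • z), z⟫ := by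
          simp_rw [smul_eq_mul, mul_sub (φ _) (_ - _)]
          exact integral_sub hφd hφa
      _ = 0 := by
          rw [integral_mul_translate_sub hvi hφ.continuous hc, hΩv,
            h.integral_mul_segment_average hΩ hu hg hφ hc fun y hy => hz y (hsupp hy), sub_self]

/-! ### The chain rule for weak gradients -/

theorem exists_isOpen_eventually_add_smul_mem {E : Type*} [NormedAddCommGroup E]
    [NormedSpace ℝ E] {K U : Set E} (hK : IsCompact K) (hU : IsOpen U) (hKU : K ⊆ U) (e : E) :
    ∃ W, IsOpen W ∧ K ⊆ W ∧
      ∀ᶠ h in 𝓝 (0 : ℝ), ∀ y ∈ W, ∀ t ∈ Icc (0 : ℝ) 1, y + t • (h • e) ∈ U := by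
  obtain ⟨δ, hδ, hδU⟩ := hK.exists_thickening_subset_open hU hKU
  refine ⟨Metric.thickening (δ / 2) K, Metric.isOpen_thickening,
    Metric.self_subset_thickening (half_pos hδ) K, ?_⟩
  have hsmall : ∀ᶠ h in 𝓝 (0 : ℝ), ‖h • e‖ < δ / 2 := by
    have hcont : Continuous fun h : ℝ => ‖h • e‖ := by fun_prop
    exact hcont.tendsto 0 |>.eventually_lt_const (by simpa using half_pos hδ)
  filter_upwards [hsmall] with h hh y hy t ht
  have hdist : dist (y + t • (h • e)) y < δ / 2 := by
    rw [dist_self_add_left, norm_smul, Real.norm_of_nonneg ht.1]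
    exact (mul_le_of_le_one_left (norm_nonneg _) ht.2).trans_lt hh
  have hmem := Metric.thickening_thickening_subset (δ / 2) (δ / 2) K
    (Metric.mem_thickening_iff.2 ⟨y, hy, hdist⟩)
  exact hδU (by simpa using hmem)

theorem norm_dslope_le_of_norm_deriv_le {S : Set ℝ} {F : ℝ → ℝ} {L : ℝ} (hS : Convex ℝ S)
    (hF : ∀ a ∈ S, DifferentiableAt ℝ F a) (hL : ∀ a ∈ S, ‖deriv F a‖ ≤ L) {a b : ℝ} (ha : a ∈ S)
    (hb : b ∈ S) : ‖dslope F a b‖ ≤ L := by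
  rcases eq_or_ne b a with rfl | hab
  · simpa using hL _ ha
  · rw [dslope_of_ne _ hab, slope_def_field, norm_div, div_le_iff₀ (norm_sub_pos_iff.2 hab)]
    exact hS.norm_image_sub_le_of_norm_deriv_le hF hL ha hb

theorem measurable_dslope {F : ℝ → ℝ} (hF : Measurable F) :
    Measurable fun p : ℝ × ℝ => dslope F p.1 p.2 := by
  classical
  have hdef : (fun p : ℝ × ℝ => dslope F p.1 p.2) = fun p =>
      if p.2 = p.1 then deriv F p.1 else (F p.2 - F p.1) / (p.2 - p.1) := by
    funext p
    rw [dslope, Function.update_apply, slope_def_field]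
  rw [hdef]
  exact Measurable.ite (measurableSet_eq_fun measurable_snd measurable_fst)
    ((measurable_deriv F).comp measurable_fst)
    (((hF.comp measurable_snd).sub (hF.comp measurable_fst)).div
      (measurable_snd.sub measurable_fst))

theorem tendsto_integral_mul_of_bounded {α ι : Type*} [MeasurableSpace α] {μ : Measure α}
    {l : Filter ι} [l.IsCountablyGenerated] {a b : ι → α → ℝ} {A B : α → ℝ} {C : ℝ}
    (ha : ∀ i, AEStronglyMeasurable (a i) μ) (haC : ∀ᶠ i in l, ∀ x, ‖a i x‖ ≤ C)
    (hA : ∀ᵐ x ∂μ, Tendsto (fun i => a i x) l (𝓝 (A x)))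
    (hb : ∀ i, Integrable (b i) μ) (hB : Integrable B μ)
    (hbB : Tendsto (fun i => ∫ x, ‖b i x - B x‖ ∂μ) l (𝓝 0)) :
    Tendsto (fun i => ∫ x, a i x * b i x ∂μ) l (𝓝 (∫ x, A x * B x ∂μ)) := by
  have herr : Tendsto (fun i => ∫ x, a i x * (b i x - B x) ∂μ) l (𝓝 0) := by
    refine squeeze_zero_norm' ?_ (by simpa using hbB.const_mul C)
    filter_upwards [haC] with i hi
    rw [← integral_const_mul]
    refine norm_integral_le_of_norm_le (((hb i).sub hB).norm.const_mul C) (.of_forall fun x => ?_)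
    rw [norm_mul]
    exact mul_le_mul_of_nonneg_right (hi x) (norm_nonneg _)
  have hmain : Tendsto (fun i => ∫ x, a i x * B x ∂μ) l (𝓝 (∫ x, A x * B x ∂μ)) := by
    refine tendsto_integral_filter_of_dominated_convergence (fun x => C * ‖B x‖)
      (.of_forall fun i => (ha i).mul hB.aestronglyMeasurable) ?_ (hB.norm.const_mul C)
      (hA.mono fun x hx => hx.mul_const _)
    filter_upwards [haC] with i hi
    exact .of_forall fun x => by
      rw [norm_mul]
      exact mul_le_mul_of_nonneg_right (hi x) (norm_nonneg _)
  refine (zero_add (∫ x, A x * B x ∂μ) ▸ herr.add hmain).congr' ?_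
  filter_upwards [haC] with i hi
  have hsub : Integrable (fun x => b i x - B x) μ := (hb i).sub hB
  rw [← integral_add (hsub.bdd_mul (ha i) (.of_forall hi)) (hB.bdd_mul (ha i) (.of_forall hi))]
  simp_rw [mul_sub, sub_add_cancel]

theorem IsWeakGradient.eventually_ae_mul_diffQuot_comp (hΩ : IsOpen Ω) (h : IsWeakGradient Ω u g)
    (hu : IntegrableOn u Ω) (hg : IntegrableOn g Ω) (F : ℝ → ℝ) {φ : 𝔼 → ℝ}
    (hc : HasCompactSupport φ) (hsupp : tsupport φ ⊆ Ω) (e : 𝔼) :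
    ∀ᶠ s in 𝓝[>] (0 : ℝ), ∀ᵐ x, φ x * diffQuot (Ω.indicator fun x => F (u x)) s e x =
      φ x * dslope F (Ω.indicator u x) (Ω.indicator u (x + s • e)) *
        ∫ t in (0 : ℝ)..1, ⟪Ω.indicator g (x + t • (s • e)), e⟫ := by
  obtain ⟨W, hW, hKW, hWΩ⟩ := exists_isOpen_eventually_add_smul_mem hc.isCompact hΩ hsupp e
  filter_upwards [nhdsWithin_le_nhds hWΩ, self_mem_nhdsWithin] with s hs hs0
  filter_upwards [h.ae_translate_sub hΩ.measurableSet hu hg hW hs] with x hx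
  by_cases hxK : x ∈ tsupport φ
  · have hmem : ∀ t ∈ Icc (0 : ℝ) 1, x + t • (s • e) ∈ Ω := hs x (hKW hxK)
    have hxs : x + s • e ∈ Ω := by simpa using hmem 1 ⟨zero_le_one, le_rfl⟩
    have hseg : u (x + s • e) - u x =
        s * ∫ t in (0 : ℝ)..1, ⟪Ω.indicator g (x + t • (s • e)), e⟫ := by
      rw [hx (hKW hxK), ← intervalIntegral.integral_const_mul]
      refine intervalIntegral.integral_congr fun t ht => ?_
      rw [uIcc_of_le zero_le_one] at ht
      simp only [indicator_of_mem (hmem t ht), inner_smul_right]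
    rw [diffQuot, indicator_of_mem hxs, indicator_of_mem (hsupp hxK), indicator_of_mem hxs,
      indicator_of_mem (hsupp hxK), ← sub_smul_dslope, hseg, smul_eq_mul]
    have := (mem_Ioi.1 hs0).ne'
    field_simp
  · simp [image_eq_zero_of_notMem_tsupport hxK]

theorem eventually_norm_mul_dslope_le (hΩ : IsOpen Ω) {S : Set ℝ} {F : ℝ → ℝ} {L : ℝ}
    (hS : ∀ x ∈ Ω, u x ∈ S) (hSc : Convex ℝ S) (hF : ∀ a ∈ S, DifferentiableAt ℝ F a)
    (hL : ∀ a ∈ S, ‖deriv F a‖ ≤ L) {φ : 𝔼 → ℝ} {C : ℝ} (hC : ∀ x, ‖φ x‖ ≤ C)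
    (hc : HasCompactSupport φ) (hsupp : tsupport φ ⊆ Ω) (e : 𝔼) :
    ∀ᶠ s in 𝓝[>] (0 : ℝ), ∀ x,
      ‖φ x * dslope F (Ω.indicator u x) (Ω.indicator u (x + s • e))‖ ≤ C * |L| := by
  obtain ⟨W, -, hKW, hWΩ⟩ := exists_isOpen_eventually_add_smul_mem hc.isCompact hΩ hsupp e
  filter_upwards [nhdsWithin_le_nhds hWΩ] with s hs x
  have hC0 : 0 ≤ C := (norm_nonneg _).trans (hC x)
  by_cases hxK : x ∈ tsupport φ
  · have hxs : x + s • e ∈ Ω := by simpa using hs x (hKW hxK) 1 ⟨zero_le_one, le_rfl⟩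
    rw [norm_mul, indicator_of_mem hxs, indicator_of_mem (hsupp hxK)]
    exact mul_le_mul (hC x) ((norm_dslope_le_of_norm_deriv_le hSc hF hL (hS _ (hsupp hxK))
      (hS _ hxs)).trans (le_abs_self L)) (norm_nonneg _) hC0
  · simpa [image_eq_zero_of_notMem_tsupport hxK] using mul_nonneg hC0 (abs_nonneg L)

theorem tendsto_mul_dslope {X ι : Type*} [TopologicalSpace X] {v φ : X → ℝ}
    {S : Set ℝ} {F : ℝ → ℝ} (hF : ∀ a ∈ S, DifferentiableAt ℝ F a)
    {x : X} (hx : x ∈ tsupport φ → v x ∈ S) {l : Filter ι} {w : ι → ℝ}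
    (hw : Tendsto w l (𝓝 (v x))) :
    Tendsto (fun i => φ x * dslope F (v x) (w i)) l (𝓝 (φ x * deriv F (v x))) := by
  by_cases hxK : x ∈ tsupport φ
  · have hcont := (continuousAt_dslope_same.2 (hF _ (hx hxK))).tendsto.comp hw
    rw [dslope_same] at hcont
    exact hcont.const_mul _
  · simp [tendsto_const_nhds, image_eq_zero_of_notMem_tsupport hxK]

theorem IsWeakGradient.comp (hΩ : IsOpen Ω) (h : IsWeakGradient Ω u g) (hu : IntegrableOn u Ω)
    (hg : IntegrableOn g Ω) {S : Set ℝ} {F : ℝ → ℝ} {L : ℝ} (hS : ∀ x ∈ Ω, u x ∈ S)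
    (hSc : Convex ℝ S) (hF : ∀ a ∈ S, DifferentiableAt ℝ F a) (hL : ∀ a ∈ S, ‖deriv F a‖ ≤ L)
    (hFm : Measurable F) (hFu : IntegrableOn (fun x => F (u x)) Ω) :
    IsWeakGradient Ω (fun x => F (u x)) fun x => deriv F (u x) • g x := by
  intro φ hφ hc hsupp e
  set v := Ω.indicator u with hv
  set f := Ω.indicator fun x => F (u x) with hf
  set G : 𝔼 → ℝ := fun x => ⟪Ω.indicator g x, e⟫ with hG
  have hvi : Integrable v := (integrable_indicator_iff hΩ.measurableSet).2 hu
  have hGi : Integrable G := ((integrable_indicator_iff hΩ.measurableSet).2 hg).inner_const e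
  obtain ⟨C, hC⟩ := hc.exists_bound_of_continuous hφ.continuous
  obtain ⟨s, hs, hvs⟩ := exists_seq_ae_tendsto_translate hvi e
  have hs0 : Tendsto s atTop (𝓝 0) := hs.mono_right nhdsWithin_le_nhds
  have hlim : Tendsto (fun k => ∫ x, φ x * diffQuot f (s k) e x) atTop
      (𝓝 (∫ x, φ x * deriv F (v x) * G x)) := by
    refine (tendsto_integral_mul_of_bounded (fun k => ?_)
      (hs.eventually (eventually_norm_mul_dslope_le hΩ hS hSc hF hL hC hc hsupp e))
      (hvs.mono fun x => tendsto_mul_dslope hF fun hx => by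
        rw [hv, indicator_of_mem (hsupp hx)]
        exact hS x (hsupp hx))
      (fun k => integrable_intervalIntegral_add_smul hGi (s k • e)) hGi
      ((tendsto_integral_norm_segment_average_sub hGi e).comp hs0)).congr' ?_
    · exact hφ.continuous.aestronglyMeasurable.mul ((measurable_dslope hFm).comp_aemeasurable
        (hvi.aemeasurable.prodMk (hvi.comp_add_right _).aemeasurable)).aestronglyMeasurable
    · filter_upwards [hs.eventually
        (h.eventually_ae_mul_diffQuot_comp hΩ hu hg F hc hsupp e)] with k hk
      exact (integral_congr_ae hk).symm
  have hparts := tendsto_nhds_unique hlim ((tendsto_integral_mul_diffQuot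
    ((integrable_indicator_iff hΩ.measurableSet).2 hFu) (hφ.of_le (mod_cast le_top)) hc e).comp hs)
  have hleft : ∫ x in Ω, F (u x) * fderiv ℝ φ x e = ∫ x, fderiv ℝ φ x e * f x := by
    rw [← integral_indicator hΩ.measurableSet]
    refine integral_congr_ae (.of_forall fun x => ?_)
    by_cases hx : x ∈ Ω <;> simp [hf, hx, mul_comm]
  have hright : ∫ x in Ω, φ x * ⟪deriv F (u x) • g x, e⟫ = ∫ x, φ x * deriv F (v x) * G x := by
    rw [← integral_indicator hΩ.measurableSet]
    refine integral_congr_ae (.of_forall fun x => ?_)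
    by_cases hx : x ∈ Ω <;> simp [hv, hG, hx, real_inner_smul_left, mul_assoc]
  rw [hleft, hright, hparts, neg_neg]

/-! ### Calculus of weak gradients -/

theorem tendsto_integral_smul_of_tendsto_eLpNorm_one {E F ι : Type*} [NormedAddCommGroup E]
    [MeasurableSpace E] [BorelSpace E] [NormedAddCommGroup F] [NormedSpace ℝ F] {μ : Measure E}
    {l : Filter ι} {φ : E → ℝ} (hφ : Continuous φ) (hc : HasCompactSupport φ) {f : ι → E → F}
    {f₀ : E → F} (hf : ∀ i, Integrable (f i) μ) (hf₀ : Integrable f₀ μ)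
    (h : Tendsto (fun i => eLpNorm (f i - f₀) 1 μ) l (𝓝 0)) :
    Tendsto (fun i => ∫ x, φ x • f i x ∂μ) l (𝓝 (∫ x, φ x • f₀ x ∂μ)) := by
  have hint {k : E → F} (hk : Integrable k μ) : Integrable (fun x => φ x • k x) μ :=
    hk.locallyIntegrable.integrable_smul_left_of_hasCompactSupport hφ hc
  obtain ⟨C, hC⟩ := hc.exists_bound_of_continuous hφ
  have hlim : Tendsto (fun i => ENNReal.ofReal C * eLpNorm (f i - f₀) 1 μ) l (𝓝 0) := by
    simpa using ENNReal.Tendsto.const_mul h (.inr ENNReal.ofReal_ne_top)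
  refine tendsto_integral_of_L1' _ (hint hf₀).aestronglyMeasurable
    (.of_forall fun i => hint (hf i)) (tendsto_of_tendsto_of_tendsto_of_le_of_le
      tendsto_const_nhds hlim (fun _ => zero_le) fun i => ?_)
  refine eLpNorm_le_mul_eLpNorm_of_ae_le_mul (.of_forall fun x => ?_) 1
  rw [Pi.sub_apply, ← smul_sub, norm_smul]
  exact mul_le_mul_of_nonneg_right (hC x) (norm_nonneg _)

theorem IsWeakGradient.congr_ae {u' : 𝔼 → ℝ} {g' : 𝔼 → 𝔼} (h : IsWeakGradient Ω u g)
    (hu : u =ᵐ[volume.restrict Ω] u') (hg : g =ᵐ[volume.restrict Ω] g') :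
    IsWeakGradient Ω u' g' := by
  intro φ hφ hc hs e
  have hleft : ∫ x in Ω, u x * fderiv ℝ φ x e = ∫ x in Ω, u' x * fderiv ℝ φ x e :=
    integral_congr_ae (hu.mono fun x hx => by simp only [hx])
  have hright : ∫ x in Ω, φ x * ⟪g x, e⟫ = ∫ x in Ω, φ x * ⟪g' x, e⟫ :=
    integral_congr_ae (hg.mono fun x hx => by simp only [hx])
  rw [← hleft, ← hright, h φ hφ hc hs e]

theorem IsWeakGradient.mono {W : Set 𝔼} (h : IsWeakGradient Ω u g) (hΩ : MeasurableSet Ω)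
    (hW : W ⊆ Ω) : IsWeakGradient W u g := by
  intro φ hφ hc hsupp e
  have hφ0 (x : 𝔼) (hx : x ∈ Ω \ W) : φ x = 0 := image_eq_zero_of_notMem_tsupport (hx.2 <| hsupp ·)
  have hφ'0 (x : 𝔼) (hx : x ∈ Ω \ W) : fderiv ℝ φ x = 0 :=
    image_eq_zero_of_notMem_tsupport (hx.2 <| hsupp <| tsupport_fderiv_subset ℝ ·)
  rw [← setIntegral_eq_of_subset_of_forall_sdiff_eq_zero hΩ hW fun x hx => by simp [hφ'0 x hx],
    ← setIntegral_eq_of_subset_of_forall_sdiff_eq_zero hΩ hW fun x hx => by simp [hφ0 x hx]]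
  exact h φ hφ hc (hsupp.trans hW) e

theorem integrableOn_mul_fderiv (hu : IntegrableOn u Ω) {φ : 𝔼 → ℝ} (hφ : ContDiff ℝ 1 φ)
    (hc : HasCompactSupport φ) (e : 𝔼) : IntegrableOn (fun x => u x * fderiv ℝ φ x e) Ω := by
  simp_rw [mul_comm (u _)]
  exact integrable_mul_of_hasCompactSupport
    ((hφ.continuous_fderiv one_ne_zero).clm_apply continuous_const) (hc.fderiv_apply ℝ e) hu

theorem IsWeakGradient.add {v : 𝔼 → ℝ} {k : 𝔼 → 𝔼} (h : IsWeakGradient Ω u g)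
    (h' : IsWeakGradient Ω v k) (hu : IntegrableOn u Ω) (hg : IntegrableOn g Ω)
    (hv : IntegrableOn v Ω) (hk : IntegrableOn k Ω) :
    IsWeakGradient Ω (fun x => u x + v x) fun x => g x + k x := by
  intro φ hφ hc hs e
  have hφ1 : ContDiff ℝ 1 φ := hφ.of_le (mod_cast le_top)
  simp only [add_mul, inner_add_left, mul_add]
  rw [integral_add (integrableOn_mul_fderiv hu hφ1 hc e) (integrableOn_mul_fderiv hv hφ1 hc e),
    integral_add (integrable_mul_of_hasCompactSupport hφ.continuous hc (hg.inner_const e))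
      (integrable_mul_of_hasCompactSupport hφ.continuous hc (hk.inner_const e)),
    h φ hφ hc hs e, h' φ hφ hc hs e, neg_add]

theorem IsWeakGradient.const_mul (h : IsWeakGradient Ω u g) (c : ℝ) :
    IsWeakGradient Ω (fun x => c * u x) fun x => c • g x := by
  intro φ hφ hc hs e
  simp_rw [mul_assoc, real_inner_smul_left, mul_left_comm (φ _), integral_const_mul,
    h φ hφ hc hs e, mul_neg]

theorem IsWeakGradient.of_tendsto {ι : Type*} {l : Filter ι} [l.NeBot] {v : ι → 𝔼 → ℝ}
    {k : ι → 𝔼 → 𝔼} (h : ∀ i, IsWeakGradient Ω (v i) (k i)) (hv : ∀ i, IntegrableOn (v i) Ω)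
    (hk : ∀ i, IntegrableOn (k i) Ω) (hu : IntegrableOn u Ω) (hg : IntegrableOn g Ω)
    (hvu : Tendsto (fun i => eLpNorm (v i - u) 1 (volume.restrict Ω)) l (𝓝 0))
    (hkg : Tendsto (fun i => eLpNorm (k i - g) 1 (volume.restrict Ω)) l (𝓝 0)) :
    IsWeakGradient Ω u g := by
  intro φ hφ hc hs e
  have hφ' : Continuous fun x => fderiv ℝ φ x e :=
    (hφ.continuous_fderiv (by simp)).clm_apply continuous_const
  have hgrad {w : 𝔼 → 𝔼} (hw : IntegrableOn w Ω) :
      ∫ x in Ω, φ x * ⟪w x, e⟫ = ⟪e, ∫ x in Ω, φ x • w x⟫ := by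
    simp_rw [real_inner_comm e, ← real_inner_smul_right]
    exact integral_inner
      (hw.locallyIntegrable.integrable_smul_left_of_hasCompactSupport hφ.continuous hc) e
  have hleft := tendsto_integral_smul_of_tendsto_eLpNorm_one hφ' (hc.fderiv_apply ℝ e) hv hu hvu
  have hright :=
    tendsto_integral_smul_of_tendsto_eLpNorm_one hφ.continuous hc hk hg hkg
  simp only [smul_eq_mul, mul_comm (fderiv ℝ φ _ e), fun i => h i φ hφ hc hs e, hgrad (hk _)]
    at hleft
  rw [hgrad hg]
  exact tendsto_nhds_unique hleft (tendsto_const_nhds.inner hright).neg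

theorem IsWeakGradient.smooth_mul (h : IsWeakGradient Ω u g) (hu : IntegrableOn u Ω)
    (hg : IntegrableOn g Ω) {ψ : 𝔼 → ℝ} (hψ : ContDiff ℝ ∞ ψ) :
    IsWeakGradient Ω (fun x => ψ x * u x) fun x => ψ x • g x + u x • gradient ψ x := by
  intro φ hφ hc hs e
  have hψφ : ContDiff ℝ ∞ fun x => ψ x * φ x := hψ.mul hφ
  have hψφc : HasCompactSupport fun x => ψ x * φ x := hc.mul_left
  have hleib (x : 𝔼) : fderiv ℝ (fun x => ψ x * φ x) x e
      = ψ x * fderiv ℝ φ x e + φ x * fderiv ℝ ψ x e := by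
    rw [fderiv_fun_mul (hψ.differentiable (by simp) x) (hφ.differentiable (by simp) x)]
    simp
  have hcross : IntegrableOn (fun x => φ x * fderiv ℝ ψ x e * u x) Ω :=
    integrable_mul_of_hasCompactSupport (hφ.continuous.mul
      ((hψ.continuous_fderiv (by simp)).clm_apply continuous_const)) hc.mul_right hu
  have hleft : ∫ x in Ω, ψ x * u x * fderiv ℝ φ x e
      = (∫ x in Ω, u x * fderiv ℝ (fun x => ψ x * φ x) x e)
        - ∫ x in Ω, φ x * fderiv ℝ ψ x e * u x := by
    rw [← integral_sub (integrableOn_mul_fderiv hu (hψφ.of_le (mod_cast le_top)) hψφc e) hcross]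
    refine integral_congr_ae (.of_forall fun x => ?_)
    simp only [hleib]
    ring
  have hright : ∫ x in Ω, φ x * ⟪ψ x • g x + u x • gradient ψ x, e⟫
      = (∫ x in Ω, ψ x * φ x * ⟪g x, e⟫) + ∫ x in Ω, φ x * fderiv ℝ ψ x e * u x := by
    rw [← integral_add (integrable_mul_of_hasCompactSupport hψφ.continuous hψφc
      (hg.inner_const e)) hcross]
    refine integral_congr_ae (.of_forall fun x => ?_)
    simp only [inner_add_left, real_inner_smul_left, inner_gradient_left]
    ring
  rw [hleft, hright, h _ hψφ hψφc (tsupport_mul_subset_right.trans hs) e, neg_add, sub_eq_add_neg]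

theorem isWeakGradient_const (Ω : Set 𝔼) (c : ℝ) :
    IsWeakGradient Ω (fun _ => c) fun _ => 0 := by
  intro φ hφ hc hs e
  have hint : Integrable fun x => fderiv ℝ φ x e :=
    ((hφ.continuous_fderiv (by simp)).clm_apply continuous_const).integrable_of_hasCompactSupport
      (hc.fderiv_apply ℝ e)
  have hparts := integral_mul_fderiv_eq_neg_fderiv_mul_of_integrable (μ := (volume : Measure 𝔼))
    (f := fun _ => c) (g := φ) (v := e) (by simp) (hint.const_mul c)
    ((hφ.continuous.integrable_of_hasCompactSupport hc).const_mul c)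
    (fun x _ => differentiableAt_const c) (fun x _ => hφ.differentiable (by simp) x)
  rw [setIntegral_eq_integral_of_forall_compl_eq_zero fun x hx => ?_]
  · simpa using hparts
  · rw [image_eq_zero_of_notMem_tsupport fun h => hx (hs (tsupport_fderiv_subset ℝ h)),
      zero_apply, mul_zero]

theorem memLp_comp_of_norm_deriv_le {α : Type*} [MeasurableSpace α] {μ : Measure α}
    [IsFiniteMeasure μ] {q : ℝ≥0∞} {f : α → ℝ} (hf : MemLp f q μ) {S : Set ℝ} {F : ℝ → ℝ} {L : ℝ}
    (hS : ∀ᵐ x ∂μ, f x ∈ S) (hSc : Convex ℝ S) (hF : ∀ a ∈ S, DifferentiableAt ℝ F a)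
    (hL : ∀ a ∈ S, ‖deriv F a‖ ≤ L) (hFm : Measurable F) : MemLp (fun x => F (f x)) q μ := by
  rcases eq_zero_or_neZero μ with rfl | hμ
  · simp
  obtain ⟨x₀, hx₀⟩ := hS.exists
  have hsub : MemLp (fun x => F (f x) - F (f x₀)) q μ := by
    refine (hf.sub (memLp_const (f x₀))).of_le_mul (c := L) ?_ (hS.mono fun x hx => ?_)
    · exact ((hFm.comp_aemeasurable hf.aestronglyMeasurable.aemeasurable).sub_const
        _).aestronglyMeasurable
    · exact hSc.norm_image_sub_le_of_norm_deriv_le hF hL hx₀ hx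
  simpa [Pi.add_def] using hsub.add (memLp_const (F (f x₀)))

section MemW1p

variable {p : ℝ}

theorem MemW1p.congr_ae {u' : 𝔼 → ℝ} {g' : 𝔼 → 𝔼} (h : MemW1p Ω p u g)
    (hu : u =ᵐ[volume.restrict Ω] u') (hg : g =ᵐ[volume.restrict Ω] g') : MemW1p Ω p u' g' :=
  ⟨h.1.ae_eq hu, h.2.1.ae_eq hg, h.2.2.congr_ae hu hg⟩

theorem MemW1p.const_mul (h : MemW1p Ω p u g) (c : ℝ) :
    MemW1p Ω p (fun x => c * u x) fun x => c • g x :=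
  ⟨h.1.const_mul c, h.2.1.const_smul c, h.2.2.const_mul c⟩

variable [IsFiniteMeasure (volume.restrict Ω)]

theorem MemW1p.integrableOn_fun (h : MemW1p Ω p u g) (hp : 1 ≤ p) : IntegrableOn u Ω :=
  h.1.integrable (ENNReal.one_le_ofReal.2 hp)

theorem MemW1p.integrableOn_grad (h : MemW1p Ω p u g) (hp : 1 ≤ p) : IntegrableOn g Ω :=
  h.2.1.integrable (ENNReal.one_le_ofReal.2 hp)

theorem MemW1p.add {v : 𝔼 → ℝ} {k : 𝔼 → 𝔼} (h : MemW1p Ω p u g) (h' : MemW1p Ω p v k)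
    (hp : 1 ≤ p) : MemW1p Ω p (fun x => u x + v x) fun x => g x + k x :=
  ⟨h.1.add h'.1, h.2.1.add h'.2.1, h.2.2.add h'.2.2 (h.integrableOn_fun hp)
    (h.integrableOn_grad hp) (h'.integrableOn_fun hp) (h'.integrableOn_grad hp)⟩

theorem MemW1p.smooth_mul (h : MemW1p Ω p u g) (hp : 1 ≤ p) {ψ : 𝔼 → ℝ}
    (hψ : ContDiff ℝ ∞ ψ) (hc : HasCompactSupport ψ) :
    MemW1p Ω p (fun x => ψ x * u x) fun x => ψ x • g x + u x • gradient ψ x := by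
  have hψ' : Continuous (gradient ψ) :=
    (InnerProductSpace.toDual ℝ 𝔼).symm.continuous.comp (hψ.continuous_fderiv (by simp))
  have hψc : HasCompactSupport (gradient ψ) :=
    (hc.fderiv ℝ).comp_left (map_zero (InnerProductSpace.toDual ℝ 𝔼).symm)
  have hψ_top := hψ.continuous.memLp_top_of_hasCompactSupport hc (volume.restrict Ω)
  exact ⟨h.1.mul hψ_top, (h.2.1.smul hψ_top).add
    ((hψ'.memLp_top_of_hasCompactSupport hψc (volume.restrict Ω)).smul h.1),
    h.2.2.smooth_mul (h.integrableOn_fun hp) (h.integrableOn_grad hp) hψ⟩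

theorem MemW1p.comp (hΩ : IsOpen Ω) (h : MemW1p Ω p u g) (hp : 1 ≤ p) {S : Set ℝ} {F : ℝ → ℝ}
    {L : ℝ} (hS : ∀ x ∈ Ω, u x ∈ S) (hSc : Convex ℝ S) (hF : ∀ a ∈ S, DifferentiableAt ℝ F a)
    (hL : ∀ a ∈ S, ‖deriv F a‖ ≤ L) (hFm : Measurable F) :
    MemW1p Ω p (fun x => F (u x)) fun x => deriv F (u x) • g x := by
  have hS' : ∀ᵐ x ∂volume.restrict Ω, u x ∈ S := ae_restrict_of_forall_mem hΩ.measurableSet hS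
  have hFu := memLp_comp_of_norm_deriv_le h.1 hS' hSc hF hL hFm
  refine ⟨hFu, h.2.1.of_le_mul (c := L) ?_ ?_, h.2.2.comp hΩ (h.integrableOn_fun hp)
    (h.integrableOn_grad hp) hS hSc hF hL hFm (hFu.integrable (ENNReal.one_le_ofReal.2 hp))⟩
  · exact ((measurable_deriv F).comp_aemeasurable
      h.1.aestronglyMeasurable.aemeasurable).aestronglyMeasurable.smul h.2.1.aestronglyMeasurable
  · filter_upwards [hS'] with x hx
    rw [norm_smul]
    exact mul_le_mul_of_nonneg_right (hL _ hx) (norm_nonneg _)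

end MemW1p

/-! ### The absolute value of a Sobolev function -/

theorem IsWeakGradient.of_ae_tendsto {v : ℕ → 𝔼 → ℝ} {k : ℕ → 𝔼 → 𝔼}
    (h : ∀ i, IsWeakGradient Ω (v i) (k i)) (hv : ∀ i, IntegrableOn (v i) Ω)
    (hk : ∀ i, IntegrableOn (k i) Ω) {V K : 𝔼 → ℝ} (hV : IntegrableOn V Ω)
    (hK : IntegrableOn K Ω) (hvV : ∀ i x, ‖v i x‖ ≤ V x) (hkK : ∀ i x, ‖k i x‖ ≤ K x)
    (hvu : ∀ x, Tendsto (fun i => v i x) atTop (𝓝 (u x)))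
    (hkg : ∀ x, Tendsto (fun i => k i x) atTop (𝓝 (g x))) : IsWeakGradient Ω u g := by
  have hL1 {F : Type} [NormedAddCommGroup F] {w : ℕ → 𝔼 → F} {w₀ : 𝔼 → F} {W : 𝔼 → ℝ}
      (hw : ∀ i, IntegrableOn (w i) Ω) (hW : IntegrableOn W Ω) (hwW : ∀ i x, ‖w i x‖ ≤ W x)
      (hww : ∀ x, Tendsto (fun i => w i x) atTop (𝓝 (w₀ x))) :
      IntegrableOn w₀ Ω ∧
        Tendsto (fun i => eLpNorm (w i - w₀) 1 (volume.restrict Ω)) atTop (𝓝 0) := by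
    have hmeas := fun i => (hw i).aestronglyMeasurable
    refine ⟨hW.mono' (aestronglyMeasurable_of_tendsto_ae atTop hmeas (.of_forall hww))
      (.of_forall fun x => le_of_tendsto' (hww x).norm fun i => hwW i x), ?_⟩
    simpa only [eLpNorm_one_eq_lintegral_enorm, ofReal_norm, Pi.sub_apply] using
      tendsto_lintegral_norm_of_dominated_convergence hmeas hW.hasFiniteIntegral
        (fun i => .of_forall (hwW i)) (.of_forall hww)
  obtain ⟨hu, hvu⟩ := hL1 hv hV hvV hvu
  obtain ⟨hg, hkg⟩ := hL1 hk hK hkK hkg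
  exact IsWeakGradient.of_tendsto h hv hk hu hg hvu hkg

theorem hasDerivAt_sqrt_sq_add_sq {ε : ℝ} (hε : 0 < ε) (a : ℝ) :
    HasDerivAt (fun a => √(a ^ 2 + ε ^ 2)) (a / √(a ^ 2 + ε ^ 2)) a := by
  have hsq : HasDerivAt (fun a : ℝ => a ^ 2 + ε ^ 2) (2 * a) a := by
    simpa using (hasDerivAt_pow 2 a).add_const (ε ^ 2)
  refine (hsq.sqrt (by positivity)).congr_deriv ?_
  rw [mul_div_mul_left _ _ two_ne_zero]

theorem abs_div_sqrt_sq_add_sq_le_one (a ε : ℝ) : |a / √(a ^ 2 + ε ^ 2)| ≤ 1 := by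
  rw [abs_div, abs_of_nonneg (Real.sqrt_nonneg _)]
  exact div_le_one_of_le₀ (Real.abs_le_sqrt (le_add_of_nonneg_right (sq_nonneg ε)))
    (Real.sqrt_nonneg _)

theorem sqrt_sq_add_sq_le (a : ℝ) {ε : ℝ} (hε : 0 ≤ ε) : √(a ^ 2 + ε ^ 2) ≤ |a| + ε := by
  refine Real.sqrt_le_iff.2 ⟨by positivity, ?_⟩
  rw [← sq_abs a]
  nlinarith [mul_nonneg (abs_nonneg a) hε]

theorem tendsto_sqrt_sq_add_sq (a : ℝ) : Tendsto (fun ε => √(a ^ 2 + ε ^ 2)) (𝓝 0) (𝓝 |a|) := by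
  have hcont : Continuous fun ε => √(a ^ 2 + ε ^ 2) := by fun_prop
  simpa [Real.sqrt_sq_eq_abs] using hcont.tendsto 0

theorem MemW1p.abs {p : ℝ} [IsFiniteMeasure (volume.restrict Ω)] (hΩ : IsOpen Ω)
    (h : MemW1p Ω p u g) (hp : 1 ≤ p) :
    MemW1p Ω p (fun x => |u x|) fun x => (u x / |u x|) • g x := by
  obtain ⟨ε, -, hε, hε0⟩ := exists_seq_strictAnti_tendsto' (zero_lt_one' ℝ)
  have hderiv (i : ℕ) : deriv (fun a => √(a ^ 2 + ε i ^ 2)) = fun a => a / √(a ^ 2 + ε i ^ 2) :=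
    funext fun a => (hasDerivAt_sqrt_sq_add_sq (hε i).1 a).deriv
  have happrox (i : ℕ) : MemW1p Ω p (fun x => √(u x ^ 2 + ε i ^ 2))
      fun x => (u x / √(u x ^ 2 + ε i ^ 2)) • g x := by
    simpa only [hderiv] using h.comp hΩ hp (F := fun a => √(a ^ 2 + ε i ^ 2)) (L := 1)
      (fun _ _ => mem_univ _) convex_univ
      (fun a _ => (hasDerivAt_sqrt_sq_add_sq (hε i).1 a).differentiableAt)
      (fun a _ => by
        simpa only [hderiv, Real.norm_eq_abs] using abs_div_sqrt_sq_add_sq_le_one a (ε i))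
      (by fun_prop)
  have hlim (x : 𝔼) := (tendsto_sqrt_sq_add_sq (u x)).comp hε0
  refine ⟨h.1.abs, h.2.1.of_le_mul (c := 1) ?_ (.of_forall fun x => ?_),
    .of_ae_tendsto (fun i => (happrox i).2.2) (fun i => (happrox i).integrableOn_fun hp)
    (fun i => (happrox i).integrableOn_grad hp)
    ((h.integrableOn_fun hp).abs.add (integrable_const 1)) (h.integrableOn_grad hp).norm
    (fun i x => ?_) (fun i x => ?_) hlim fun x => ?_⟩
  · exact (AEMeasurable.div h.1.aestronglyMeasurable.aemeasurable
      h.1.aestronglyMeasurable.aemeasurable.abs).aestronglyMeasurable.smul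
        h.2.1.aestronglyMeasurable
  · rw [norm_smul, norm_div, Real.norm_eq_abs, Real.norm_eq_abs, abs_abs]
    exact mul_le_mul_of_nonneg_right (div_self_le_one _) (norm_nonneg _)
  · rw [Real.norm_of_nonneg (Real.sqrt_nonneg _)]
    exact (sqrt_sq_add_sq_le (u x) (hε i).1.le).trans (by simpa using (hε i).2.le)
  · rw [norm_smul]
    exact mul_le_of_le_one_left (norm_nonneg _) (abs_div_sqrt_sq_add_sq_le_one _ _)
  · rcases eq_or_ne (u x) 0 with hux | hux
    · simp [hux]
    · exact (tendsto_const_nhds.div (hlim x) (abs_ne_zero.2 hux)).smul_const _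

/-! ### A Poincaré inequality on balls -/

theorem IsWeakGradient.lintegral_translate_sub_le {W : Set 𝔼} (h : IsWeakGradient W u g)
    (hu : IntegrableOn u W) (hg : IntegrableOn g W) (hW : IsOpen W) (hWc : Convex ℝ W) (z : 𝔼) :
    ∫⁻ y in {y | y ∈ W ∧ y + z ∈ W}, ‖u (y + z) - u y‖ₑ ≤ ‖z‖ₑ * ∫⁻ y in W, ‖g y‖ₑ := by
  set V : Set 𝔼 := {y | y ∈ W ∧ y + z ∈ W}
  have hVo : IsOpen V := hW.inter (hW.preimage (continuous_add_const z))
  have hseg : ∀ y ∈ V, ∀ t ∈ Icc (0 : ℝ) 1, y + t • z ∈ W := fun y hy t ht => by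
    simpa using hWc.add_smul_sub_mem hy.1 hy.2 ht
  have hgm : AEMeasurable (W.indicator fun x => ‖g x‖ₑ) :=
    (aemeasurable_indicator_iff hW.measurableSet).2 hg.aestronglyMeasurable.enorm
  calc ∫⁻ y in V, ‖u (y + z) - u y‖ₑ
      ≤ ∫⁻ y in V, ‖z‖ₑ * ∫⁻ t in Ioc (0 : ℝ) 1, W.indicator (fun x => ‖g x‖ₑ) (y + t • z) := by
        refine lintegral_mono_ae ?_
        filter_upwards [ae_restrict_of_ae (h.ae_translate_sub hW.measurableSet hu hg hVo hseg),
          ae_restrict_mem hVo.measurableSet] with y hy hyV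
        rw [hy hyV, intervalIntegral.integral_of_le zero_le_one,
          ← lintegral_const_mul' _ _ enorm_ne_top]
        refine (enorm_integral_le_lintegral_enorm _).trans
          (setLIntegral_mono' measurableSet_Ioc fun t ht => ?_)
        rw [indicator_of_mem (hseg y hyV t ⟨ht.1.le, ht.2⟩), mul_comm, ← ofReal_norm, ← ofReal_norm,
          ← ofReal_norm, ← ENNReal.ofReal_mul (norm_nonneg _)]
        exact ENNReal.ofReal_le_ofReal (norm_inner_le_norm _ _)
    _ ≤ ∫⁻ y, ‖z‖ₑ * ∫⁻ t in Ioc (0 : ℝ) 1, W.indicator (fun x => ‖g x‖ₑ) (y + t • z) :=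
        setLIntegral_le_lintegral _ _
    _ = ‖z‖ₑ * ∫⁻ y in W, ‖g y‖ₑ := by
        rw [lintegral_const_mul' _ _ enorm_ne_top, lintegral_lintegral_add_smul hgm,
          lintegral_indicator hW.measurableSet]

theorem add_notMem_ball_of_notMem_ball {E : Type*} [SeminormedAddCommGroup E] {x₀ y z : E} {r : ℝ}
    (hy : y ∈ Metric.ball x₀ r) (hz : z ∉ Metric.ball 0 (2 * r)) : y + z ∉ Metric.ball x₀ r := by
  intro hyz
  refine hz (mem_ball_zero_iff.2 ?_)
  calc ‖z‖ = dist (y + z) y := by simp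
    _ ≤ dist (y + z) x₀ + dist y x₀ := dist_triangle_right _ _ _
    _ < r + r := add_lt_add hyz hy
    _ = 2 * r := (two_mul r).symm

theorem setLIntegral_indicator_enorm_add_le {E F : Type*} [AddGroup E] [MeasurableSpace E]
    [MeasurableAdd E] [NormedAddCommGroup F] {μ : Measure E} {f : E → F} {W Z : Set E}
    (hW : MeasurableSet W) (hZm : NullMeasurableSet Z μ) (hZ : Z ⊆ W) (hf : ∀ x ∈ Z, f x = 0)
    (z : E) :
    ∫⁻ y in Z, W.indicator (fun x => ‖f x‖ₑ) (y + z) ∂μ ≤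
      ∫⁻ y in {y | y ∈ W ∧ y + z ∈ W}, ‖f (y + z) - f y‖ₑ ∂μ := by
  have hVm : MeasurableSet {y | y ∈ W ∧ y + z ∈ W} := hW.inter (measurable_add_const z hW)
  rw [← lintegral_indicator₀ hZm, ← lintegral_indicator hVm]
  refine lintegral_mono fun y => ?_
  by_cases hy : y ∈ Z
  · by_cases hyz : y + z ∈ W <;> simp [hy, hyz, hZ hy, hf y hy]
  · simp [hy]

theorem measure_mul_lintegral_eq_lintegral_lintegral_add {f : 𝔼 → ℝ≥0∞} (Z : Set 𝔼)
    (hf : AEMeasurable f) : volume Z * ∫⁻ x, f x = ∫⁻ z, ∫⁻ y in Z, f (y + z) := by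
  have hjoint : AEMeasurable (fun w : 𝔼 × 𝔼 => f (w.1 + w.2))
      ((volume.restrict Z).prod volume) :=
    (hf.comp_snd (μ := volume.restrict Z)).comp_quasiMeasurePreserving
      (measurePreserving_prod_add _ _).quasiMeasurePreserving
  calc volume Z * ∫⁻ x, f x = ∫⁻ y in Z, ∫⁻ z, f (y + z) := by
        simp only [lintegral_add_left_eq_self, setLIntegral_const, mul_comm]
    _ = ∫⁻ z, ∫⁻ y in Z, f (y + z) := lintegral_lintegral_swap hjoint

/-- Average the increments `u (y + z) - u y = u (y + z)` over `y ∈ Z` and all `z`. -/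
theorem IsWeakGradient.measure_mul_lintegral_ball_le {x₀ : 𝔼} {r : ℝ}
    (h : IsWeakGradient (Metric.ball x₀ r) u g) (hu : IntegrableOn u (Metric.ball x₀ r))
    (hg : IntegrableOn g (Metric.ball x₀ r)) {Z : Set 𝔼}
    (hZm : NullMeasurableSet Z) (hZ : Z ⊆ Metric.ball x₀ r) (huZ : ∀ x ∈ Z, u x = 0) :
    volume Z * ∫⁻ x in Metric.ball x₀ r, ‖u x‖ₑ ≤
      volume (Metric.ball (0 : 𝔼) (2 * r)) *
        (ENNReal.ofReal (2 * r) * ∫⁻ x in Metric.ball x₀ r, ‖g x‖ₑ) := by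
  set W := Metric.ball x₀ r
  have hWm : MeasurableSet W := measurableSet_ball
  set U : 𝔼 → ℝ≥0∞ := W.indicator fun x => ‖u x‖ₑ
  have hUm : AEMeasurable U := (aemeasurable_indicator_iff hWm).2 hu.aestronglyMeasurable.enorm
  have hslice (z : 𝔼) : ∫⁻ y in Z, U (y + z) ≤ (Metric.ball (0 : 𝔼) (2 * r)).indicator
      (fun _ => ENNReal.ofReal (2 * r) * ∫⁻ x in W, ‖g x‖ₑ) z := by
    by_cases hz : z ∈ Metric.ball (0 : 𝔼) (2 * r)
    · rw [indicator_of_mem hz]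
      calc ∫⁻ y in Z, U (y + z) ≤ ∫⁻ y in {y | y ∈ W ∧ y + z ∈ W}, ‖u (y + z) - u y‖ₑ :=
            setLIntegral_indicator_enorm_add_le hWm hZm hZ huZ z
        _ ≤ ‖z‖ₑ * ∫⁻ y in W, ‖g y‖ₑ :=
            h.lintegral_translate_sub_le hu hg Metric.isOpen_ball (convex_ball x₀ r) z
        _ ≤ _ := by
            gcongr
            rw [← ofReal_norm]
            exact ENNReal.ofReal_le_ofReal (mem_ball_zero_iff.1 hz).le
    · rw [indicator_of_notMem hz, lintegral_eq_zero_of_ae_eq_zero]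
      filter_upwards [ae_restrict_mem₀ hZm] with y hy
      exact indicator_of_notMem (add_notMem_ball_of_notMem_ball (hZ hy) hz) _
  calc volume Z * ∫⁻ x in W, ‖u x‖ₑ = volume Z * ∫⁻ x, U x := by rw [lintegral_indicator hWm]
    _ = ∫⁻ z, ∫⁻ y in Z, U (y + z) := measure_mul_lintegral_eq_lintegral_lintegral_add Z hUm
    _ ≤ ∫⁻ z, (Metric.ball (0 : 𝔼) (2 * r)).indicator
          (fun _ => ENNReal.ofReal (2 * r) * ∫⁻ x in W, ‖g x‖ₑ) z := lintegral_mono hslice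
    _ = _ := by rw [lintegral_indicator measurableSet_ball, setLIntegral_const, mul_comm]

/-! ### Logarithmic energy estimate -/

theorem rpow_le_rpow_add_mul {p v w : ℝ} (hp : 1 ≤ p) (hv : 0 ≤ v) (hvw : v ≤ w) :
    w ^ p ≤ v ^ p + p * (w - v) * w ^ (p - 1) := by
  rcases (hv.trans hvw).eq_or_lt with rfl | hw
  · simp [le_antisymm hvw hv]
  have hbernoulli : 1 + p * (v / w - 1) ≤ (1 + (v / w - 1)) ^ p :=
    one_add_mul_self_le_rpow_one_add (by linarith [div_nonneg hv hw.le]) hp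
  rw [add_sub_cancel, Real.div_rpow hv hw.le, le_div_iff₀ (by positivity)] at hbernoulli
  have hwp : w ^ p = w * w ^ (p - 1) := by
    rw [← Real.rpow_one_add' hw.le (by linarith), add_sub_cancel]
  have hexpand : (1 + p * (v / w - 1)) * w ^ p = w ^ p + p * (v - w) * w ^ (p - 1) := by
    rw [hwp]
    field_simp
  linarith

theorem norm_convex_combination_rpow_le {F : Type*} [SeminormedAddCommGroup F] [NormedSpace ℝ F]
    {p θ : ℝ} (hp : 1 ≤ p) (h0 : 0 ≤ θ) (h1 : θ ≤ 1) (a b : F) :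
    ‖(1 - θ) • a + θ • b‖ ^ p ≤ (1 - θ) * ‖a‖ ^ p + θ * ‖b‖ ^ p := by
  have h1' : 0 ≤ 1 - θ := sub_nonneg.2 h1
  calc ‖(1 - θ) • a + θ • b‖ ^ p ≤ ((1 - θ) * ‖a‖ + θ * ‖b‖) ^ p := by
        gcongr
        exact convexOn_univ_norm.2 trivial trivial h1' h0 (sub_add_cancel 1 θ)
    _ ≤ (1 - θ) * ‖a‖ ^ p + θ * ‖b‖ ^ p :=
        (convexOn_rpow hp).2 (norm_nonneg a) (norm_nonneg b) h1' h0 (sub_add_cancel 1 θ)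

theorem mul_norm_div_smul_rpow_le {F : Type*} [SeminormedAddCommGroup F] [NormedSpace ℝ F]
    {p t ψ D : ℝ} (hp : 1 < p) (ht : 0 < t) (hψ : 0 < ψ) {k : F} (hk : ‖k‖ ^ p ≤ D * ψ ^ (p - 1)) :
    (p - 1) * (ψ * t ^ (-p)) * ‖(t / ((p - 1) * ψ)) • k‖ ^ p ≤ (p - 1) ^ (1 - p) * D := by
  have hp1 : 0 < p - 1 := sub_pos.2 hp
  have hpow (a : ℝ) (ha : 0 < a) : a ^ (1 - p) = a * (a ^ p)⁻¹ := by
    rw [Real.rpow_sub ha, Real.rpow_one, div_eq_mul_inv]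
  rw [norm_smul, Real.norm_of_nonneg (by positivity), Real.mul_rpow (by positivity) (norm_nonneg _),
    Real.div_rpow ht.le (by positivity), Real.mul_rpow hp1.le hψ.le, Real.rpow_neg ht.le]
  calc (p - 1) * (ψ * (t ^ p)⁻¹) * (t ^ p / ((p - 1) ^ p * ψ ^ p) * ‖k‖ ^ p)
      = (p - 1) ^ (1 - p) * (ψ ^ (1 - p) * ‖k‖ ^ p) := by
        rw [hpow _ hp1, hpow _ hψ]
        field_simp
    _ ≤ (p - 1) ^ (1 - p) * (ψ ^ (1 - p) * (D * ψ ^ (p - 1))) := by gcongr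
    _ = (p - 1) ^ (1 - p) * D * (ψ ^ (1 - p) * ψ ^ (p - 1)) := by ring
    _ = (p - 1) ^ (1 - p) * D := by
        rw [← Real.rpow_add hψ, sub_add_sub_cancel, sub_self, Real.rpow_zero, mul_one]

/-- The perturbed gradient is the convex combination of `g` and `(t / ((p - 1) ψ)) • k` with weight
`θ = ε (p - 1) ψ t ^ (-p)`. -/
theorem norm_perturbed_gradient_rpow_le {F : Type*} [NormedAddCommGroup F] [NormedSpace ℝ F]
    {p ε t ψ D : ℝ} (hp : 1 < p) (hε : 0 ≤ ε) (ht : 0 < t) (hψ : 0 ≤ ψ) (hD : 0 ≤ D)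
    (hθ : ε * (p - 1) * (ψ * t ^ (-p)) ≤ 1) (g : F) {k : F} (hk : ‖k‖ ^ p ≤ D * ψ ^ (p - 1)) :
    ‖g + ε • (ψ • (((1 - p) * t ^ (-p)) • g) + t ^ (1 - p) • k)‖ ^ p ≤
      (1 - ε * (p - 1) * (ψ * t ^ (-p))) * ‖g‖ ^ p + ε * ((p - 1) ^ (1 - p) * D) := by
  have hp1 : 0 < p - 1 := sub_pos.2 hp
  rcases hψ.eq_or_lt with rfl | hψ
  · have hk0 : k = 0 := by
      rw [Real.zero_rpow hp1.ne', mul_zero] at hk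
      rw [← norm_eq_zero, ← Real.rpow_eq_zero (norm_nonneg k) (by linarith : p ≠ 0)]
      exact le_antisymm hk (by positivity)
    simp only [hk0, zero_smul, smul_zero, add_zero, zero_mul, mul_zero, sub_zero, one_mul]
    exact le_add_of_nonneg_right (by positivity)
  set θ := ε * (p - 1) * (ψ * t ^ (-p))
  have hθk : θ * (t / ((p - 1) * ψ)) = ε * t ^ (1 - p) := by
    rw [sub_eq_add_neg 1, Real.rpow_add ht, Real.rpow_one]
    simp only [θ]
    field_simp
  have hsplit : g + ε • (ψ • (((1 - p) * t ^ (-p)) • g) + t ^ (1 - p) • k) =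
      (1 - θ) • g + θ • ((t / ((p - 1) * ψ)) • k) := by
    rw [smul_smul θ, hθk]
    module
  rw [hsplit]
  refine (norm_convex_combination_rpow_le hp.le (by positivity) hθ g _).trans ?_
  gcongr _ + ?_
  calc θ * ‖(t / ((p - 1) * ψ)) • k‖ ^ p
      = ε * ((p - 1) * (ψ * t ^ (-p)) * ‖(t / ((p - 1) * ψ)) • k‖ ^ p) := by ring
    _ ≤ ε * ((p - 1) ^ (1 - p) * D) :=
        mul_le_mul_of_nonneg_left (mul_norm_div_smul_rpow_le hp ht hψ hk) hε

theorem add_mul_rpow_rpow_le {p ε δ v ψ : ℝ} (hp : 1 ≤ p) (hδ : 0 < δ) (hε : 0 ≤ ε)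
    (hεδ : ε ≤ δ ^ p) (hv : 0 ≤ v) (hψ0 : 0 ≤ ψ) (hψ1 : ψ ≤ 1) :
    (v + ε * (ψ * (v + δ) ^ (1 - p))) ^ p ≤ v ^ p + ε * p := by
  have hvδ : 0 < v + δ := by linarith
  set s := ε * (ψ * (v + δ) ^ (1 - p))
  have hs : 0 ≤ s := by positivity
  have hsδ : s ≤ δ := by
    calc s ≤ δ ^ p * (1 * δ ^ (1 - p)) := by
          gcongr ?_ * (?_ * ?_)
          exact Real.rpow_le_rpow_of_nonpos hδ (by linarith) (by linarith)
      _ = δ := by rw [one_mul, ← Real.rpow_add hδ, add_sub_cancel, Real.rpow_one]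
  calc (v + s) ^ p ≤ v ^ p + p * s * (v + s) ^ (p - 1) := by
        simpa using rpow_le_rpow_add_mul hp hv (le_add_of_nonneg_right hs)
    _ ≤ v ^ p + p * s * (v + δ) ^ (p - 1) := by gcongr
    _ = v ^ p + p * ε * ψ * ((v + δ) ^ (1 - p) * (v + δ) ^ (p - 1)) := by ring
    _ = v ^ p + p * ε * ψ := by
        rw [← Real.rpow_add hvδ, sub_add_sub_cancel, sub_self, Real.rpow_zero, mul_one]
    _ ≤ v ^ p + p * ε * 1 := by gcongr
    _ = v ^ p + ε * p := by ring

theorem log_competitor_energy_density_le {F : Type*} [NormedAddCommGroup F] [NormedSpace ℝ F]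
    {p δ D v ψ : ℝ} (hp : 1 < p) (hD : 0 ≤ D) (hδ : 0 < δ) (hv : 0 ≤ v) (hψ0 : 0 ≤ ψ)
    (hψ1 : ψ ≤ 1) (g : F) {k : F} (hk : ‖k‖ ^ p ≤ D * ψ ^ (p - 1)) :
    ‖g + (δ ^ p / p) • (ψ • (((1 - p) * (v + δ) ^ (-p)) • g) + (v + δ) ^ (1 - p) • k)‖ ^ p +
        |v + δ ^ p / p * (ψ * (v + δ) ^ (1 - p))| ^ p ≤
      ‖g‖ ^ p + |v| ^ p - δ ^ p / p * (p - 1) * (ψ * (v + δ) ^ (-p) * ‖g‖ ^ p) +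
        δ ^ p / p * ((p - 1) ^ (1 - p) * D + p) := by
  have hp1 : 0 < p - 1 := sub_pos.2 hp
  have hvδ : 0 < v + δ := by linarith
  have hθ : δ ^ p / p * (p - 1) * (ψ * (v + δ) ^ (-p)) ≤ 1 := by
    calc δ ^ p / p * (p - 1) * (ψ * (v + δ) ^ (-p))
        ≤ δ ^ p / p * (p - 1) * (1 * δ ^ (-p)) := by
          gcongr ?_ * (?_ * ?_)
          exact Real.rpow_le_rpow_of_nonpos hδ (by linarith) (by linarith)
      _ = (p - 1) / p := by
          rw [Real.rpow_neg hδ.le]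
          field_simp
      _ ≤ 1 := (div_le_one (by linarith)).2 (by linarith)
  rw [abs_of_nonneg hv, abs_of_nonneg (by positivity)]
  linarith [norm_perturbed_gradient_rpow_le hp (by positivity) hvδ hψ0 hD hθ g hk,
    add_mul_rpow_rpow_le hp.le hδ (by positivity) (div_le_self (by positivity) hp.le) hv hψ0 hψ1]

theorem integrable_norm_rpow_of_memLp {α F : Type*} [MeasurableSpace α] {μ : Measure α}
    [NormedAddCommGroup F] {f : α → F} {p : ℝ} (hp : 0 < p) (hf : MemLp f (ENNReal.ofReal p) μ) :
    Integrable (fun x => ‖f x‖ ^ p) μ := by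
  simpa [ENNReal.toReal_ofReal hp.le] using hf.integrable_norm_rpow (by simpa using hp) (by simp)

theorem MemW1p.integrableOn_energy {p : ℝ} (h : MemW1p Ω p u g) (hp : 0 < p) :
    IntegrableOn (fun x => ‖g x‖ ^ p + |u x| ^ p) Ω :=
  (integrable_norm_rpow_of_memLp hp h.2.1).add (integrable_norm_rpow_of_memLp hp h.1)

theorem MemW1p.comp_of_nonneg [IsFiniteMeasure (volume.restrict Ω)] {p : ℝ} (hΩ : IsOpen Ω)
    (h : MemW1p Ω p u g) (hp : 1 ≤ p) (hu : ∀ x, 0 ≤ u x) {F F' : ℝ → ℝ} {L : ℝ}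
    (hF : ∀ a, 0 ≤ a → HasDerivAt F (F' a) a) (hL : ∀ a, 0 ≤ a → ‖F' a‖ ≤ L) (hFm : Measurable F) :
    MemW1p Ω p (fun x => F (u x)) fun x => F' (u x) • g x := by
  have hderiv (a : ℝ) (ha : 0 ≤ a) : deriv F a = F' a := (hF a ha).deriv
  refine (h.comp hΩ hp (S := Ici 0) (fun x _ => hu x) (convex_Ici 0)
    (fun a ha => (hF a ha).differentiableAt) (fun a ha => (hderiv a ha).symm ▸ hL a ha)
    hFm).congr_ae .rfl (.of_forall fun x => ?_)
  simp only [hderiv _ (hu x)]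

theorem MemW1p.rpow_add_const [IsFiniteMeasure (volume.restrict Ω)] {p δ s : ℝ} (hΩ : IsOpen Ω)
    (h : MemW1p Ω p u g) (hp : 1 ≤ p) (hu : ∀ x, 0 ≤ u x) (hδ : 0 < δ) (hs : s ≤ 1) :
    MemW1p Ω p (fun x => (u x + δ) ^ s) fun x => (s * (u x + δ) ^ (s - 1)) • g x := by
  refine h.comp_of_nonneg hΩ hp hu (F := fun a => (a + δ) ^ s)
    (F' := fun a => s * (a + δ) ^ (s - 1)) (L := |s| * δ ^ (s - 1)) (fun a ha => ?_)
    (fun a ha => ?_) (by fun_prop)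
  · simpa using ((hasDerivAt_id a).add_const δ).rpow_const (p := s)
      (.inl (add_pos_of_nonneg_of_pos ha hδ).ne')
  · rw [norm_mul, Real.norm_eq_abs, Real.norm_of_nonneg (by positivity)]
    gcongr ?_ * ?_
    exact Real.rpow_le_rpow_of_nonpos hδ (by linarith) (by linarith)

theorem MemW1p.log_one_add_div [IsFiniteMeasure (volume.restrict Ω)] {p δ : ℝ} (hΩ : IsOpen Ω)
    (h : MemW1p Ω p u g) (hp : 1 ≤ p) (hu : ∀ x, 0 ≤ u x) (hδ : 0 < δ) :
    MemW1p Ω p (fun x => Real.log (1 + u x / δ)) fun x => (u x + δ)⁻¹ • g x := by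
  refine h.comp_of_nonneg hΩ hp hu (F := fun a => Real.log (1 + a / δ))
    (F' := fun a => (a + δ)⁻¹) (L := δ⁻¹) (fun a ha => ?_) (fun a ha => ?_) (by fun_prop)
  · have hlog := (((hasDerivAt_id a).div_const δ).const_add 1).log (by simp only [id]; positivity)
    refine hlog.congr_deriv ?_
    simp only [id]
    field_simp
    ring
  · rw [Real.norm_of_nonneg (by positivity)]
    exact inv_anti₀ hδ (by linarith)

/-- `v` does not lose energy when it is increased by a bounded amount inside `B`. A minimizer whose
zero set is larger than required has this property on every ball of small measure: the enlarged
function still satisfies the constraint. -/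
def IsUpwardMinimizerOn (Ω : Set 𝔼) (p : ℝ) (v : 𝔼 → ℝ) (g : 𝔼 → 𝔼) (B : Set 𝔼) : Prop :=
  ∀ w k, MemW1p Ω p w k → (∀ x ∈ Ω, v x ≤ w x) → (∀ x ∉ B, w x = v x) →
    (∃ C, ∀ x ∈ Ω, w x ≤ v x + C) → sobolevEnergy Ω p v g ≤ sobolevEnergy Ω p w k

theorem IsUpwardMinimizerOn.sobolevEnergy_le_log_competitor {B : Set 𝔼} {p : ℝ}
    (hmin : IsUpwardMinimizerOn Ω p u g B) (hΩ : IsOpen Ω) [IsFiniteMeasure (volume.restrict Ω)]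
    (hp : 1 ≤ p) (h : MemW1p Ω p u g) (hu : ∀ x, 0 ≤ u x) {ψ : 𝔼 → ℝ} (hψ : ContDiff ℝ ∞ ψ)
    (hc : HasCompactSupport ψ) (hψ01 : ∀ x, ψ x ∈ Icc 0 1) (hψB : ∀ x ∉ B, ψ x = 0) {δ ε : ℝ}
    (hδ : 0 < δ) (hε : 0 ≤ ε) :
    IntegrableOn (fun x => ‖g x + ε • (ψ x • (((1 - p) * (u x + δ) ^ (-p)) • g x) +
        (u x + δ) ^ (1 - p) • gradient ψ x)‖ ^ p +
        |u x + ε * (ψ x * (u x + δ) ^ (1 - p))| ^ p) Ω ∧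
      sobolevEnergy Ω p u g ≤ ∫ x in Ω, (‖g x + ε • (ψ x • (((1 - p) * (u x + δ) ^ (-p)) • g x) +
        (u x + δ) ^ (1 - p) • gradient ψ x)‖ ^ p +
        |u x + ε * (ψ x * (u x + δ) ^ (1 - p))| ^ p) := by
  have hpow : MemW1p Ω p (fun x => (u x + δ) ^ (1 - p))
      fun x => ((1 - p) * (u x + δ) ^ (-p)) • g x := by
    simpa using h.rpow_add_const hΩ hp hu hδ (s := 1 - p) (by linarith)
  have hw := h.add ((hpow.smooth_mul hp hψ hc).const_mul ε) hp
  refine ⟨hw.integrableOn_energy (by linarith), hmin _ _ hw (fun x _ => ?_) (fun x hx => ?_)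
    ⟨ε * (1 * δ ^ (1 - p)), fun x _ => ?_⟩⟩
  · have := hu x
    have := (hψ01 x).1
    exact le_add_of_nonneg_right (by positivity)
  · simp [hψB x hx]
  · have := hu x
    gcongr u x + ε * (?_ * ?_)
    · exact (hψ01 x).2
    · exact Real.rpow_le_rpow_of_nonpos hδ (by linarith) (by linarith)

theorem MemW1p.integrableOn_log_energy {p δ : ℝ} (h : MemW1p Ω p u g) (hp : 0 < p)
    (hu : ∀ x, 0 ≤ u x) {ψ : 𝔼 → ℝ} (hψ : Continuous ψ) (hψ01 : ∀ x, ψ x ∈ Icc 0 1) (hδ : 0 < δ) :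
    IntegrableOn (fun x => ψ x * (u x + δ) ^ (-p) * ‖g x‖ ^ p) Ω := by
  have hum : AEMeasurable u (volume.restrict Ω) := h.1.aestronglyMeasurable.aemeasurable
  have hgm : AEMeasurable g (volume.restrict Ω) := h.2.1.aestronglyMeasurable.aemeasurable
  have hψm : Measurable ψ := hψ.measurable
  have hm : AEMeasurable (fun x => ψ x * (u x + δ) ^ (-p) * ‖g x‖ ^ p) (volume.restrict Ω) := by
    fun_prop
  refine ((integrable_norm_rpow_of_memLp hp h.2.1).const_mul (1 * δ ^ (-p))).mono'
    hm.aestronglyMeasurable (.of_forall fun x => ?_)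
  have hux := hu x
  have hψx := (hψ01 x).1
  rw [Real.norm_of_nonneg (by positivity)]
  gcongr ?_ * ?_ * _
  · exact (hψ01 x).2
  · exact Real.rpow_le_rpow_of_nonpos hδ (by linarith) (by linarith)

/-- Compare `u` with the competitor `u + (δ ^ p / p) ψ (u + δ) ^ (1 - p)`. -/
theorem IsUpwardMinimizerOn.integral_log_energy_le {B : Set 𝔼} {p : ℝ}
    (hmin : IsUpwardMinimizerOn Ω p u g B) (hΩ : IsOpen Ω) [IsFiniteMeasure (volume.restrict Ω)]
    (hp : 1 < p) (h : MemW1p Ω p u g) (hu : ∀ x, 0 ≤ u x) {ψ : 𝔼 → ℝ} (hψ : ContDiff ℝ ∞ ψ)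
    (hc : HasCompactSupport ψ) (hψ01 : ∀ x, ψ x ∈ Icc 0 1) (hψB : ∀ x ∉ B, ψ x = 0) {D : ℝ}
    (hD : 0 ≤ D) (hgrad : ∀ x, ‖gradient ψ x‖ ^ p ≤ D * ψ x ^ (p - 1)) {δ : ℝ} (hδ : 0 < δ) :
    ∫ x in Ω, ψ x * (u x + δ) ^ (-p) * ‖g x‖ ^ p ≤
      ((p - 1) ^ (1 - p) * D + p) * volume.real Ω / (p - 1) := by
  have hp0 : 0 < p := by linarith
  set ε := δ ^ p / p
  have hε0 : 0 < ε := by positivity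
  set J := ∫ x in Ω, ψ x * (u x + δ) ^ (-p) * ‖g x‖ ^ p
  obtain ⟨hint, hle⟩ :=
    hmin.sobolevEnergy_le_log_competitor hΩ hp.le h hu hψ hc hψ01 hψB hδ hε0.le
  have hEint := h.integrableOn_energy hp0
  have hJint := (h.integrableOn_log_energy hp0 hu hψ.continuous hψ01 hδ).const_mul (ε * (p - 1))
  have hcomparison : sobolevEnergy Ω p u g ≤ sobolevEnergy Ω p u g - ε * (p - 1) * J +
      volume.real Ω * (ε * ((p - 1) ^ (1 - p) * D + p)) := by
    refine (hle.trans (integral_mono hint ((hEint.sub hJint).add (integrable_const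
      (ε * ((p - 1) ^ (1 - p) * D + p)))) fun x => log_competitor_energy_density_le hp hD hδ
        (hu x) (hψ01 x).1 (hψ01 x).2 (g x) (hgrad x))).trans_eq ?_
    rw [integral_add' (hEint.sub hJint) (integrable_const _), integral_sub' hEint hJint,
      integral_const_mul, integral_const, measureReal_restrict_apply_univ, smul_eq_mul,
      sobolevEnergy]
  rw [le_div_iff₀ (sub_pos.2 hp)]
  refine le_of_mul_le_mul_left ?_ hε0
  linarith

/-! ### Zero–one law for the zero set of a minimizer -/

/-- A power `m ≥ p` of a bump function: `‖∇(η ^ m)‖ ^ p ≤ (m C) ^ p η ^ ((m - 1) p)`, and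
`(m - 1) p ≥ m (p - 1)`. -/
theorem exists_cutoff_norm_gradient_rpow_le (x₀ : 𝔼) {p r : ℝ} (hp : 1 < p) (hr : 0 < r) :
    ∃ (ψ : 𝔼 → ℝ) (D : ℝ), ContDiff ℝ ∞ ψ ∧ HasCompactSupport ψ ∧ (∀ x, ψ x ∈ Icc 0 1) ∧
      (∀ x ∈ Metric.ball x₀ r, ψ x = 1) ∧ (∀ x ∉ Metric.closedBall x₀ (2 * r), ψ x = 0) ∧
      0 ≤ D ∧ ∀ x, ‖gradient ψ x‖ ^ p ≤ D * ψ x ^ (p - 1) := by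
  let η : ContDiffBump x₀ := ⟨r, 2 * r, hr, by linarith⟩
  set m := ⌈p⌉₊
  have hmp : p ≤ m := Nat.le_ceil p
  have hm : 1 ≤ m := Nat.one_le_iff_ne_zero.2 fun h0 => by simp [h0] at hmp; linarith
  have hm0 : m ≠ 0 := Nat.one_le_iff_ne_zero.1 hm
  have hη : ContDiff ℝ ∞ η := η.contDiff
  obtain ⟨C, hC⟩ := (η.hasCompactSupport.fderiv (𝕜 := ℝ)).exists_bound_of_continuous
    (hη.continuous_fderiv (by simp))
  have hC0 : 0 ≤ C := (norm_nonneg _).trans (hC 0)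
  refine ⟨fun x => η x ^ m, (m * C) ^ p, hη.pow m,
    η.hasCompactSupport.comp_left (g := fun a : ℝ => a ^ m) (zero_pow hm0),
    fun x => ⟨pow_nonneg η.nonneg _, pow_le_one₀ η.nonneg η.le_one⟩, fun x hx => ?_, fun x hx => ?_,
    by positivity, fun x => ?_⟩
  · simp [η.one_of_mem_closedBall (Metric.ball_subset_closedBall hx)]
  · have : η x = 0 := η.zero_of_le_dist (not_le.1 hx).le
    simp [this, hm0]
  have hη0 : 0 ≤ η x := η.nonneg
  have hgrad : ‖gradient (fun x => η x ^ m) x‖ ≤ m * C * η x ^ (m - 1) := by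
    rw [gradient, LinearIsometryEquiv.norm_map, fderiv_fun_pow _ (hη.differentiable (by simp) x),
      norm_smul, nsmul_eq_mul, norm_mul, norm_pow, Real.norm_of_nonneg hη0, Real.norm_natCast,
      mul_right_comm]
    gcongr
    exact hC x
  have hexp : m * (p - 1) ≤ ((m - 1 : ℕ) : ℝ) * p := by
    rw [Nat.cast_sub hm]
    push_cast
    linarith
  calc ‖gradient (fun x => η x ^ m) x‖ ^ p ≤ (m * C * η x ^ (m - 1)) ^ p := by gcongr
    _ = (m * C) ^ p * η x ^ (((m - 1 : ℕ) : ℝ) * p) := by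
        rw [Real.mul_rpow (by positivity) (by positivity), ← Real.rpow_natCast (η x),
          ← Real.rpow_mul hη0]
    _ ≤ (m * C) ^ p * η x ^ ((m : ℝ) * (p - 1)) := by
        gcongr _ * ?_
        exact Real.rpow_le_rpow_of_exponent_ge' hη0 η.le_one
          (mul_nonneg (by positivity) (by linarith)) hexp
    _ = (m * C) ^ p * (η x ^ m) ^ (p - 1) := by rw [Real.rpow_mul hη0, Real.rpow_natCast]

theorem IsUpwardMinimizerOn.exists_lintegral_inv_smul_le {p r : ℝ} {x₀ : 𝔼} (hr : 0 < r)
    (hmin : IsUpwardMinimizerOn Ω p u g (Metric.closedBall x₀ (2 * r))) (hΩ : IsOpen Ω)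
    [IsFiniteMeasure (volume.restrict Ω)] (hp : 1 < p) (h : MemW1p Ω p u g) (hu : ∀ x, 0 ≤ u x)
    (hB : Metric.ball x₀ r ⊆ Ω) :
    ∃ C ≠ (⊤ : ℝ≥0∞), ∀ δ > 0, ∫⁻ x in Metric.ball x₀ r, ‖(u x + δ)⁻¹ • g x‖ₑ ≤ C := by
  obtain ⟨ψ, D, hψ, hc, hψ01, hψ1, hψ0, hD, hgrad⟩ :=
    exists_cutoff_norm_gradient_rpow_le x₀ hp hr
  set C := ((p - 1) ^ (1 - p) * D + p) * volume.real Ω / (p - 1)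
  refine ⟨volume (Metric.ball x₀ r) + ENNReal.ofReal C,
    ENNReal.add_ne_top.2 ⟨measure_ball_lt_top.ne, ENNReal.ofReal_ne_top⟩, fun δ hδ => ?_⟩
  set f : 𝔼 → ℝ := fun x => ψ x * (u x + δ) ^ (-p) * ‖g x‖ ^ p with hf
  have hf0 (x : 𝔼) : 0 ≤ f x := by
    have := hu x
    have := (hψ01 x).1
    positivity
  have hpoint (x : 𝔼) (hx : x ∈ Metric.ball x₀ r) :
      ‖(u x + δ)⁻¹ • g x‖ₑ ≤ 1 + ENNReal.ofReal (f x) := by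
    have huδ : 0 < u x + δ := by linarith [hu x]
    set a := (u x + δ)⁻¹ * ‖g x‖ with ha
    have : 0 ≤ a := by positivity
    have hfa : f x = a ^ p := by
      rw [hf, ha, Real.mul_rpow (by positivity) (norm_nonneg _), Real.inv_rpow huδ.le,
        ← Real.rpow_neg huδ.le]
      simp only [hψ1 x hx, one_mul]
    rw [← ofReal_norm, norm_smul, Real.norm_of_nonneg (by positivity), ← ha, hfa,
      ← ENNReal.ofReal_one, ← ENNReal.ofReal_add zero_le_one (by positivity)]
    refine ENNReal.ofReal_le_ofReal ?_
    rcases le_total a 1 with ha1 | ha1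
    · exact le_add_of_le_of_nonneg ha1 (by positivity)
    · exact le_add_of_nonneg_of_le zero_le_one (Real.self_le_rpow_of_one_le ha1 hp.le)
  calc ∫⁻ x in Metric.ball x₀ r, ‖(u x + δ)⁻¹ • g x‖ₑ
      ≤ ∫⁻ x in Metric.ball x₀ r, (1 + ENNReal.ofReal (f x)) :=
        setLIntegral_mono' measurableSet_ball hpoint
    _ = volume (Metric.ball x₀ r) + ∫⁻ x in Metric.ball x₀ r, ENNReal.ofReal (f x) := by
        rw [lintegral_add_left measurable_const, setLIntegral_const, one_mul]
    _ ≤ volume (Metric.ball x₀ r) + ∫⁻ x in Ω, ENNReal.ofReal (f x) := by gcongr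
    _ = volume (Metric.ball x₀ r) + ENNReal.ofReal (∫ x in Ω, f x) := by
        rw [ofReal_integral_eq_lintegral_ofReal (h.integrableOn_log_energy (by linarith) hu
          hψ.continuous hψ01 hδ) (.of_forall hf0)]
    _ ≤ volume (Metric.ball x₀ r) + ENNReal.ofReal C := by
        gcongr
        exact hmin.integral_log_energy_le hΩ hp h hu hψ hc hψ01 hψ0 hD hgrad hδ

theorem ae_eq_zero_of_lintegral_log_le {α : Type*} [MeasurableSpace α] {μ : Measure α}
    {f : α → ℝ} (hf : AEMeasurable f μ) (hf0 : ∀ x, 0 ≤ f x) {M : ℝ≥0∞} (hM : M ≠ ⊤)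
    (h : ∀ δ > 0, ∫⁻ x, ‖Real.log (1 + f x / δ)‖ₑ ∂μ ≤ M) : ∀ᵐ x ∂μ, f x = 0 := by
  let L (k : ℕ) (x : α) : ℝ≥0∞ := ‖Real.log (1 + f x / (1 / ((k : ℝ) + 1)))‖ₑ
  have hLm (k : ℕ) : AEMeasurable (L k) μ := by fun_prop
  have hfatou : ∫⁻ x, liminf (fun k => L k x) atTop ∂μ ≤ M :=
    (lintegral_liminf_le' hLm).trans <|
      (liminf_le_liminf (.of_forall fun k => h _ (by positivity))).trans_eq (by simp)
  have hliminf : AEMeasurable (fun x => liminf (fun k => L k x) atTop) μ := by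
    simp only [liminf_eq_iSup_iInf_of_nat]
    exact .iSup fun _ => .biInf _ (to_countable _) fun _ _ => hLm _
  filter_upwards [ae_lt_top' hliminf (hfatou.trans_lt hM.lt_top).ne] with x hx
  by_contra hne
  have hpos : 0 < f x := (hf0 x).lt_of_ne' hne
  have hlog : Tendsto (fun k : ℕ => Real.log (1 + f x / (1 / ((k : ℝ) + 1)))) atTop atTop := by
    refine Real.tendsto_log_atTop.comp (tendsto_atTop_add_const_left _ _ ?_)
    simp only [div_div_eq_mul_div, div_one]
    exact (tendsto_natCast_atTop_atTop.atTop_add tendsto_const_nhds).const_mul_atTop hpos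
  have hlim : Tendsto (fun k => L k x) atTop (𝓝 ⊤) :=
    tendsto_nhds_top_mono (ENNReal.tendsto_ofReal_atTop.comp hlog)
      (.of_forall fun k => by
        simp only [L, ← ofReal_norm, Function.comp_apply]
        exact ENNReal.ofReal_le_ofReal (Real.le_norm_self _))
  exact hx.ne hlim.liminf_eq

/-- The Poincaré inequality bounds `log (1 + u / δ)` in `L¹`, uniformly in `δ`, unless the zero
set is null. -/
theorem IsUpwardMinimizerOn.ball_dichotomy {p r : ℝ} {x₀ : 𝔼} (hr : 0 < r)
    (hmin : IsUpwardMinimizerOn Ω p u g (Metric.closedBall x₀ (2 * r))) (hΩ : IsOpen Ω)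
    [IsFiniteMeasure (volume.restrict Ω)] (hp : 1 < p) (h : MemW1p Ω p u g) (hu : ∀ x, 0 ≤ u x)
    (hB : Metric.ball x₀ r ⊆ Ω) :
    volume ({x | u x = 0} ∩ Metric.ball x₀ r) = 0 ∨
      volume ({x | u x ≠ 0} ∩ Metric.ball x₀ r) = 0 := by
  rw [or_iff_not_imp_left]
  intro hZ
  obtain ⟨C, hC, hle⟩ := hmin.exists_lintegral_inv_smul_le hr hΩ hp h hu hB
  have hum : AEMeasurable u (volume.restrict (Metric.ball x₀ r)) :=
    (h.1.aestronglyMeasurable.mono_set hB).aemeasurable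
  have hZm : NullMeasurableSet ({x | u x = 0} ∩ Metric.ball x₀ r) :=
    (nullMeasurableSet_restrict measurableSet_ball.nullMeasurableSet).1
      (hum.nullMeasurableSet_preimage (measurableSet_singleton 0))
  have hZtop : volume ({x | u x = 0} ∩ Metric.ball x₀ r) ≠ ⊤ :=
    measure_ne_top_of_subset inter_subset_right measure_ball_lt_top.ne
  have hlog (δ : ℝ) (hδ : δ > 0) : ∫⁻ x in Metric.ball x₀ r, ‖Real.log (1 + u x / δ)‖ₑ ≤
      volume (Metric.ball (0 : 𝔼) (2 * r)) * (ENNReal.ofReal (2 * r) * C) /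
        volume ({x | u x = 0} ∩ Metric.ball x₀ r) := by
    have hlogu := h.log_one_add_div hΩ hp.le hu hδ
    rw [ENNReal.le_div_iff_mul_le (.inl hZ) (.inl hZtop), mul_comm]
    refine ((hlogu.2.2.mono hΩ.measurableSet hB).measure_mul_lintegral_ball_le
      ((hlogu.integrableOn_fun hp.le).mono_set hB) ((hlogu.integrableOn_grad hp.le).mono_set hB)
      hZm inter_subset_right fun x hx => ?_).trans ?_
    · simp [show u x = 0 from hx.1]
    · gcongr
      exact hle δ hδ
  have hae := ae_eq_zero_of_lintegral_log_le hum hu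
    (ENNReal.div_ne_top (by finiteness) hZ) hlog
  rwa [ae_iff, Measure.restrict_apply₀' measurableSet_ball.nullMeasurableSet] at hae

theorem measure_inter_eq_zero_of_locally_null {X : Type*} [PseudoMetricSpace X]
    [SecondCountableTopology X] [MeasurableSpace X] {μ : Measure X} {s S : Set X}
    (h : ∀ x ∈ S, ∃ r > 0, μ (s ∩ Metric.ball x r) = 0) : μ (s ∩ S) = 0 := by
  refine measure_null_of_locally_null _ fun x hx => ?_
  obtain ⟨r, hr, hnull⟩ := h x hx.2
  refine ⟨s ∩ Metric.ball x r, mem_nhdsWithin.2 ⟨Metric.ball x r, Metric.isOpen_ball,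
    Metric.mem_ball_self hr, fun y hy => ⟨hy.2.1, hy.1⟩⟩, hnull⟩

theorem isOpen_setOf_locally_null {X : Type*} [PseudoMetricSpace X] [MeasurableSpace X]
    (μ : Measure X) (s : Set X) : IsOpen {x | ∃ r > 0, μ (s ∩ Metric.ball x r) = 0} := by
  refine Metric.isOpen_iff.2 fun x ⟨r, hr, hx⟩ => ⟨r / 2, by positivity, fun y hy =>
    ⟨r / 2, by positivity, measure_mono_null (inter_subset_inter_right _ ?_) hx⟩⟩
  exact Metric.ball_subset_ball' (by linarith [Metric.mem_ball.1 hy])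

theorem measure_inter_eq_zero_or_compl_of_isPreconnected {X : Type*} [PseudoMetricSpace X]
    [SecondCountableTopology X] [MeasurableSpace X] {μ : Measure X} [μ.IsOpenPosMeasure]
    {S : Set X} (hS : IsPreconnected S) {s : Set X}
    (h : ∀ x ∈ S, ∃ r > 0, μ (s ∩ Metric.ball x r) = 0 ∨ μ (sᶜ ∩ Metric.ball x r) = 0) :
    μ (s ∩ S) = 0 ∨ μ (sᶜ ∩ S) = 0 := by
  have hdisj : S ∩ ({x | ∃ r > 0, μ (s ∩ Metric.ball x r) = 0} ∩
      {x | ∃ r > 0, μ (sᶜ ∩ Metric.ball x r) = 0}) = ∅ := by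
    refine eq_empty_iff_forall_notMem.2 ?_
    rintro x ⟨-, ⟨r, hr, h1⟩, ⟨r', hr', h2⟩⟩
    have hsub : Metric.ball x (min r r') ⊆ (s ∩ Metric.ball x r) ∪ (sᶜ ∩ Metric.ball x r') := by
      exact fun y hy => (em (y ∈ s)).imp (⟨·, Metric.ball_subset_ball (min_le_left _ _) hy⟩)
        (⟨·, Metric.ball_subset_ball (min_le_right _ _) hy⟩)
    exact (Metric.measure_ball_pos μ x (lt_min hr hr')).ne'
      (measure_mono_null hsub (measure_union_null h1 h2))
  have hcover : S ⊆ {x | ∃ r > 0, μ (s ∩ Metric.ball x r) = 0} ∪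
      {x | ∃ r > 0, μ (sᶜ ∩ Metric.ball x r) = 0} := fun x hx => by
    obtain ⟨r, hr, hnull⟩ := h x hx
    exact hnull.imp (⟨r, hr, ·⟩) (⟨r, hr, ·⟩)
  exact (isPreconnected_iff_subset_of_disjoint.1 hS _ _ (isOpen_setOf_locally_null μ s)
    (isOpen_setOf_locally_null μ sᶜ) hcover hdisj).imp
    measure_inter_eq_zero_of_locally_null measure_inter_eq_zero_of_locally_null

/-! ### The zero set of a minimizer -/

theorem sobolevEnergy_nonneg (Ω : Set 𝔼) (p : ℝ) (u : 𝔼 → ℝ) (g : 𝔼 → 𝔼) :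
    0 ≤ sobolevEnergy Ω p u g :=
  integral_nonneg fun _ => by positivity

theorem intLqPow_nonneg (Ω : Set 𝔼) (q : ℝ) (u : 𝔼 → ℝ) : 0 ≤ intLqPow Ω q u :=
  integral_nonneg fun _ => by positivity

theorem sobolevQuotient_nonneg (Ω : Set 𝔼) (p q : ℝ) (u : 𝔼 → ℝ) (g : 𝔼 → 𝔼) :
    0 ≤ sobolevQuotient Ω p q u g :=
  div_nonneg (sobolevEnergy_nonneg ..) (Real.rpow_nonneg (intLqPow_nonneg ..) _)

theorem interiorConst_le {p q α : ℝ} (h : MemW1p Ω p u g) (hq : 0 < intLqPow Ω q u)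
    (hz : ENNReal.ofReal α * volume Ω ≤ volume {x ∈ Ω | u x = 0}) :
    interiorConst Ω p q α ≤ sobolevQuotient Ω p q u g := by
  refine csInf_le ⟨0, ?_⟩ ⟨u, g, h, hq, hz, rfl⟩
  rintro r ⟨w, k, -, -, -, rfl⟩
  exact sobolevQuotient_nonneg ..

theorem memLp_of_intLqPow_pos {q : ℝ} (hq : 0 < q)
    (hm : AEStronglyMeasurable u (volume.restrict Ω)) (h : 0 < intLqPow Ω q u) :
    MemLp u (ENNReal.ofReal q) (volume.restrict Ω) := by
  have hi : IntegrableOn (fun x => |u x| ^ q) Ω := by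
    contrapose! h
    exact (integral_undef h).le
  rw [← integrable_norm_rpow_iff hm (by simpa using hq) ENNReal.ofReal_ne_top,
    ENNReal.toReal_ofReal hq.le]
  exact hi

theorem exists_measure_closedBall_le {X : Type*} [MetricSpace X] [ProperSpace X]
    [MeasurableSpace X] [BorelSpace X] (μ : Measure X) [IsFiniteMeasureOnCompacts μ]
    [NullSingletonClass μ] (x : X) {ε : ℝ≥0∞} (hε : 0 < ε) {R : ℝ} (hR : 0 < R) :
    ∃ r > 0, r ≤ R ∧ μ (Metric.closedBall x r) ≤ ε := by
  have hlim : Tendsto (fun r => μ (Metric.closedBall x r)) (𝓝[>] 0) (𝓝 0) := by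
    rw [← measure_singleton (μ := μ) x]
    refine ((tendsto_measure_cthickening_of_isCompact isCompact_singleton).mono_left
      nhdsWithin_le_nhds).congr' ?_
    filter_upwards [self_mem_nhdsWithin] with r hr
    rw [Metric.cthickening_singleton x (mem_Ioi.1 hr).le]
  obtain ⟨r, hrε, hr, hrR⟩ :=
    ((hlim.eventually_le_const hε).and (Ioc_mem_nhdsGT hR)).exists
  exact ⟨r, hr, hrR, hrε⟩

theorem intLqPow_abs (Ω : Set 𝔼) (q : ℝ) (u : 𝔼 → ℝ) :
    intLqPow Ω q (fun x => |u x|) = intLqPow Ω q u := by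
  simp only [intLqPow, abs_abs]

theorem MemW1p.sobolevEnergy_abs_le {p : ℝ} [IsFiniteMeasure (volume.restrict Ω)] (hΩ : IsOpen Ω)
    (h : MemW1p Ω p u g) (hp : 1 ≤ p) :
    sobolevEnergy Ω p (fun x => |u x|) (fun x => (u x / |u x|) • g x) ≤ sobolevEnergy Ω p u g := by
  have hp0 : 0 < p := by linarith
  refine integral_mono ((h.abs hΩ hp).integrableOn_energy hp0) (h.integrableOn_energy hp0)
    fun x => ?_
  have hunit : ‖u x / |u x|‖ ≤ 1 := by
    rw [norm_div, Real.norm_eq_abs, norm_abs_eq_norm]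
    exact div_self_le_one _
  simp only [abs_abs, norm_smul]
  gcongr
  exact mul_le_of_le_one_left (norm_nonneg _) hunit

theorem intLqPow_mono {q : ℝ} (hq : 0 < q) {v : 𝔼 → ℝ} (hΩ : MeasurableSet Ω)
    (hv : MemLp v (ENNReal.ofReal q) (volume.restrict Ω)) (hu0 : ∀ x, 0 ≤ u x)
    (huv : ∀ x ∈ Ω, u x ≤ v x) : intLqPow Ω q u ≤ intLqPow Ω q v := by
  refine integral_mono_of_nonneg (.of_forall fun x => by positivity)
    (integrable_norm_rpow_of_memLp hq hv) (ae_restrict_of_forall_mem hΩ fun x hx => ?_)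
  simp only [abs_of_nonneg (hu0 x)]
  exact Real.rpow_le_rpow (hu0 x) ((huv x hx).trans (le_abs_self _)) hq.le

theorem sobolevEnergy_le_of_sobolevQuotient_le {p q : ℝ} (hp : 0 ≤ p) (hq : 0 < q)
    {v : 𝔼 → ℝ} {k : 𝔼 → 𝔼} (hpos : 0 < intLqPow Ω q u) (hle : intLqPow Ω q u ≤ intLqPow Ω q v)
    (h : sobolevQuotient Ω p q u g ≤ sobolevQuotient Ω p q v k) :
    sobolevEnergy Ω p u g ≤ sobolevEnergy Ω p v k := by
  have hpow : 0 < intLqPow Ω q u ^ (p / q) := Real.rpow_pos_of_pos hpos _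
  refine (div_le_div_iff_of_pos_right hpow).1 (h.trans ?_)
  exact div_le_div_of_nonneg_left (sobolevEnergy_nonneg ..) hpow
    (Real.rpow_le_rpow hpos.le hle (by positivity))

theorem measure_zero_set_le_of_eqOn_compl {X : Type*} [MeasurableSpace X] {μ : Measure X}
    {S B : Set X} {v w : X → ℝ} {t : ℝ≥0∞} (h : ∀ x ∉ B, w x = v x)
    (ht : t ≤ μ {x ∈ S | v x = 0}) (hfin : μ {x ∈ S | v x = 0} ≠ ⊤)
    (hB : μ B ≤ μ {x ∈ S | v x = 0} - t) : t ≤ μ {x ∈ S | w x = 0} := by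
  have hsub : {x ∈ S | v x = 0} ⊆ {x ∈ S | w x = 0} ∪ B := fun x hx =>
    (em (x ∈ B)).elim .inr fun hxB => .inl ⟨hx.1, (h x hxB).trans hx.2⟩
  have hle : μ {x ∈ S | v x = 0} ≤ μ {x ∈ S | w x = 0} + (μ {x ∈ S | v x = 0} - t) :=
    (measure_mono hsub).trans <| (measure_union_le _ _).trans (by gcongr)
  refine (ENNReal.add_le_add_iff_right (ENNReal.sub_ne_top hfin)).1 (le_trans ?_ hle)
  rw [add_tsub_cancel_of_le ht]

theorem MemW1p.isUpwardMinimizerOn [IsFiniteMeasure (volume.restrict Ω)] {p q α : ℝ}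
    (h : MemW1p Ω p u g) (hΩ : MeasurableSet Ω) (hp : 0 ≤ p) (hq : 0 < q) (hu : ∀ x, 0 ≤ u x)
    (hN : 0 < intLqPow Ω q u) (hz : ENNReal.ofReal α * volume Ω ≤ volume {x ∈ Ω | u x = 0})
    (hmin : sobolevQuotient Ω p q u g ≤ interiorConst Ω p q α) {B : Set 𝔼}
    (hB : volume B ≤ volume {x ∈ Ω | u x = 0} - ENNReal.ofReal α * volume Ω) :
    IsUpwardMinimizerOn Ω p u g B := by
  rintro w k hw hle hoff ⟨C, hC⟩
  have hwLq : MemLp w (ENNReal.ofReal q) (volume.restrict Ω) := by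
    refine ((memLp_of_intLqPow_pos hq h.1.aestronglyMeasurable hN).add (memLp_const C)).mono
      hw.1.aestronglyMeasurable (ae_restrict_of_forall_mem hΩ fun x hx => ?_)
    rw [Real.norm_of_nonneg ((hu x).trans (hle x hx))]
    exact (hC x hx).trans (Real.le_norm_self _)
  have hNle : intLqPow Ω q u ≤ intLqPow Ω q w := intLqPow_mono hq hΩ hwLq hu hle
  have hfin : volume {x ∈ Ω | u x = 0} ≠ ⊤ :=
    measure_ne_top_of_subset (sep_subset _ _)
      (Measure.restrict_apply_univ (μ := volume) Ω ▸ measure_ne_top _ _)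
  exact sobolevEnergy_le_of_sobolevQuotient_le hp hq hN hNle <| hmin.trans <|
    interiorConst_le hw (hN.trans_le hNle) (measure_zero_set_le_of_eqOn_compl hoff hz hfin hB)

/-- If the zero set were too large, then `|v|` would be an upward minimizer on every small ball, and
the zero–one law would force `v` to vanish almost everywhere or almost nowhere. -/
theorem MemW1p.measure_zero_set_eq_of_minimizer [NeZero n] (hΩ : IsOpen Ω)
    (hΩc : IsPreconnected Ω) [IsFiniteMeasure (volume.restrict Ω)] {p q α : ℝ} (hp : 1 < p)
    (hq : 0 < q) (h : MemW1p Ω p u g) (hN : 0 < intLqPow Ω q u)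
    (hz : ENNReal.ofReal α * volume Ω ≤ volume {x ∈ Ω | u x = 0})
    (hmin : sobolevQuotient Ω p q u g ≤ interiorConst Ω p q α) :
    volume {x ∈ Ω | u x = 0} = ENNReal.ofReal α * volume Ω := by
  by_contra hne
  have hlt : ENNReal.ofReal α * volume Ω < volume {x ∈ Ω | u x = 0} := hz.lt_of_ne' hne
  have ha := h.abs hΩ hp.le
  have hzero (x : 𝔼) : |u x| = 0 ↔ u x = 0 := abs_eq_zero
  have hminAbs : sobolevQuotient Ω p q (fun x => |u x|) (fun x => (u x / |u x|) • g x) ≤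
      interiorConst Ω p q α := by
    refine le_trans ?_ hmin
    rw [sobolevQuotient, intLqPow_abs]
    exact div_le_div_of_nonneg_right (h.sobolevEnergy_abs_le hΩ hp.le)
      (Real.rpow_nonneg (intLqPow_nonneg ..) _)
  have hlocal (x : 𝔼) (hx : x ∈ Ω) : ∃ r > 0, volume ({x | |u x| = 0} ∩ Metric.ball x r) = 0 ∨
      volume ({x | |u x| = 0}ᶜ ∩ Metric.ball x r) = 0 := by
    obtain ⟨R, hR, hRΩ⟩ := Metric.isOpen_iff.1 hΩ x hx
    obtain ⟨r, hr, hrR, hrv⟩ := exists_measure_closedBall_le volume x (tsub_pos_of_lt hlt) hR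
    have hup := ha.isUpwardMinimizerOn hΩ.measurableSet (by linarith) hq (fun x => abs_nonneg _)
      (by rwa [intLqPow_abs]) (by simpa only [hzero] using hz) hminAbs
      (B := Metric.closedBall x (2 * (r / 2)))
      (by simpa only [hzero, mul_div_cancel₀ r two_ne_zero])
    exact ⟨r / 2, by positivity, hup.ball_dichotomy (by positivity) hΩ hp ha (fun x => abs_nonneg _)
      ((Metric.ball_subset_ball (by linarith)).trans hRΩ)⟩
  rcases measure_inter_eq_zero_or_compl_of_isPreconnected hΩc hlocal with h0 | h0
  · simp only [hzero, inter_comm _ Ω] at h0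
    exact (hlt.trans_eq h0).not_ge zero_le
  · refine hN.ne' (integral_eq_zero_of_ae ?_)
    filter_upwards [(ae_restrict_iff' hΩ.measurableSet).2 (measure_eq_zero_iff_ae_notMem.1 h0
      |>.mono fun x hx hxΩ => by_contra fun hu => hx ⟨hu, hxΩ⟩)] with x (hx : |u x| = 0)
    simp [hx, hq.ne']

/-! ### The cone condition -/

section Cone

variable {E : Type*} [NormedAddCommGroup E] [NormedSpace ℝ E]

/-- The local cone condition: near each point `x` of `closure D` there is one truncated open cone,
generated by a ball, whose translates to the points of `D` close to `x` stay inside `D`. -/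
def HasConeCondition (D : Set E) : Prop :=
  ∀ x ∈ closure D, ∃ (V : Set E) (ν : E) (ρ : ℝ), IsOpen V ∧ x ∈ V ∧ 0 < ρ ∧
    ∀ y ∈ V ∩ D, ∀ z ∈ Metric.ball ν ρ, ∀ t ∈ Icc (0 : ℝ) 1, y + t • z ∈ D

theorem add_smul_mem_ball {x y z : E} {r : ℝ} (hy : y ∈ Metric.ball x (r / 2)) (hz : ‖z‖ < r / 2)
    {t : ℝ} (ht : t ∈ Icc (0 : ℝ) 1) : y + t • z ∈ Metric.ball x r := by
  have htz : ‖t • z‖ ≤ ‖z‖ := by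
    rw [norm_smul, Real.norm_of_nonneg ht.1]
    exact mul_le_of_le_one_left (norm_nonneg _) ht.2
  calc dist (y + t • z) x ≤ dist (y + t • z) y + dist y x := dist_triangle _ _ _
    _ < r := by rw [dist_self_add_left]; linarith [Metric.mem_ball.1 hy]

theorem inv_smul_mem_ball {s : ℝ} (hs : 0 < s) {ν z : E} {ρ : ℝ}
    (hz : z ∈ Metric.ball (s • ν) (s * ρ)) : s⁻¹ • z ∈ Metric.ball ν ρ := by
  rwa [← mem_smul_set_iff_inv_smul_mem₀ hs.ne', smul_ball hs.ne', Real.norm_of_nonneg hs.le]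

theorem norm_le_of_mem_ball_smul {s : ℝ} (hs : 0 < s) {ν z : E} {ρ : ℝ}
    (hz : z ∈ Metric.ball (s • ν) (s * ρ)) : ‖z‖ ≤ s * (‖ν‖ + ρ) := by
  have := norm_lt_of_mem_ball hz
  rw [norm_smul, Real.norm_of_nonneg hs.le] at this
  linarith

theorem exists_ball_fderiv_neg {U : Set E} {f : E → ℝ} {x : E} (hU : IsOpen U) (hx : x ∈ U)
    (hf : ContDiffOn ℝ 1 f U) (hfx : fderiv ℝ f x ≠ 0) :
    ∃ (e : E) (r₁ r₂ : ℝ), 0 < r₁ ∧ 0 < r₂ ∧ Metric.ball x r₁ ⊆ U ∧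
      ∀ y ∈ Metric.ball x r₁, ∀ z ∈ Metric.ball e r₂, fderiv ℝ f y z < 0 := by
  obtain ⟨e, he⟩ : ∃ e, fderiv ℝ f x e < 0 := by
    obtain ⟨e, he⟩ := DFunLike.ne_iff.1 hfx
    rcases lt_or_gt_of_ne he with h | h
    · exact ⟨e, h⟩
    · exact ⟨-e, by rw [map_neg]; exact neg_neg_of_pos h⟩
  have hcont : ContinuousAt (fun a : E × E => fderiv ℝ f a.1 a.2) (x, e) := by
    have hf' : ContinuousAt (fderiv ℝ f) x :=
      (hf.continuousOn_fderiv_of_isOpen hU le_rfl).continuousAt (hU.mem_nhds hx)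
    exact (ContinuousAt.comp (f := Prod.fst) hf' continuousAt_fst).clm_apply continuousAt_snd
  have hneg := hcont.eventually (gt_mem_nhds he)
  rw [nhds_prod_eq, eventually_prod_iff] at hneg
  obtain ⟨P, hP, Q, hQ, hPQ⟩ := hneg
  obtain ⟨r₁, hr₁, hr₁P⟩ := Metric.mem_nhds_iff.1 (inter_mem hP (hU.mem_nhds hx))
  obtain ⟨r₂, hr₂, hr₂Q⟩ := Metric.mem_nhds_iff.1 hQ
  exact ⟨e, r₁, r₂, hr₁, hr₂, fun y hy => (hr₁P hy).2,
    fun y hy z hz => hPQ (hr₁P hy).1 (hr₂Q hz)⟩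

theorem apply_add_smul_le_of_fderiv_nonpos {f : E → ℝ} {y z : E}
    (hf : ∀ t ∈ Icc (0 : ℝ) 1, DifferentiableAt ℝ f (y + t • z))
    (hz : ∀ t ∈ Icc (0 : ℝ) 1, fderiv ℝ f (y + t • z) z ≤ 0) {t : ℝ} (ht : t ∈ Icc (0 : ℝ) 1) :
    f (y + t • z) ≤ f y := by
  have hderiv : ∀ τ ∈ Icc (0 : ℝ) 1,
      HasDerivAt (fun τ : ℝ => f (y + τ • z)) (fderiv ℝ f (y + τ • z) z) τ := fun τ hτ =>
    (hf τ hτ).hasFDerivAt.comp_hasDerivAt τ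
      (by simpa using ((hasDerivAt_id τ).smul_const z).const_add y)
  have hanti : AntitoneOn (fun τ : ℝ => f (y + τ • z)) (Icc 0 1) := by
    refine antitoneOn_of_deriv_nonpos (convex_Icc 0 1)
      (fun τ hτ => (hderiv τ hτ).continuousAt.continuousWithinAt)
      (fun τ hτ => (hderiv τ (interior_subset hτ)).differentiableAt.differentiableWithinAt)
      (fun τ hτ => ?_)
    rw [(hderiv τ (interior_subset hτ)).deriv]
    exact hz τ (interior_subset hτ)
  simpa using hanti (left_mem_Icc.2 zero_le_one) ht ht.1

-- The cone points in a direction along which the defining function decreases.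
theorem exists_cone_of_inter_eq_sublevel {D U : Set E} {f : E → ℝ} {x : E} (hU : IsOpen U)
    (hx : x ∈ U) (hf : ContDiffOn ℝ 1 f U) (hfx : fderiv ℝ f x ≠ 0)
    (hD : D ∩ U = {y ∈ U | f y < 0}) :
    ∃ (V : Set E) (ν : E) (ρ : ℝ), IsOpen V ∧ x ∈ V ∧ 0 < ρ ∧
      ∀ y ∈ V ∩ D, ∀ z ∈ Metric.ball ν ρ, ∀ t ∈ Icc (0 : ℝ) 1, y + t • z ∈ D := by
  obtain ⟨e, r₁, r₂, hr₁, hr₂, hball, hneg⟩ := exists_ball_fderiv_neg hU hx hf hfx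
  obtain ⟨s, hs, hsr⟩ : ∃ s : ℝ, 0 < s ∧ s * (‖e‖ + r₂) < r₁ / 2 :=
    exists_pos_mul_lt (half_pos hr₁) (‖e‖ + r₂) |>.imp fun s hs => ⟨hs.1, by linarith [hs.2]⟩
  refine ⟨Metric.ball x (r₁ / 2), s • e, s * r₂, Metric.isOpen_ball,
    Metric.mem_ball_self (half_pos hr₁), mul_pos hs hr₂, fun y hy z hz t ht => ?_⟩
  have hmem : ∀ τ ∈ Icc (0 : ℝ) 1, y + τ • z ∈ Metric.ball x r₁ := fun τ hτ =>
    add_smul_mem_ball hy.1 ((norm_le_of_mem_ball_smul hs hz).trans_lt hsr) hτ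
  have hfz : ∀ τ ∈ Icc (0 : ℝ) 1, fderiv ℝ f (y + τ • z) z ≤ 0 := fun τ hτ => by
    have hlt := hneg _ (hmem τ hτ) _ (inv_smul_mem_ball hs hz)
    rw [map_smul, smul_eq_mul] at hlt
    exact (neg_of_mul_neg_right hlt (inv_nonneg.2 hs.le)).le
  have hdiff : ∀ τ ∈ Icc (0 : ℝ) 1, DifferentiableAt ℝ f (y + τ • z) := fun τ hτ =>
    (hf.differentiableOn one_ne_zero).differentiableAt (hU.mem_nhds (hball (hmem τ hτ)))
  have hfy : y ∈ {y ∈ U | f y < 0} :=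
    hD ▸ ⟨hy.2, hball (Metric.ball_subset_ball (half_le_self hr₁.le) hy.1)⟩
  have hfyz : y + t • z ∈ {y ∈ U | f y < 0} :=
    ⟨hball (hmem t ht), (apply_add_smul_le_of_fderiv_nonpos hdiff hfz ht).trans_lt hfy.2⟩
  exact (hD.symm ▸ hfyz : y + t • z ∈ D ∩ U).1

end Cone

theorem HasSmoothBoundary.hasConeCondition (h : HasSmoothBoundary Ω) (hΩ : IsOpen Ω) :
    HasConeCondition Ω := by
  intro x hx
  by_cases hxΩ : x ∈ Ω
  · obtain ⟨r, hr, hrΩ⟩ := Metric.isOpen_iff.1 hΩ x hxΩ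
    exact ⟨Metric.ball x (r / 2), 0, r / 2, Metric.isOpen_ball,
      Metric.mem_ball_self (half_pos hr), half_pos hr, fun y hy z hz t ht =>
        hrΩ (add_smul_mem_ball hy.1 (mem_ball_zero_iff.1 hz) ht)⟩
  · obtain ⟨U, f, hU, hxU, hf, hfx, hUΩ⟩ := h x ⟨hx, by rwa [hΩ.interior_eq]⟩
    exact exists_cone_of_inter_eq_sublevel hU hxU (hf.of_le (by simp)) hfx hUΩ

/-! ### Integrals along cones -/

section ConeIntegral

variable {E : Type*} [NormedAddCommGroup E] [NormedSpace ℝ E] [MeasurableSpace E] [BorelSpace E]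
  [FiniteDimensional ℝ E] {μ : Measure E} [μ.IsAddHaarMeasure] {f : E → ℝ≥0∞} {B : Set E}
  {p q τ : ℝ}

theorem lintegral_comp_add_smul (hf : Measurable f) (y : E) {t : ℝ} (ht : 0 < t) :
    ∫⁻ z, f (y + t • z) ∂μ =
      ENNReal.ofReal t ^ (-(Module.finrank ℝ E : ℝ)) * ∫⁻ z, f z ∂μ := by
  have hmap : ∫⁻ z, f (y + t • z) ∂μ = ∫⁻ z, f (y + z) ∂(Measure.map (fun z => t • z) μ) := by
    rw [lintegral_map (by fun_prop) (by fun_prop)]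
  rw [hmap, Measure.map_addHaar_smul _ ht.ne', lintegral_smul_measure,
    lintegral_add_left_eq_self f, smul_eq_mul, abs_of_pos (by positivity),
    ENNReal.ofReal_inv_of_pos (by positivity), ENNReal.ofReal_pow ht.le, ENNReal.rpow_neg,
    ENNReal.rpow_natCast]

theorem setLIntegral_Ioc_zero_one_rpow (hτ : 0 < τ) :
    ∫⁻ t in Ioc (0 : ℝ) 1, ENNReal.ofReal t ^ (τ - 1) = ENNReal.ofReal τ⁻¹ := by
  have hint : IntegrableOn (fun t : ℝ => t ^ (τ - 1)) (Ioc 0 1) :=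
    (intervalIntegrable_iff_integrableOn_Ioc_of_le zero_le_one).1
      (intervalIntegral.intervalIntegrable_rpow' (by linarith))
  calc ∫⁻ t in Ioc (0 : ℝ) 1, ENNReal.ofReal t ^ (τ - 1)
      = ∫⁻ t in Ioc (0 : ℝ) 1, ENNReal.ofReal (t ^ (τ - 1)) :=
        setLIntegral_congr_fun measurableSet_Ioc fun t ht => ENNReal.ofReal_rpow_of_pos ht.1
    _ = ENNReal.ofReal (∫ t in (0 : ℝ)..1, t ^ (τ - 1)) := by
        rw [intervalIntegral.integral_of_le zero_le_one, ofReal_integral_eq_lintegral_ofReal hint]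
        filter_upwards [ae_restrict_mem measurableSet_Ioc] with t ht
        exact Real.rpow_nonneg ht.1.le _
    _ = ENNReal.ofReal τ⁻¹ := by
        rw [integral_rpow (Or.inl (by linarith)), sub_add_cancel, Real.one_rpow,
          Real.zero_rpow hτ.ne', sub_zero, one_div]

theorem lintegral_prod_rpow_snd {X : Type*} [MeasurableSpace X] (m : Measure X) (hτ : 0 < τ) :
    ∫⁻ a : X × ℝ, ENNReal.ofReal a.2 ^ (τ - 1) ∂(m.prod (volume.restrict (Ioc (0 : ℝ) 1))) =
      ENNReal.ofReal τ⁻¹ * m univ := by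
  rw [lintegral_prod _ (by fun_prop)]
  simp only [lintegral_const, setLIntegral_Ioc_zero_one_rpow hτ]

theorem lintegral_le_mul_rpow_of_weights {X : Type*} [MeasurableSpace X] {m : Measure X}
    {F W₀ W₁ W₂ : X → ℝ≥0∞} (hp : 1 ≤ p) (hpq : p ≤ q) (hF : AEMeasurable F m)
    (hW₀ : AEMeasurable W₀ m) (hW₁ : AEMeasurable W₁ m) (hW₂ : AEMeasurable W₂ m)
    (hW : ∀ᵐ a ∂m, W₀ a ^ (1 / q) * W₁ a ^ (1 / p - 1 / q) * W₂ a ^ (1 - 1 / p) = 1) :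
    ∫⁻ a, F a ∂m ≤ (∫⁻ a, F a ^ p * W₀ a ∂m) ^ (1 / q) *
      (∫⁻ a, F a ^ p * W₁ a ∂m) ^ (1 / p - 1 / q) * (∫⁻ a, W₂ a ∂m) ^ (1 - 1 / p) := by
  have hp0 : 0 < p := by linarith
  have hc₀ : 0 ≤ 1 / q := one_div_nonneg.2 (hp0.le.trans hpq)
  have hc₁ : 0 ≤ 1 / p - 1 / q := sub_nonneg.2 (one_div_le_one_div_of_le hp0 hpq)
  have hc₂ : 0 ≤ 1 - 1 / p := sub_nonneg.2 ((div_le_one hp0).2 hp)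
  have hHolder := ENNReal.lintegral_prod_norm_pow_le (μ := m) (Finset.univ : Finset (Fin 3))
    (f := ![fun a => F a ^ p * W₀ a, fun a => F a ^ p * W₁ a, W₂])
    (p := ![1 / q, 1 / p - 1 / q, 1 - 1 / p])
    (fun i _ => by
      fin_cases i
      exacts [(hF.pow_const p).mul hW₀, (hF.pow_const p).mul hW₁, hW₂])
    (by simp [Fin.sum_univ_three])
    (fun i _ => by
      fin_cases i
      exacts [hc₀, hc₁, hc₂])
  simp only [Fin.prod_univ_three, Matrix.cons_val] at hHolder
  refine le_of_eq_of_le (lintegral_congr_ae ?_) hHolder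
  filter_upwards [hW] with a ha
  calc F a = (F a ^ p) ^ (1 / q) * (F a ^ p) ^ (1 / p - 1 / q) * 1 := by
        rw [← ENNReal.rpow_add_of_nonneg _ _ hc₀ hc₁, add_sub_cancel, ← ENNReal.rpow_mul,
          mul_one_div_cancel hp0.ne', ENNReal.rpow_one, mul_one]
    _ = _ := by
        rw [← ha, ENNReal.mul_rpow_of_nonneg _ _ hc₀, ENNReal.mul_rpow_of_nonneg _ _ hc₁]
        ring

theorem lintegral_cone_rpow_mul_le (hf : Measurable f) (hτ : 0 < τ) (y : E) :
    ∫⁻ a, f (y + a.2 • a.1) ^ p * ENNReal.ofReal a.2 ^ (Module.finrank ℝ E + τ - 1)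
      ∂((μ.restrict B).prod (volume.restrict (Ioc (0 : ℝ) 1))) ≤
    ENNReal.ofReal τ⁻¹ * ∫⁻ x, f x ^ p ∂μ := by
  have hfp : Measurable fun x => f x ^ p := hf.pow_const p
  rw [lintegral_prod_symm _ (by fun_prop), ← setLIntegral_Ioc_zero_one_rpow hτ,
    ← lintegral_mul_const _ (by fun_prop)]
  refine setLIntegral_mono' measurableSet_Ioc fun t ht => ?_
  calc ∫⁻ z in B, f (y + t • z) ^ p * ENNReal.ofReal t ^ (Module.finrank ℝ E + τ - 1) ∂μ
      ≤ (∫⁻ z, f (y + t • z) ^ p ∂μ) * ENNReal.ofReal t ^ (Module.finrank ℝ E + τ - 1) := by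
        rw [lintegral_mul_const _ (by fun_prop)]
        gcongr
        exact Measure.restrict_le_self
    _ = ENNReal.ofReal t ^ (τ - 1) * ∫⁻ x, f x ^ p ∂μ := by
        rw [lintegral_comp_add_smul hfp y ht.1, mul_right_comm,
          ← ENNReal.rpow_add _ _ (by simpa using ht.1) ENNReal.ofReal_ne_top]
        ring_nf

theorem lintegral_lintegral_cone_rpow_mul (hf : Measurable f) (hτ : 0 < τ) :
    ∫⁻ y, ∫⁻ a, f (y + a.2 • a.1) ^ p * ENNReal.ofReal a.2 ^ (τ - 1)
      ∂((μ.restrict B).prod (volume.restrict (Ioc (0 : ℝ) 1))) ∂μ =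
    (∫⁻ x, f x ^ p ∂μ) * (ENNReal.ofReal τ⁻¹ * μ B) := by
  rw [lintegral_lintegral_swap (by fun_prop), ← Measure.restrict_apply_univ (μ := μ) B,
    ← lintegral_prod_rpow_snd _ hτ, ← lintegral_const_mul _ (by fun_prop)]
  refine lintegral_congr fun a => ?_
  rw [lintegral_mul_const _ (by fun_prop), lintegral_add_right_eq_self (fun x => f x ^ p)]

-- Hölder's inequality with weights `t ^ (τ - 1)`, `t ^ (d + τ - 1)`, `t ^ (τ - 1)`, `d` being the
-- dimension; `τ` is chosen so that the exponents of `t` add up to `0`.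
theorem lintegral_cone_le (hp : 1 ≤ p) (hpq : p ≤ q)
    (hτ : τ = 1 - Module.finrank ℝ E * (1 / p - 1 / q)) (hτ0 : 0 < τ) (hf : Measurable f) (y : E) :
    ∫⁻ z in B, (∫⁻ t in Ioc (0 : ℝ) 1, f (y + t • z)) ∂μ ≤
      (∫⁻ a, f (y + a.2 • a.1) ^ p * ENNReal.ofReal a.2 ^ (τ - 1)
          ∂((μ.restrict B).prod (volume.restrict (Ioc (0 : ℝ) 1)))) ^ (1 / q) *
        (ENNReal.ofReal τ⁻¹ * ∫⁻ x, f x ^ p ∂μ) ^ (1 / p - 1 / q) *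
        (ENNReal.ofReal τ⁻¹ * μ B) ^ (1 - 1 / p) := by
  rw [lintegral_lintegral (f := fun z t => f (y + t • z)) (by fun_prop)]
  have hweights : ∀ᵐ a ∂((μ.restrict B).prod (volume.restrict (Ioc (0 : ℝ) 1))),
      (ENNReal.ofReal a.2 ^ (τ - 1)) ^ (1 / q) *
        (ENNReal.ofReal a.2 ^ (Module.finrank ℝ E + τ - 1)) ^ (1 / p - 1 / q) *
        (ENNReal.ofReal a.2 ^ (τ - 1)) ^ (1 - 1 / p) = 1 := by
    filter_upwards [Measure.quasiMeasurePreserving_snd.ae (ae_restrict_mem measurableSet_Ioc)]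
      with a ha
    have ht0 : ENNReal.ofReal a.2 ≠ 0 := by simpa using ha.1
    rw [← ENNReal.rpow_mul, ← ENNReal.rpow_mul, ← ENNReal.rpow_mul,
      ← ENNReal.rpow_add _ _ ht0 ENNReal.ofReal_ne_top,
      ← ENNReal.rpow_add _ _ ht0 ENNReal.ofReal_ne_top]
    convert ENNReal.rpow_zero
    rw [hτ]
    ring
  refine (lintegral_le_mul_rpow_of_weights hp hpq (by fun_prop) (by fun_prop) (by fun_prop)
    (by fun_prop) hweights).trans ?_
  rw [lintegral_prod_rpow_snd _ hτ0, Measure.restrict_apply_univ]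
  have hc : 0 ≤ 1 / p - 1 / q := sub_nonneg.2 (one_div_le_one_div_of_le (by linarith) hpq)
  gcongr
  exact lintegral_cone_rpow_mul_le hf hτ0 y

theorem eLpNorm_cone_le (hp : 1 ≤ p) (hpq : p ≤ q)
    (hτ : τ = 1 - Module.finrank ℝ E * (1 / p - 1 / q)) (hτ0 : 0 < τ) (hf : Measurable f) :
    eLpNorm (fun y => ∫⁻ z in B, (∫⁻ t in Ioc (0 : ℝ) 1, f (y + t • z)) ∂μ) (ENNReal.ofReal q) μ ≤
      ENNReal.ofReal τ⁻¹ * μ B ^ (1 - 1 / p + 1 / q) * eLpNorm f (ENNReal.ofReal p) μ := by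
  have hp0 : 0 < p := by linarith
  have hq0 : 0 < q := by linarith
  have hq1 : 0 ≤ q / p - 1 := by rwa [sub_nonneg, one_le_div hp0]
  have hq2 : 0 ≤ q - q / p := sub_nonneg.2 (div_le_self hq0.le hp)
  set K := ENNReal.ofReal τ⁻¹
  set A := ∫⁻ x, f x ^ p ∂μ
  rw [eLpNorm_eq_lintegral_rpow_enorm_toReal (by simpa) (by simp),
    eLpNorm_eq_lintegral_rpow_enorm_toReal (by simpa) (by simp), ENNReal.toReal_ofReal hp0.le,
    ENNReal.toReal_ofReal hq0.le, one_div q, ENNReal.rpow_inv_le_iff hq0]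
  simp only [enorm_eq_self]
  calc ∫⁻ y, (∫⁻ z in B, (∫⁻ t in Ioc (0 : ℝ) 1, f (y + t • z)) ∂μ) ^ q ∂μ
      ≤ ∫⁻ y, (∫⁻ a, f (y + a.2 • a.1) ^ p * ENNReal.ofReal a.2 ^ (τ - 1)
          ∂((μ.restrict B).prod (volume.restrict (Ioc (0 : ℝ) 1)))) *
            ((K * A) ^ (q / p - 1) * (K * μ B) ^ (q - q / p)) ∂μ := by
        refine lintegral_mono fun y => ?_
        grw [lintegral_cone_le hp hpq hτ hτ0 hf y]
        rw [ENNReal.mul_rpow_of_nonneg _ _ hq0.le, ENNReal.mul_rpow_of_nonneg _ _ hq0.le,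
          ← ENNReal.rpow_mul, ← ENNReal.rpow_mul, ← ENNReal.rpow_mul, one_div_mul_cancel hq0.ne',
          ENNReal.rpow_one, show (1 / p - 1 / q) * q = q / p - 1 by field_simp,
          show (1 - 1 / p) * q = q - q / p by ring, mul_assoc]
    _ = (A * (K * μ B)) * ((K * A) ^ (q / p - 1) * (K * μ B) ^ (q - q / p)) := by
        rw [lintegral_mul_const _ (Measurable.lintegral_prod_right' (f := fun b : E × E × ℝ =>
          f (b.1 + b.2.2 • b.2.1) ^ p * ENNReal.ofReal b.2.2 ^ (τ - 1)) (by fun_prop)),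
          lintegral_lintegral_cone_rpow_mul hf hτ0]
    _ = (K * μ B ^ (1 - 1 / p + q⁻¹) * A ^ (1 / p)) ^ q := by
        rw [ENNReal.mul_rpow_of_nonneg _ _ hq0.le, ENNReal.mul_rpow_of_nonneg _ _ hq0.le,
          ENNReal.mul_rpow_of_nonneg _ _ hq1, ENNReal.mul_rpow_of_nonneg _ _ hq2,
          ← ENNReal.rpow_mul, ← ENNReal.rpow_mul, show 1 / p * q = 1 + (q / p - 1) by ring,
          show (1 - 1 / p + q⁻¹) * q = 1 + (q - q / p) by field_simp; ring,
          ENNReal.rpow_add_of_nonneg _ _ zero_le_one hq1,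
          ENNReal.rpow_add_of_nonneg _ _ zero_le_one hq2, ENNReal.rpow_one, ENNReal.rpow_one,
          show K ^ q = K * K ^ (q / p - 1) * K ^ (q - q / p) by
            nth_rw 2 [← ENNReal.rpow_one K]
            rw [← ENNReal.rpow_add_of_nonneg _ _ zero_le_one hq1,
              ← ENNReal.rpow_add_of_nonneg _ _ (by linarith) hq2]
            ring_nf]
        ring

end ConeIntegral

/-! ### Approximation by averages -/

/-- The average of `u` over the translate `y + B`, which approximates `u y` when `B` is small. It is
`0` if `B` is null or if `u` is not integrable on `y + B`. -/
noncomputable def translateAverage (B : Set 𝔼) (u : 𝔼 → ℝ) (y : 𝔼) : ℝ :=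
  ⨍ z in B, u (y + z)

section TranslateAverage

variable {B : Set (EuclideanSpace ℝ (Fin n))} {y : EuclideanSpace ℝ (Fin n)} {p q τ R : ℝ}

theorem measurable_translateAverage (hu : Measurable u) : Measurable (translateAverage B u) := by
  have hint := ((show Measurable fun a : 𝔼 × 𝔼 => u (a.1 + a.2) by
    fun_prop).stronglyMeasurable.integral_prod_right' (ν := volume.restrict B)).measurable
  unfold translateAverage
  simp only [setAverage_eq, smul_eq_mul]
  exact hint.const_mul _

theorem measurableSet_add_left_image (hB : MeasurableSet B) (y : 𝔼) :
    MeasurableSet ((y + ·) '' B) :=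
  (MeasurableEquiv.addLeft y).measurableSet_image.2 hB

theorem integrableOn_comp_add_left (hu : IntegrableOn u Ω) (hy : (y + ·) '' B ⊆ Ω) :
    IntegrableOn (fun z => u (y + z)) B :=
  ((measurePreserving_add_left volume y).integrableOn_image
    (measurableEmbedding_addLeft y)).1 (hu.mono_set hy)

theorem translateAverage_eq (hB : MeasurableSet B) (hy : (y + ·) '' B ⊆ Ω) :
    translateAverage B u y =
      (volume.real B)⁻¹ * ∫ x in (y + ·) '' B, u x ∂volume.restrict Ω := by
  rw [translateAverage, setAverage_eq, smul_eq_mul,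
    Measure.restrict_restrict (measurableSet_add_left_image hB y), inter_eq_left.2 hy,
    (measurePreserving_add_left volume y).setIntegral_image_emb (measurableEmbedding_addLeft y)]

theorem norm_translateAverage_le (hB : MeasurableSet B) (hu : IntegrableOn u Ω)
    (hy : (y + ·) '' B ⊆ Ω) :
    ‖translateAverage B u y‖ ≤ (volume.real B)⁻¹ * ∫ x in Ω, ‖u x‖ := by
  rw [translateAverage_eq hB hy, norm_mul, Real.norm_of_nonneg (by positivity)]
  gcongr
  exact (norm_integral_le_integral_norm _).trans
    (setIntegral_le_integral hu.norm (.of_forall fun _ => norm_nonneg _))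

theorem enorm_sub_translateAverage_le (hB0 : volume B ≠ 0) (hBtop : volume B ≠ ⊤)
    (hu : IntegrableOn (fun z => u (y + z)) B) :
    ‖u y - translateAverage B u y‖ₑ ≤
      (volume B)⁻¹ * ∫⁻ z in B, ‖u (y + z) - u y‖ₑ := by
  have hpos : 0 < volume.real B := ENNReal.toReal_pos hB0 hBtop
  have hsub : translateAverage B u y - u y =
      (volume.real B)⁻¹ * ∫ z in B, (u (y + z) - u y) := by
    rw [translateAverage, setAverage_eq, integral_sub hu (integrableOn_const hBtop),
      integral_const, measureReal_restrict_apply_univ, smul_eq_mul, smul_eq_mul]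
    field_simp
  have henorm : ‖(volume.real B)⁻¹‖ₑ = (volume B)⁻¹ := by
    rw [Real.enorm_of_nonneg (by positivity), ENNReal.ofReal_inv_of_pos hpos,
      ofReal_measureReal hBtop]
  rw [← enorm_neg, neg_sub, hsub, enorm_mul, henorm]
  gcongr
  exact enorm_integral_le_lintegral_enorm _

theorem IsWeakGradient.ae_enorm_translate_sub_le (hΩ : MeasurableSet Ω)
    (h : IsWeakGradient Ω u g) (hu : IntegrableOn u Ω) (hg : IntegrableOn g Ω) {W : Set 𝔼}
    (hW : IsOpen W) {z : 𝔼} (hR : ‖z‖ ≤ R)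
    (hz : ∀ y ∈ W, ∀ t ∈ Icc (0 : ℝ) 1, y + t • z ∈ Ω) :
    ∀ᵐ y ∂volume.restrict W, ‖u (y + z) - u y‖ₑ ≤
      ENNReal.ofReal R * ∫⁻ t in Ioc (0 : ℝ) 1, Ω.indicator (fun x => ‖g x‖ₑ) (y + t • z) := by
  filter_upwards [ae_restrict_of_ae (h.ae_translate_sub hΩ hu hg hW hz),
    ae_restrict_mem hW.measurableSet] with y hy hyW
  rw [hy hyW, intervalIntegral.integral_of_le zero_le_one]
  refine (enorm_integral_le_lintegral_enorm _).trans ?_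
  rw [← lintegral_const_mul' _ _ ENNReal.ofReal_ne_top]
  refine setLIntegral_mono' measurableSet_Ioc fun t ht => ?_
  rw [indicator_of_mem (hz y hyW t (Ioc_subset_Icc_self ht)), ← ofReal_norm, ← ofReal_norm,
    ← ENNReal.ofReal_mul ((norm_nonneg z).trans hR), mul_comm R]
  gcongr
  exact (norm_inner_le_norm _ _).trans (by gcongr)

theorem IsWeakGradient.ae_enorm_sub_translateAverage_le (hΩ : MeasurableSet Ω)
    (h : IsWeakGradient Ω u g) (hu : IntegrableOn u Ω) (hg : IntegrableOn g Ω)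
    (hum : Measurable u) (hgm : Measurable g) {W : Set 𝔼} (hW : IsOpen W) (hB : MeasurableSet B)
    (hB0 : volume B ≠ 0) (hBtop : volume B ≠ ⊤) (hR : ∀ z ∈ B, ‖z‖ ≤ R)
    (hcone : ∀ y ∈ W, ∀ z ∈ B, ∀ t ∈ Icc (0 : ℝ) 1, y + t • z ∈ Ω) :
    ∀ᵐ y ∂volume.restrict W, ‖u y - translateAverage B u y‖ₑ ≤
      (volume B)⁻¹ * (ENNReal.ofReal R *
        ∫⁻ z in B, ∫⁻ t in Ioc (0 : ℝ) 1, Ω.indicator (fun x => ‖g x‖ₑ) (y + t • z)) := by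
  have : Measurable (Ω.indicator fun x => ‖g x‖ₑ) := hgm.enorm.indicator hΩ
  have hmeas : Measurable fun a : 𝔼 × 𝔼 =>
      ∫⁻ t in Ioc (0 : ℝ) 1, Ω.indicator (fun x => ‖g x‖ₑ) (a.1 + t • a.2) :=
    Measurable.lintegral_prod_right' (f := fun b : (𝔼 × 𝔼) × ℝ =>
      Ω.indicator (fun x => ‖g x‖ₑ) (b.1.1 + b.2 • b.1.2)) (by fun_prop)
  have hincr := (Measure.ae_ae_comm (μ := volume.restrict B) (ν := volume.restrict W)
    (p := fun z y => ‖u (y + z) - u y‖ₑ ≤ ENNReal.ofReal R *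
      ∫⁻ t in Ioc (0 : ℝ) 1, Ω.indicator (fun x => ‖g x‖ₑ) (y + t • z))
    (measurableSet_le (by fun_prop) ((hmeas.comp measurable_swap).const_mul _))).1
    (ae_restrict_of_forall_mem hB fun z hz =>
      h.ae_enorm_translate_sub_le hΩ hu hg hW (hR z hz) fun y hy => hcone y hy z hz)
  filter_upwards [hincr, ae_restrict_mem hW.measurableSet] with y hy hyW
  have hyB : (y + ·) '' B ⊆ Ω := by
    rintro _ ⟨z, hz, rfl⟩
    simpa using hcone y hyW z hz 1 (right_mem_Icc.2 zero_le_one)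
  refine (enorm_sub_translateAverage_le hB0 hBtop (integrableOn_comp_add_left hu hyB)).trans ?_
  gcongr
  rw [← lintegral_const_mul' _ _ ENNReal.ofReal_ne_top]
  exact lintegral_mono_ae hy

theorem MemW1p.eLpNorm_sub_translateAverage_le [IsFiniteMeasure (volume.restrict Ω)]
    (hΩ : MeasurableSet Ω) (hp : 1 ≤ p) (hpq : p ≤ q) (hτ : τ = 1 - n * (1 / p - 1 / q))
    (hτ0 : 0 < τ) (h : MemW1p Ω p u g) (hum : Measurable u) (hgm : Measurable g) {W : Set 𝔼}
    (hW : IsOpen W) (hB : MeasurableSet B) (hB0 : volume B ≠ 0) (hBtop : volume B ≠ ⊤)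
    (hR : ∀ z ∈ B, ‖z‖ ≤ R)
    (hcone : ∀ y ∈ W, ∀ z ∈ B, ∀ t ∈ Icc (0 : ℝ) 1, y + t • z ∈ Ω) :
    eLpNorm (u - translateAverage B u) (ENNReal.ofReal q) (volume.restrict W) ≤
      ENNReal.ofReal R * ENNReal.ofReal τ⁻¹ * volume B ^ (1 / q - 1 / p) *
        eLpNorm g (ENNReal.ofReal p) (volume.restrict Ω) := by
  set f : 𝔼 → ℝ≥0∞ := Ω.indicator fun x => ‖g x‖ₑ
  have hfm : Measurable f := hgm.enorm.indicator hΩ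
  have hf : eLpNorm f (ENNReal.ofReal p) volume =
      eLpNorm g (ENNReal.ofReal p) (volume.restrict Ω) := by
    rw [← eLpNorm_indicator_eq_eLpNorm_restrict hΩ, ← eLpNorm_enorm (Ω.indicator g)]
    exact congrArg (eLpNorm · (ENNReal.ofReal p) volume)
      (funext fun x => (enorm_indicator_eq_indicator_enorm g x).symm)
  set Cf : 𝔼 → ℝ≥0∞ := fun y => ∫⁻ z in B, ∫⁻ t in Ioc (0 : ℝ) 1, f (y + t • z)
  have hCf : Measurable Cf :=
    Measurable.lintegral_prod_right' (f := fun a : 𝔼 × 𝔼 =>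
      ∫⁻ t in Ioc (0 : ℝ) 1, f (a.1 + t • a.2)) <|
    Measurable.lintegral_prod_right' (f := fun b : (𝔼 × 𝔼) × ℝ => f (b.1.1 + b.2 • b.1.2))
      (by fun_prop)
  have hae := h.2.2.ae_enorm_sub_translateAverage_le hΩ (h.integrableOn_fun hp)
    (h.integrableOn_grad hp) hum hgm hW hB hB0 hBtop hR hcone
  calc eLpNorm (u - translateAverage B u) (ENNReal.ofReal q) (volume.restrict W)
      ≤ (volume B)⁻¹ * ENNReal.ofReal R * eLpNorm Cf (ENNReal.ofReal q) (volume.restrict W) :=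
        eLpNorm_le_mul_eLpNorm_of_ae_le_mul'' _ hCf.aestronglyMeasurable <| hae.mono fun y hy => by
          rwa [enorm_eq_self, mul_assoc]
    _ ≤ (volume B)⁻¹ * ENNReal.ofReal R * eLpNorm Cf (ENNReal.ofReal q) volume := by
        gcongr
        exact Measure.restrict_le_self
    _ ≤ (volume B)⁻¹ * ENNReal.ofReal R * (ENNReal.ofReal τ⁻¹ * volume B ^ (1 - 1 / p + 1 / q) *
          eLpNorm f (ENNReal.ofReal p) volume) := by
        gcongr
        exact eLpNorm_cone_le hp hpq (by rwa [finrank_euclideanSpace_fin]) hτ0 hfm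
    _ = _ := by
        rw [hf, show 1 - 1 / p + 1 / q = 1 + (1 / q - 1 / p) by ring,
          ENNReal.rpow_add _ _ hB0 hBtop, ENNReal.rpow_one]
        calc _ = (volume B)⁻¹ * volume B * (ENNReal.ofReal R * ENNReal.ofReal τ⁻¹ *
              volume B ^ (1 / q - 1 / p) * eLpNorm g (ENNReal.ofReal p) (volume.restrict Ω)) := by
              ring
          _ = _ := by rw [ENNReal.inv_mul_cancel hB0 hBtop, one_mul]

/-- The factor `s ^ τ` is what makes the averages at scale `s` approximate `u` uniformly over
bounded sets of `W^{1,p}`. -/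
theorem MemW1p.eLpNorm_sub_translateAverage_ball_le [IsFiniteMeasure (volume.restrict Ω)]
    (hΩ : MeasurableSet Ω) (hp : 1 ≤ p) (hpq : p ≤ q) (hτ : τ = 1 - n * (1 / p - 1 / q))
    (hτ0 : 0 < τ) (h : MemW1p Ω p u g) (hum : Measurable u) (hgm : Measurable g) {W : Set 𝔼}
    (hW : IsOpen W) {ν : 𝔼} {ρ s : ℝ} (hρ : 0 < ρ) (hs : s ∈ Ioc (0 : ℝ) 1)
    (hcone : ∀ y ∈ W, ∀ z ∈ Metric.ball ν ρ, ∀ t ∈ Icc (0 : ℝ) 1, y + t • z ∈ Ω) :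
    eLpNorm (u - translateAverage (Metric.ball (s • ν) (s * ρ)) u) (ENNReal.ofReal q)
        (volume.restrict W) ≤
      ENNReal.ofReal (‖ν‖ + ρ) * ENNReal.ofReal τ⁻¹ *
        volume (Metric.ball (0 : 𝔼) ρ) ^ (1 / q - 1 / p) * ENNReal.ofReal s ^ τ *
          eLpNorm g (ENNReal.ofReal p) (volume.restrict Ω) := by
  have hs0 : ENNReal.ofReal s ≠ 0 := ENNReal.ofReal_ne_zero_iff.2 hs.1
  have hpos := Metric.measure_ball_pos volume (s • ν) (mul_pos hs.1 hρ)
  have hscale : ENNReal.ofReal (s * (‖ν‖ + ρ)) *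
      volume (Metric.ball (s • ν) (s * ρ)) ^ (1 / q - 1 / p) =
        ENNReal.ofReal (‖ν‖ + ρ) * volume (Metric.ball (0 : 𝔼) ρ) ^ (1 / q - 1 / p) *
          ENNReal.ofReal s ^ τ := by
    rw [Measure.addHaar_ball_mul_of_pos _ _ hs.1, finrank_euclideanSpace_fin,
      ENNReal.mul_rpow_of_ne_top ENNReal.ofReal_ne_top measure_ball_lt_top.ne,
      ENNReal.ofReal_mul hs.1.le, ENNReal.ofReal_pow hs.1.le, ← ENNReal.rpow_natCast,
      ← ENNReal.rpow_mul, show τ = 1 + n * (1 / q - 1 / p) by rw [hτ]; ring,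
      ENNReal.rpow_add _ _ hs0 ENNReal.ofReal_ne_top, ENNReal.rpow_one]
    ring
  calc _ ≤ ENNReal.ofReal (s * (‖ν‖ + ρ)) * ENNReal.ofReal τ⁻¹ *
        volume (Metric.ball (s • ν) (s * ρ)) ^ (1 / q - 1 / p) *
          eLpNorm g (ENNReal.ofReal p) (volume.restrict Ω) := by
        refine h.eLpNorm_sub_translateAverage_le hΩ hp hpq hτ hτ0 hum hgm hW
          Metric.isOpen_ball.measurableSet hpos.ne' measure_ball_lt_top.ne
          (fun z hz => norm_le_of_mem_ball_smul hs.1 hz) fun y hy z hz t ht => ?_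
        rw [← smul_inv_smul₀ hs.1.ne' z, smul_smul]
        exact hcone y hy _ (inv_smul_mem_ball hs.1 hz) _
          ⟨mul_nonneg ht.1 hs.1.le, mul_le_one₀ ht.2 hs.1.le hs.2⟩
    _ = ENNReal.ofReal (s * (‖ν‖ + ρ)) * volume (Metric.ball (s • ν) (s * ρ)) ^ (1 / q - 1 / p) *
          (ENNReal.ofReal τ⁻¹ * eLpNorm g (ENNReal.ofReal p) (volume.restrict Ω)) := by ring
    _ = _ := by rw [hscale]; ring

end TranslateAverage

theorem MemW1p.exists_measurable_ae_eq {p : ℝ} (h : MemW1p Ω p u g) :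
    ∃ u' g', Measurable u' ∧ Measurable g' ∧ u =ᵐ[volume.restrict Ω] u' ∧
      g =ᵐ[volume.restrict Ω] g' ∧ MemW1p Ω p u' g' :=
  have hu := h.1.aemeasurable
  have hg := h.2.1.aemeasurable
  ⟨hu.mk u, hg.mk g, hu.measurable_mk, hg.measurable_mk, hu.ae_eq_mk, hg.ae_eq_mk,
    h.congr_ae hu.ae_eq_mk hg.ae_eq_mk⟩

/-! ### The Rellich–Kondrachov theorem -/

section LpCompactness

variable {X : Type*} [MeasurableSpace X] {μ : Measure X}

/-- The space `L^p` is the dual of the separable space `L^{p'}`, so bounded sets are weak-*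
sequentially compact. -/
theorem exists_subseq_tendsto_setIntegral [IsFiniteMeasure μ] [IsSeparable μ] {p : ℝ}
    (hp : 1 < p) {u : ℕ → X → ℝ} (hu : ∀ k, MemLp (u k) (ENNReal.ofReal p) μ) {M : ℝ≥0∞}
    (hM : M ≠ ⊤) (huM : ∀ k, eLpNorm (u k) (ENNReal.ofReal p) μ ≤ M) :
    ∃ φ : ℕ → ℕ, StrictMono φ ∧ ∀ A, MeasurableSet A →
      ∃ l, Tendsto (fun k => ∫ x in A, u (φ k) x ∂μ) atTop (𝓝 l) := by
  have hconj : p.HolderConjugate p.conjExponent := Real.HolderConjugate.conjExponent hp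
  set p' := p.conjExponent
  have : (ENNReal.ofReal p).HolderConjugate (ENNReal.ofReal p') := hconj.ennrealOfReal
  have : Fact (1 ≤ ENNReal.ofReal p) := ⟨ENNReal.one_le_ofReal.2 hp.le⟩
  have : Fact (1 ≤ ENNReal.ofReal p') := ⟨ENNReal.one_le_ofReal.2 hconj.symm.lt.le⟩
  have : Fact (ENNReal.ofReal p' ≠ ⊤) := ⟨ENNReal.ofReal_ne_top⟩
  let P := (ContinuousLinearMap.mul ℝ ℝ).lpPairing μ (ENNReal.ofReal p) (ENNReal.ofReal p')
  let T : ℕ → WeakDual ℝ (Lp ℝ (ENNReal.ofReal p') μ) := fun k =>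
    StrongDual.toWeakDual (P ((hu k).toLp (u k)))
  have hT (k : ℕ) : T k ∈ WeakDual.toStrongDual ⁻¹'
      Metric.closedBall (0 : StrongDual ℝ (Lp ℝ (ENNReal.ofReal p') μ)) (‖P‖ * M.toReal) := by
    change P ((hu k).toLp (u k)) ∈ Metric.closedBall _ _
    rw [mem_closedBall_zero_iff]
    refine (P.le_opNorm _).trans ?_
    rw [Lp.norm_toLp]
    gcongr
    exact huM k
  obtain ⟨Λ, -, φ, hφ, hlim⟩ := WeakDual.isSeqCompact_closedBall ℝ _ _ _ hT
  refine ⟨φ, hφ, fun A hA => ?_⟩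
  set χ := indicatorConstLp (ENNReal.ofReal p') hA (measure_ne_top μ A) (1 : ℝ) with hχ
  refine ⟨Λ χ, (((WeakDual.eval_continuous χ).tendsto Λ).comp hlim).congr fun k => ?_⟩
  change P ((hu (φ k)).toLp (u (φ k))) χ = _
  rw [ContinuousLinearMap.lpPairing_eq_integral, ← integral_indicator hA]
  refine integral_congr_ae ?_
  filter_upwards [(hu (φ k)).coeFn_toLp, indicatorConstLp_coeFn (p := ENNReal.ofReal p') (hs := hA)
    (hμs := measure_ne_top μ A) (c := (1 : ℝ))] with x hux hχx
  rw [ContinuousLinearMap.mul_apply', hux, hχ, hχx]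
  by_cases hx : x ∈ A <;> simp [hx]

theorem tendsto_eLpNorm_zero_of_bounded [IsFiniteMeasure μ] {ι : Type*} {l : Filter ι}
    [l.IsCountablyGenerated] {q C : ℝ} (hq : 0 < q) {F : ι → X → ℝ}
    (hF : ∀ i, AEStronglyMeasurable (F i) μ) (hC : ∀ i, ∀ᵐ x ∂μ, ‖F i x‖ ≤ C)
    (hlim : ∀ᵐ x ∂μ, Tendsto (F · x) l (𝓝 0)) :
    Tendsto (fun i => eLpNorm (F i) (ENNReal.ofReal q) μ) l (𝓝 0) := by
  have hI : Tendsto (fun i => ∫⁻ x, ‖F i x‖ₑ ^ q ∂μ) l (𝓝 (∫⁻ _, 0 ∂μ)) := by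
    refine tendsto_lintegral_filter_of_dominated_convergence'
      (fun _ => ENNReal.ofReal C ^ q) (.of_forall fun i => (hF i).enorm.pow_const q)
      (.of_forall fun i => (hC i).mono fun x hx => ?_) ?_ (hlim.mono fun x hx => ?_)
    · rw [← ofReal_norm]
      gcongr
    · rw [lintegral_const]
      exact ENNReal.mul_ne_top (ENNReal.rpow_ne_top_of_nonneg hq.le ENNReal.ofReal_ne_top)
        (measure_ne_top _ _)
    · simpa [ENNReal.zero_rpow_of_pos hq] using hx.enorm.ennrpow_const q
  rw [lintegral_zero] at hI
  simpa [eLpNorm_eq_lintegral_rpow_enorm_toReal (by simpa using hq : ENNReal.ofReal q ≠ 0),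
    ENNReal.toReal_ofReal hq.le, hq] using hI.ennrpow_const (1 / q)

theorem tendsto_eLpNorm_sub_of_forall_exists_approx {q : ℝ≥0∞} (hq : 1 ≤ q) {w : ℕ → X → ℝ}
    (hw : ∀ k, AEStronglyMeasurable (w k) μ)
    (h : ∀ ε > 0, ∃ A : ℕ → X → ℝ, (∀ k, AEStronglyMeasurable (A k) μ) ∧
      (∀ k, eLpNorm (w k - A k) q μ ≤ ε) ∧
      Tendsto (fun i : ℕ × ℕ => eLpNorm (A i.1 - A i.2) q μ) atTop (𝓝 0)) :
    Tendsto (fun i : ℕ × ℕ => eLpNorm (w i.1 - w i.2) q μ) atTop (𝓝 0) := by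
  refine ENNReal.tendsto_nhds_zero.2 fun ε hε => ?_
  obtain ⟨A, hA, hwA, hlim⟩ := h (ε / 3) (ENNReal.div_pos hε.ne' (by simp))
  filter_upwards [ENNReal.tendsto_nhds_zero.1 hlim (ε / 3) (ENNReal.div_pos hε.ne' (by simp))]
    with i hi
  have hsplit : w i.1 - w i.2 = (w i.1 - A i.1) + (A i.1 - A i.2) - (w i.2 - A i.2) := by abel
  calc eLpNorm (w i.1 - w i.2) q μ
      ≤ eLpNorm (w i.1 - A i.1) q μ + eLpNorm (A i.1 - A i.2) q μ +
          eLpNorm (w i.2 - A i.2) q μ := by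
        rw [hsplit]
        grw [eLpNorm_sub_le (((hw _).sub (hA _)).add ((hA _).sub (hA _))) ((hw _).sub (hA _)) hq,
          eLpNorm_add_le ((hw _).sub (hA _)) ((hA _).sub (hA _)) hq]
    _ ≤ ε / 3 + ε / 3 + ε / 3 := by gcongr <;> apply hwA
    _ = ε := ENNReal.add_thirds ε

theorem exists_tendsto_eLpNorm_sub_of_cauchy {q : ℝ≥0∞} (hq : 1 ≤ q) {w : ℕ → X → ℝ}
    (hw : ∀ k, MemLp (w k) q μ)
    (h : Tendsto (fun i : ℕ × ℕ => eLpNorm (w i.1 - w i.2) q μ) atTop (𝓝 0)) :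
    ∃ v, MemLp v q μ ∧ Tendsto (fun k => eLpNorm (w k - v) q μ) atTop (𝓝 0) := by
  have : Fact (1 ≤ q) := ⟨hq⟩
  have hcauchy : CauchySeq fun k => (hw k).toLp (w k) :=
    (Lp.cauchySeq_Lp_iff_cauchySeq_eLpNorm _).2 <| h.congr fun i =>
      eLpNorm_congr_ae ((hw i.1).coeFn_toLp.sub (hw i.2).coeFn_toLp).symm
  obtain ⟨v, hv⟩ := cauchySeq_tendsto_of_complete hcauchy
  refine ⟨v, Lp.memLp v, (Lp.tendsto_Lp_iff_tendsto_eLpNorm'' w hw v (Lp.memLp v)).1 ?_⟩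
  rwa [Lp.toLp_coeFn]

theorem eLpNorm_restrict_union_le {q : ℝ} (hq : 1 ≤ q) (f : X → ℝ) (S T : Set X) :
    eLpNorm f (ENNReal.ofReal q) (μ.restrict (S ∪ T)) ≤
      eLpNorm f (ENNReal.ofReal q) (μ.restrict S) +
        eLpNorm f (ENNReal.ofReal q) (μ.restrict T) := by
  have hq0 : 0 < q := one_pos.trans_le hq
  simp only [eLpNorm_eq_lintegral_rpow_enorm_toReal (by simpa using hq0 : ENNReal.ofReal q ≠ 0)
    ENNReal.ofReal_ne_top, ENNReal.toReal_ofReal hq0.le]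
  grw [lintegral_union_le]
  exact ENNReal.rpow_add_le_add_rpow _ _ (by positivity) ((div_le_one hq0).2 hq)

theorem tendsto_eLpNorm_restrict_of_isCompact [TopologicalSpace X] {ι : Type*} {l : Filter ι}
    {q : ℝ} (hq : 1 ≤ q) {K : Set X} (hK : IsCompact K) {F : ι → X → ℝ}
    (h : ∀ x ∈ K, ∃ V ∈ 𝓝 x,
      Tendsto (fun i => eLpNorm (F i) (ENNReal.ofReal q) (μ.restrict V)) l (𝓝 0)) :
    Tendsto (fun i => eLpNorm (F i) (ENNReal.ofReal q) (μ.restrict K)) l (𝓝 0) := by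
  refine hK.induction_on
    (p := fun S => Tendsto (fun i => eLpNorm (F i) (ENNReal.ofReal q) (μ.restrict S)) l (𝓝 0))
    (by simp [tendsto_const_nhds]) (fun S T hST hT => ?_) (fun S T hS hT => ?_) fun x hx => ?_
  · exact tendsto_of_tendsto_of_tendsto_of_le_of_le tendsto_const_nhds hT (fun _ => zero_le)
      fun _ => eLpNorm_mono_measure _ (Measure.restrict_mono_set μ hST)
  · exact tendsto_of_tendsto_of_tendsto_of_le_of_le tendsto_const_nhds
      (by simpa using hS.add hT) (fun _ => zero_le) fun _ => eLpNorm_restrict_union_le hq _ S T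
  · obtain ⟨V, hV, hlim⟩ := h x hx
    exact ⟨V, mem_nhdsWithin_of_mem_nhds hV, hlim⟩

end LpCompactness

theorem exists_forall_integral_norm_le_of_eLpNorm_le {X ι : Type*} [MeasurableSpace X]
    {μ : Measure X} [IsFiniteMeasure μ] {p : ℝ} (hp : 1 ≤ p) {f : ι → X → ℝ}
    (hf : ∀ i, AEStronglyMeasurable (f i) μ) {M : ℝ≥0∞} (hM : M ≠ ⊤)
    (hfM : ∀ i, eLpNorm (f i) (ENNReal.ofReal p) μ ≤ M) :
    ∃ C, ∀ i, ∫ x, ‖f i x‖ ∂μ ≤ C := by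
  have hexp : 0 ≤ 1 / (1 : ℝ≥0∞).toReal - 1 / (ENNReal.ofReal p).toReal := by
    rw [ENNReal.toReal_ofReal (zero_le_one.trans hp), ENNReal.toReal_one, sub_nonneg]
    exact one_div_le_one_div_of_le one_pos hp
  refine ⟨(M * μ univ ^ (1 / (1 : ℝ≥0∞).toReal - 1 / (ENNReal.ofReal p).toReal)).toReal,
    fun i => ?_⟩
  rw [integral_norm_eq_lintegral_enorm (hf i), ← eLpNorm_one_eq_lintegral_enorm]
  refine ENNReal.toReal_mono
    (ENNReal.mul_ne_top hM (ENNReal.rpow_ne_top_of_nonneg hexp (measure_ne_top _ _))) ?_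
  grw [eLpNorm_le_eLpNorm_mul_rpow_measure_univ (ENNReal.one_le_ofReal.2 hp) (hf i), hfM i]

theorem exists_mul_ofReal_rpow_mul_le {τ : ℝ} (hτ : 0 < τ) {K M ε : ℝ≥0∞} (hK : K ≠ ⊤)
    (hM : M ≠ ⊤) (hε : 0 < ε) : ∃ s ∈ Ioc (0 : ℝ) 1, K * ENNReal.ofReal s ^ τ * M ≤ ε := by
  have hlim : Tendsto (fun s : ℝ => K * ENNReal.ofReal s ^ τ * M) (𝓝[>] 0) (𝓝 0) := by
    have := ENNReal.tendsto_ofReal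
      (tendsto_id.mono_left (nhdsWithin_le_nhds (a := (0 : ℝ)) (s := Ioi 0)))
    simpa [ENNReal.zero_rpow_of_pos hτ] using ENNReal.Tendsto.mul_const
      (ENNReal.Tendsto.const_mul (this.ennrpow_const τ) (.inr hK)) (.inr hM)
  obtain ⟨s, hs⟩ := ((ENNReal.tendsto_nhds_zero.1 hlim ε hε).and
    (Ioc_mem_nhdsGT one_pos)).exists
  exact ⟨s, hs.2, hs.1⟩

section RellichKondrachov

variable {W B : Set (EuclideanSpace ℝ (Fin n))} {v : ℕ → EuclideanSpace ℝ (Fin n) → ℝ}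
  {G : ℕ → EuclideanSpace ℝ (Fin n) → EuclideanSpace ℝ (Fin n)} {p q C : ℝ}

theorem tendsto_eLpNorm_translateAverage_sub [IsFiniteMeasure (volume.restrict W)] (hq : 0 < q)
    (hW : MeasurableSet W) (hB : MeasurableSet B) (hWB : ∀ y ∈ W, (y + ·) '' B ⊆ Ω)
    (hvm : ∀ k, Measurable (v k)) (hv : ∀ k, IntegrableOn (v k) Ω)
    (hC : ∀ k, ∫ x in Ω, ‖v k x‖ ≤ C)
    (hlim : ∀ A, MeasurableSet A →
      ∃ l, Tendsto (fun k => ∫ x in A, v k x ∂volume.restrict Ω) atTop (𝓝 l)) :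
    Tendsto (fun i : ℕ × ℕ =>
      eLpNorm (translateAverage B (v i.1) - translateAverage B (v i.2)) (ENNReal.ofReal q)
        (volume.restrict W)) atTop (𝓝 0) := by
  have hbound (k : ℕ) {y : 𝔼} (hy : y ∈ W) :
      ‖translateAverage B (v k) y‖ ≤ (volume.real B)⁻¹ * C := by
    grw [norm_translateAverage_le hB (hv k) (hWB y hy), hC k]
  refine tendsto_eLpNorm_zero_of_bounded (C := (volume.real B)⁻¹ * C + (volume.real B)⁻¹ * C) hq
    (fun i => ((measurable_translateAverage (hvm i.1)).sub
      (measurable_translateAverage (hvm i.2))).aestronglyMeasurable)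
    (fun i => ae_restrict_of_forall_mem hW fun y hy =>
      (norm_sub_le _ _).trans (add_le_add (hbound i.1 hy) (hbound i.2 hy)))
    (ae_restrict_of_forall_mem hW fun y hy => ?_)
  obtain ⟨l, hl⟩ := hlim _ (measurableSet_add_left_image hB y)
  have hconv : Tendsto (fun k => translateAverage B (v k) y) atTop
      (𝓝 ((volume.real B)⁻¹ * l)) := by
    simpa only [translateAverage_eq hB (hWB y hy)] using hl.const_mul _
  rw [← prod_atTop_atTop_eq]
  simpa using (hconv.comp tendsto_fst).sub (hconv.comp tendsto_snd)

theorem MemW1p.tendsto_eLpNorm_sub_of_cone [IsFiniteMeasure (volume.restrict Ω)]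
    (hΩ : IsOpen Ω) (hp : 1 ≤ p) (hpq : p ≤ q) (hτ : 0 < 1 - n * (1 / p - 1 / q))
    (h : ∀ k, MemW1p Ω p (v k) (G k)) (hvm : ∀ k, Measurable (v k)) (hGm : ∀ k, Measurable (G k))
    {M : ℝ≥0∞} (hM : M ≠ ⊤)
    (hGM : ∀ k, eLpNorm (G k) (ENNReal.ofReal p) (volume.restrict Ω) ≤ M)
    (hC : ∀ k, ∫ x in Ω, ‖v k x‖ ≤ C)
    (hlim : ∀ A, MeasurableSet A →
      ∃ l, Tendsto (fun k => ∫ x in A, v k x ∂volume.restrict Ω) atTop (𝓝 l))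
    (hW : IsOpen W) (hWΩ : W ⊆ Ω) {ν : 𝔼} {ρ : ℝ} (hρ : 0 < ρ)
    (hcone : ∀ y ∈ W, ∀ z ∈ Metric.ball ν ρ, ∀ t ∈ Icc (0 : ℝ) 1, y + t • z ∈ Ω) :
    Tendsto (fun i : ℕ × ℕ => eLpNorm (v i.1 - v i.2) (ENNReal.ofReal q) (volume.restrict W))
      atTop (𝓝 0) := by
  have : IsFiniteMeasure (volume.restrict W) :=
    isFiniteMeasure_of_le _ (Measure.restrict_mono_set volume hWΩ)
  refine tendsto_eLpNorm_sub_of_forall_exists_approx (ENNReal.one_le_ofReal.2 (hp.trans hpq))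
    (fun k => (hvm k).aestronglyMeasurable) fun ε hε => ?_
  set K := ENNReal.ofReal (‖ν‖ + ρ) * ENNReal.ofReal (1 - n * (1 / p - 1 / q))⁻¹ *
    volume (Metric.ball (0 : 𝔼) ρ) ^ (1 / q - 1 / p)
  have hK : K ≠ ⊤ := ENNReal.mul_ne_top (by finiteness)
    (ENNReal.rpow_ne_top_of_ne_zero (Metric.measure_ball_pos volume _ hρ).ne'
      measure_ball_lt_top.ne)
  obtain ⟨s, hs, hsε⟩ : ∃ s ∈ Ioc (0 : ℝ) 1,
      K * ENNReal.ofReal s ^ (1 - n * (1 / p - 1 / q)) * M ≤ ε :=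
    exists_mul_ofReal_rpow_mul_le hτ hK hM hε
  refine ⟨fun k => translateAverage (Metric.ball (s • ν) (s * ρ)) (v k),
    fun k => (measurable_translateAverage (hvm k)).aestronglyMeasurable, fun k => ?_,
    tendsto_eLpNorm_translateAverage_sub (one_pos.trans_le (hp.trans hpq)) hW.measurableSet
      Metric.isOpen_ball.measurableSet ?_ hvm (fun k => (h k).integrableOn_fun hp) hC hlim⟩
  · grw [(h k).eLpNorm_sub_translateAverage_ball_le hΩ.measurableSet hp hpq rfl hτ (hvm k) (hGm k)
      hW hρ hs hcone, hGM k]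
    exact hsε
  · rintro y hy _ ⟨z, hz, rfl⟩
    simpa [smul_inv_smul₀ hs.1.ne'] using
      hcone y hy _ (inv_smul_mem_ball hs.1 hz) s (Ioc_subset_Icc_self hs)

theorem HasConeCondition.exists_subseq_tendsto_eLpNorm (hcone : HasConeCondition Ω)
    (hΩ : IsOpen Ω) (hΩb : IsBounded Ω) (hp : 1 < p) (hpq : p ≤ q)
    (hτ : 0 < 1 - n * (1 / p - 1 / q)) (h : ∀ k, MemW1p Ω p (v k) (G k))
    (hq : ∀ k, MemLp (v k) (ENNReal.ofReal q) (volume.restrict Ω)) {M : ℝ≥0∞} (hM : M ≠ ⊤)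
    (hvM : ∀ k, eLpNorm (v k) (ENNReal.ofReal p) (volume.restrict Ω) ≤ M)
    (hGM : ∀ k, eLpNorm (G k) (ENNReal.ofReal p) (volume.restrict Ω) ≤ M) :
    ∃ φ : ℕ → ℕ, StrictMono φ ∧ ∃ w, MemLp w (ENNReal.ofReal q) (volume.restrict Ω) ∧
      Tendsto (fun k => eLpNorm (v (φ k) - w) (ENNReal.ofReal q) (volume.restrict Ω))
        atTop (𝓝 0) := by
  have : IsFiniteMeasure (volume.restrict Ω) := isFiniteMeasure_restrict.2 hΩb.measure_lt_top.ne
  choose v' G' hvm hGm hvv' hGG' h' using fun k => (h k).exists_measurable_ae_eq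
  have hvM' (k : ℕ) : eLpNorm (v' k) (ENNReal.ofReal p) (volume.restrict Ω) ≤ M :=
    (eLpNorm_congr_ae (hvv' k)).symm.trans_le (hvM k)
  have hGM' (k : ℕ) : eLpNorm (G' k) (ENNReal.ofReal p) (volume.restrict Ω) ≤ M :=
    (eLpNorm_congr_ae (hGG' k)).symm.trans_le (hGM k)
  obtain ⟨C, hC⟩ := exists_forall_integral_norm_le_of_eLpNorm_le hp.le
    (fun k => (h' k).1.aestronglyMeasurable) hM hvM'
  obtain ⟨φ, hφ, hlim⟩ := exists_subseq_tendsto_setIntegral hp (fun k => (h' k).1) hM hvM'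
  have hlocal : ∀ x ∈ closure Ω, ∃ V ∈ 𝓝 x, Tendsto (fun i : ℕ × ℕ =>
      eLpNorm (v' (φ i.1) - v' (φ i.2)) (ENNReal.ofReal q) ((volume.restrict Ω).restrict V))
      atTop (𝓝 0) := by
    intro x hx
    obtain ⟨V, ν, ρ, hV, hxV, hρ, hVcone⟩ := hcone x hx
    refine ⟨V, hV.mem_nhds hxV, ?_⟩
    rw [Measure.restrict_restrict hV.measurableSet]
    exact MemW1p.tendsto_eLpNorm_sub_of_cone (v := fun k => v' (φ k)) (G := fun k => G' (φ k)) hΩ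
      hp.le hpq hτ (fun k => h' (φ k))
      (fun k => hvm (φ k)) (fun k => hGm (φ k)) hM
      (fun k => hGM' (φ k)) (fun k => hC (φ k))
      hlim (hV.inter hΩ) inter_subset_right hρ hVcone
  have hglobal := tendsto_eLpNorm_restrict_of_isCompact (hp.le.trans hpq) hΩb.isCompact_closure
    hlocal
  rw [Measure.restrict_restrict isClosed_closure.measurableSet,
    inter_eq_right.2 subset_closure] at hglobal
  refine ⟨φ, hφ, exists_tendsto_eLpNorm_sub_of_cauchy
    (ENNReal.one_le_ofReal.2 (hp.le.trans hpq)) (fun k => hq (φ k)) (hglobal.congr fun i => ?_)⟩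
  exact eLpNorm_congr_ae ((hvv' _).sub (hvv' _)).symm

end RellichKondrachov

/-! ### Uniform convexity and lower semicontinuity of the energy -/

section UniformConvexity

/-- Uniform convexity of the functional `‖·‖ ^ p` on `F`. The two sides are homogeneous of the
same degree, so that the property passes from `F` to `L^p` spaces of `F`-valued functions. -/
def UniformlyConvexRpow (p : ℝ) (F : Type*) [NormedAddCommGroup F] [NormedSpace ℝ F] : Prop :=
  ∀ η : ℝ, 0 < η → ∃ C : ℝ, 0 ≤ C ∧ ∀ a b : F, ‖a - b‖ ^ p ≤ η * (‖a‖ ^ p + ‖b‖ ^ p)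
    + C * ((‖a‖ ^ p + ‖b‖ ^ p) / 2 - ‖(1 / 2 : ℝ) • (a + b)‖ ^ p)

variable {F : Type*} [NormedAddCommGroup F] [NormedSpace ℝ F] {p : ℝ}

theorem norm_half_smul_add_rpow_le (hp : 1 ≤ p) (a b : F) :
    ‖(1 / 2 : ℝ) • (a + b)‖ ^ p ≤ (‖a‖ ^ p + ‖b‖ ^ p) / 2 := by
  have := norm_convex_combination_rpow_le hp (θ := 1 / 2) (by norm_num) (by norm_num) a b
  rw [show (1 - 1 / 2 : ℝ) = 1 / 2 by norm_num, ← smul_add] at this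
  linarith

theorem norm_half_smul_add_rpow_lt [StrictConvexSpace ℝ F] (hp : 1 < p) {a b : F} (hab : a ≠ b) :
    ‖(1 / 2 : ℝ) • (a + b)‖ ^ p < (‖a‖ ^ p + ‖b‖ ^ p) / 2 := by
  have hp0 : 0 < p := by linarith
  by_cases h : ‖a‖ = ‖b‖
  · have := Real.rpow_lt_rpow (norm_nonneg _) ((norm_midpoint_lt_iff h).2 hab) hp0
    rw [← h]
    linarith
  · have htriangle : ‖(1 / 2 : ℝ) • (a + b)‖ ≤ 1 / 2 * ‖a‖ + 1 / 2 * ‖b‖ := by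
      rw [norm_smul, Real.norm_of_nonneg (by norm_num), ← mul_add]
      gcongr
      exact norm_add_le a b
    have hscalar := (strictConvexOn_rpow hp).2 (norm_nonneg a) (norm_nonneg b) h
      (by norm_num : (0 : ℝ) < 1 / 2) (by norm_num : (0 : ℝ) < 1 / 2) (by norm_num)
    simp only [smul_eq_mul] at hscalar
    linarith [Real.rpow_le_rpow (norm_nonneg _) htriangle hp0.le]

theorem exists_pos_le_midpoint_gap [StrictConvexSpace ℝ F] [FiniteDimensional ℝ F] (hp : 1 < p)
    {η : ℝ} (hη : 0 < η) :
    ∃ d > 0, ∀ a b : F, max ‖a‖ ‖b‖ = 1 → η ≤ ‖a - b‖ ^ p →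
      d ≤ (‖a‖ ^ p + ‖b‖ ^ p) / 2 - ‖(1 / 2 : ℝ) • (a + b)‖ ^ p := by
  have hp0 : 0 < p := by linarith
  have hnorm : ∀ f : F × F → F, Continuous f → Continuous fun x => ‖f x‖ ^ p := fun f hf =>
    hf.norm.rpow_const fun _ => Or.inr hp0.le
  have hgap : Continuous fun x : F × F =>
      (‖x.1‖ ^ p + ‖x.2‖ ^ p) / 2 - ‖(1 / 2 : ℝ) • (x.1 + x.2)‖ ^ p :=
    (((hnorm _ continuous_fst).add (hnorm _ continuous_snd)).div_const 2).sub
      (hnorm _ ((continuous_fst.add continuous_snd).const_smul (1 / 2 : ℝ)))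
  set S : Set (F × F) := Metric.sphere 0 1 ∩ {x | η ≤ ‖x.1 - x.2‖ ^ p}
  have hS : IsCompact S := (isCompact_sphere 0 1).inter_right
    (isClosed_le continuous_const (hnorm _ (continuous_fst.sub continuous_snd)))
  rcases S.eq_empty_or_nonempty with h | h
  · exact ⟨1, one_pos, fun a b hab hη' => absurd
      (⟨mem_sphere_zero_iff_norm.2 hab, hη'⟩ : (a, b) ∈ S) (eq_empty_iff_forall_notMem.1 h _)⟩
  · obtain ⟨x, hx, hmin⟩ := hS.exists_isMinOn h hgap.continuousOn
    have hne : x.1 ≠ x.2 := fun heq => hη.not_ge <| by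
      simpa [heq, Real.zero_rpow hp0.ne'] using hx.2
    exact ⟨_, sub_pos.2 (norm_half_smul_add_rpow_lt hp hne), fun a b hab hη' =>
      hmin (⟨mem_sphere_zero_iff_norm.2 hab, hη'⟩ : (a, b) ∈ S)⟩

theorem exists_norm_sub_rpow_le_of_max_norm_eq_one [StrictConvexSpace ℝ F] [FiniteDimensional ℝ F]
    (hp : 1 < p) {η : ℝ} (hη : 0 < η) :
    ∃ C : ℝ, 0 ≤ C ∧ ∀ a b : F, max ‖a‖ ‖b‖ = 1 → ‖a - b‖ ^ p ≤ η * (‖a‖ ^ p + ‖b‖ ^ p)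
      + C * ((‖a‖ ^ p + ‖b‖ ^ p) / 2 - ‖(1 / 2 : ℝ) • (a + b)‖ ^ p) := by
  have hp0 : 0 < p := by linarith
  obtain ⟨d, hd0, hd⟩ := exists_pos_le_midpoint_gap (F := F) hp hη
  refine ⟨2 ^ p / d, by positivity, fun a b hab => ?_⟩
  rcases le_total η (‖a - b‖ ^ p) with h | h
  · have hle : ‖a - b‖ ^ p ≤ 2 ^ p := Real.rpow_le_rpow (norm_nonneg _) (by
      linarith [norm_sub_le a b, le_max_left ‖a‖ ‖b‖, le_max_right ‖a‖ ‖b‖]) hp0.le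
    calc ‖a - b‖ ^ p ≤ 2 ^ p / d * d := by rwa [div_mul_cancel₀ _ hd0.ne']
      _ ≤ 2 ^ p / d * ((‖a‖ ^ p + ‖b‖ ^ p) / 2 - ‖(1 / 2 : ℝ) • (a + b)‖ ^ p) :=
          mul_le_mul_of_nonneg_left (hd a b hab h) (by positivity)
      _ ≤ _ := le_add_of_nonneg_left (by positivity)
  · have hone : 1 ≤ ‖a‖ ^ p + ‖b‖ ^ p := by
      rcases max_choice ‖a‖ ‖b‖ with h | h <;> rw [hab] at h <;> rw [← h, Real.one_rpow]
      · exact le_add_of_nonneg_right (by positivity)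
      · exact le_add_of_nonneg_left (by positivity)
    have hgap := sub_nonneg.2 (norm_half_smul_add_rpow_le hp.le a b)
    calc ‖a - b‖ ^ p ≤ η * 1 := by rwa [mul_one]
      _ ≤ η * (‖a‖ ^ p + ‖b‖ ^ p) := mul_le_mul_of_nonneg_left hone hη.le
      _ ≤ _ := le_add_of_nonneg_right (mul_nonneg (by positivity) hgap)

theorem uniformlyConvexRpow_of_strictConvexSpace [StrictConvexSpace ℝ F] [FiniteDimensional ℝ F]
    (hp : 1 < p) : UniformlyConvexRpow p F := by
  intro η hη
  obtain ⟨C, hC, hsphere⟩ := exists_norm_sub_rpow_le_of_max_norm_eq_one (F := F) hp hη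
  refine ⟨C, hC, fun a b => ?_⟩
  rcases (norm_nonneg (a, b)).eq_or_lt with h0 | hr
  · obtain ⟨rfl, rfl⟩ := Prod.mk_eq_zero.1 (norm_eq_zero.1 h0.symm)
    simp [Real.zero_rpow (by linarith : p ≠ 0)]
  · set r := ‖(a, b)‖
    have hscale : ∀ x : F, ‖r⁻¹ • x‖ ^ p = r⁻¹ ^ p * ‖x‖ ^ p := fun x => by
      rw [norm_smul, Real.norm_of_nonneg (by positivity),
        Real.mul_rpow (by positivity) (norm_nonneg _)]
    have hunit : ‖r⁻¹ • (a, b)‖ = 1 := by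
      rw [norm_smul, Real.norm_of_nonneg (by positivity), inv_mul_cancel₀ hr.ne']
    have h := hsphere (r⁻¹ • a) (r⁻¹ • b) hunit
    simp only [← smul_sub, ← smul_add, smul_comm (1 / 2 : ℝ) r⁻¹, hscale] at h
    refine le_of_mul_le_mul_left (h.trans_eq ?_) (by positivity : 0 < r⁻¹ ^ p)
    ring

variable {X : Type*} [MeasurableSpace X] {μ : Measure X}

theorem norm_toLp_rpow {E : Type*} [NormedAddCommGroup E] (hp : 0 < p) {f : X → E}
    (hf : MemLp f (ENNReal.ofReal p) μ) : ‖hf.toLp f‖ ^ p = ∫ x, ‖f x‖ ^ p ∂μ := by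
  rw [Lp.norm_toLp, hf.eLpNorm_eq_integral_rpow_norm (by simpa using hp) ENNReal.ofReal_ne_top,
    ENNReal.toReal_ofReal hp.le, ENNReal.toReal_ofReal (by positivity),
    Real.rpow_inv_rpow (integral_nonneg fun x => by positivity) hp.ne']

theorem UniformlyConvexRpow.lp [Fact (1 ≤ ENNReal.ofReal p)] (hF : UniformlyConvexRpow p F) :
    UniformlyConvexRpow p (Lp F (ENNReal.ofReal p) μ) := by
  have hp0 : 0 < p := one_pos.trans_le (ENNReal.one_le_ofReal.1 Fact.out)
  have hnorm : ∀ f : Lp F (ENNReal.ofReal p) μ, ‖f‖ ^ p = ∫ x, ‖f x‖ ^ p ∂μ := fun f => by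
    rw [← norm_toLp_rpow hp0 (Lp.memLp f), Lp.toLp_coeFn]
  have hint : ∀ f : Lp F (ENNReal.ofReal p) μ, Integrable (fun x => ‖f x‖ ^ p) μ := fun f =>
    integrable_norm_rpow_of_memLp hp0 (Lp.memLp f)
  intro η hη
  obtain ⟨C, hC, h⟩ := hF η hη
  refine ⟨C, hC, fun f g => ?_⟩
  have hmid : (fun x => ‖((1 / 2 : ℝ) • (f + g)) x‖ ^ p)
      =ᵐ[μ] fun x => ‖(1 / 2 : ℝ) • (f x + g x)‖ ^ p := by
    filter_upwards [Lp.coeFn_smul (1 / 2 : ℝ) (f + g), Lp.coeFn_add f g] with x h1 h2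
    rw [h1, Pi.smul_apply, h2, Pi.add_apply]
  have hmidint := (hint ((1 / 2 : ℝ) • (f + g))).congr hmid
  have hsum : Integrable (fun x => ‖f x‖ ^ p + ‖g x‖ ^ p) μ := (hint f).add (hint g)
  have hgap : Integrable (fun x => (‖f x‖ ^ p + ‖g x‖ ^ p) / 2
      - ‖(1 / 2 : ℝ) • (f x + g x)‖ ^ p) μ := (hsum.div_const 2).sub hmidint
  rw [hnorm, hnorm, hnorm, hnorm, integral_congr_ae hmid, ← integral_add (hint f) (hint g),
    ← integral_const_mul, ← integral_div, ← integral_sub (hsum.div_const 2) hmidint,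
    ← integral_const_mul, ← integral_add (hsum.const_mul η) (hgap.const_mul C)]
  refine integral_mono_ae (hint (f - g)) ((hsum.const_mul η).add (hgap.const_mul C)) ?_
  filter_upwards [Lp.coeFn_sub f g] with x hx
  rw [hx, Pi.sub_apply]
  exact h (f x) (g x)

theorem UniformlyConvexRpow.cauchySeq (hp : 0 < p) (hF : UniformlyConvexRpow p F) {a : ℕ → F}
    {d : ℕ → ℝ} {D : ℝ} (ha : Tendsto (fun k => ‖a k‖) atTop (𝓝 D)) (hd0 : ∀ k, 0 ≤ d k)
    (hd : Tendsto d atTop (𝓝 D)) (hmid : ∀ i j, i ≤ j → d i ≤ ‖(1 / 2 : ℝ) • (a i + a j)‖) :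
    CauchySeq a := by
  have hD : 0 ≤ D := ge_of_tendsto' hd hd0
  refine Metric.cauchySeq_iff'.2 fun ε hε => ?_
  set η := ε ^ p / (2 * D ^ p + 1)
  obtain ⟨C, hC, h⟩ := hF η (by positivity)
  have hD' : η * (D ^ p + D ^ p) + C * ((D ^ p + D ^ p) / 2 - D ^ p) < ε ^ p := by
    have : η * (2 * D ^ p + 1) = ε ^ p := div_mul_cancel₀ _ (by positivity)
    have : 0 < η := by positivity
    linarith
  have hlim : Tendsto (fun i : ℕ × ℕ => η * (‖a i.1‖ ^ p + ‖a i.2‖ ^ p)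
      + C * ((‖a i.1‖ ^ p + ‖a i.2‖ ^ p) / 2 - d i.1 ^ p)) atTop
      (𝓝 (η * (D ^ p + D ^ p) + C * ((D ^ p + D ^ p) / 2 - D ^ p))) := by
    rw [← prod_atTop_atTop_eq]
    have hap := ha.rpow_const (p := p) (Or.inr hp.le)
    have hsum := (hap.comp tendsto_fst).add (hap.comp tendsto_snd)
    exact (hsum.const_mul η).add (((hsum.div_const 2).sub
      ((hd.rpow_const (Or.inr hp.le)).comp tendsto_fst)).const_mul C)
  obtain ⟨N, hN⟩ := eventually_atTop_prod_self'.1 (hlim.eventually_lt_const hD')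
  refine ⟨N, fun k hk => ?_⟩
  rw [dist_comm, dist_eq_norm]
  refine (Real.rpow_lt_rpow_iff (norm_nonneg _) hε.le hp).1
    (((h (a N) (a k)).trans ?_).trans_lt (hN N le_rfl k hk))
  gcongr
  exacts [hd0 N, hmid N k hk]

-- Points of almost minimal norm form a Cauchy sequence, because their midpoints stay in the sets.
theorem UniformlyConvexRpow.exists_tendsto_of_antitone [CompleteSpace F] (hp : 0 < p)
    (hF : UniformlyConvexRpow p F) {C : ℕ → Set F} (hC : Antitone C) (hconv : ∀ k, Convex ℝ (C k))
    (hne : ∀ k, (C k).Nonempty) {R : ℝ} (hR : ∀ k, Metric.infDist 0 (C k) ≤ R) :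
    ∃ (a : ℕ → F) (g : F), (∀ k, a k ∈ C k) ∧ Tendsto a atTop (𝓝 g) ∧ ‖g‖ ≤ R := by
  have hd : Monotone fun k => Metric.infDist 0 (C k) := fun i j hij =>
    Metric.infDist_le_infDist_of_subset (hC hij) (hne j)
  have hlim := tendsto_atTop_ciSup hd ⟨R, by rintro _ ⟨k, rfl⟩; exact hR k⟩
  set D := ⨆ k, Metric.infDist 0 (C k)
  have hex : ∀ k : ℕ, ∃ a ∈ C k, ‖a‖ < Metric.infDist 0 (C k) + 1 / (k + 1) := fun k => by
    simpa using (Metric.infDist_lt_iff (hne k)).1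
      (lt_add_of_pos_right (Metric.infDist 0 (C k)) (by positivity : (0 : ℝ) < 1 / (k + 1)))
  choose a ha ha' using hex
  have hlow : ∀ k, ∀ x ∈ C k, Metric.infDist 0 (C k) ≤ ‖x‖ := fun k x hx => by
    simpa using Metric.infDist_le_dist_of_mem (x := (0 : F)) hx
  have hnorm : Tendsto (fun k => ‖a k‖) atTop (𝓝 D) := by
    refine tendsto_of_tendsto_of_tendsto_of_le_of_le hlim ?_ (fun k => hlow k _ (ha k))
      fun k => (ha' k).le
    simpa using hlim.add (tendsto_one_div_add_atTop_nhds_zero_nat (𝕜 := ℝ))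
  have hcauchy : CauchySeq a :=
    hF.cauchySeq hp hnorm (fun _ => Metric.infDist_nonneg) hlim fun i j hij => by
      refine hlow i _ ?_
      rw [smul_add]
      exact hconv i (ha i) (hC hij (ha j)) (by norm_num) (by norm_num) (by norm_num)
  obtain ⟨g, hg⟩ := cauchySeq_tendsto_of_complete hcauchy
  refine ⟨a, g, ha, hg, ?_⟩
  rw [tendsto_nhds_unique hg.norm hnorm]
  exact ciSup_le hR

end UniformConvexity

section LowerSemicontinuity

theorem tendsto_integral_norm_rpow {X F ι : Type*} [MeasurableSpace X] {μ : Measure X}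
    [NormedAddCommGroup F] {l : Filter ι} {p : ℝ} (hp : 1 ≤ p) {f : ι → X → F} {f₀ : X → F}
    (hf : ∀ k, MemLp (f k) (ENNReal.ofReal p) μ) (hf₀ : MemLp f₀ (ENNReal.ofReal p) μ)
    (h : Tendsto (fun k => eLpNorm (f k - f₀) (ENNReal.ofReal p) μ) l (𝓝 0)) :
    Tendsto (fun k => ∫ x, ‖f k x‖ ^ p ∂μ) l (𝓝 (∫ x, ‖f₀ x‖ ^ p ∂μ)) := by
  have hp0 : 0 < p := by linarith
  have : Fact (1 ≤ ENNReal.ofReal p) := ⟨ENNReal.one_le_ofReal.2 hp⟩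
  simpa only [norm_toLp_rpow hp0] using
    ((Lp.tendsto_Lp_iff_tendsto_eLpNorm'' f hf f₀ hf₀).2 h).norm.rpow_const (Or.inr hp0.le)

theorem tendsto_eLpNorm_zero_of_exponent_le {X F ι : Type*} [MeasurableSpace X] {μ : Measure X}
    [IsFiniteMeasure μ] [NormedAddCommGroup F] {l : Filter ι} {p q : ℝ≥0∞} (hp : p ≠ 0)
    (hpq : p ≤ q) {f : ι → X → F} (hf : ∀ k, AEStronglyMeasurable (f k) μ)
    (h : Tendsto (fun k => eLpNorm (f k) q μ) l (𝓝 0)) :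
    Tendsto (fun k => eLpNorm (f k) p μ) l (𝓝 0) := by
  have hexp : 0 ≤ 1 / p.toReal - 1 / q.toReal := by
    rcases eq_or_ne q ⊤ with rfl | hq
    · simp
    · exact sub_nonneg.2 (one_div_le_one_div_of_le
        (ENNReal.toReal_pos hp (ne_top_of_le_ne_top hq hpq)) (ENNReal.toReal_mono hq hpq))
  refine tendsto_of_tendsto_of_tendsto_of_le_of_le tendsto_const_nhds ?_ (fun _ => zero_le)
    fun k => eLpNorm_le_eLpNorm_mul_rpow_measure_univ hpq (hf k)
  simpa using ENNReal.Tendsto.mul_const h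
    (Or.inr (ENNReal.rpow_ne_top_of_nonneg hexp (measure_ne_top μ univ)))

variable [IsFiniteMeasure (volume.restrict Ω)] {p : ℝ}

theorem convex_setOf_memW1p_eLpNorm_sub_le (hp : 1 ≤ p) [Fact (1 ≤ ENNReal.ofReal p)] {v : 𝔼 → ℝ}
    (hv : MemLp v (ENNReal.ofReal p) (volume.restrict Ω)) (ε : ℝ≥0∞) :
    Convex ℝ {k : Lp 𝔼 (ENNReal.ofReal p) (volume.restrict Ω) | ∃ w, MemW1p Ω p w k ∧
      eLpNorm (w - v) (ENNReal.ofReal p) (volume.restrict Ω) ≤ ε} := by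
  rintro k ⟨w, hw, hwv⟩ k' ⟨w', hw', hwv'⟩ a b ha hb hab
  refine ⟨fun x => a * w x + b * w' x, ((hw.const_mul a).add (hw'.const_mul b) hp).congr_ae
    ae_eq_rfl ?_, ?_⟩
  · filter_upwards [Lp.coeFn_add (a • k) (b • k'), Lp.coeFn_smul a k, Lp.coeFn_smul b k']
      with x h1 h2 h3
    rw [h1, Pi.add_apply, h2, h3, Pi.smul_apply, Pi.smul_apply]
  · have hsplit : (fun x => a * w x + b * w' x) - v = a • (w - v) + b • (w' - v) := by
      ext x
      simp only [Pi.sub_apply, Pi.add_apply, Pi.smul_apply, smul_eq_mul]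
      linear_combination v x * hab
    calc eLpNorm ((fun x => a * w x + b * w' x) - v) (ENNReal.ofReal p) (volume.restrict Ω)
        ≤ eLpNorm (a • (w - v)) (ENNReal.ofReal p) (volume.restrict Ω)
          + eLpNorm (b • (w' - v)) (ENNReal.ofReal p) (volume.restrict Ω) := by
          rw [hsplit]
          exact eLpNorm_add_le ((hw.1.sub hv).const_smul a).1 ((hw'.1.sub hv).const_smul b).1
            Fact.out
      _ ≤ ‖a‖ₑ * ε + ‖b‖ₑ * ε := by
          rw [eLpNorm_const_smul, eLpNorm_const_smul]
          gcongr
      _ = ε := by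
          rw [← add_mul, Real.enorm_of_nonneg ha, Real.enorm_of_nonneg hb,
            ← ENNReal.ofReal_add ha hb, hab, ENNReal.ofReal_one, one_mul]

theorem MemW1p.of_tendsto {ι : Type*} {l : Filter ι} [l.NeBot] (hp : 1 ≤ p) {w : ι → 𝔼 → ℝ}
    {k : ι → 𝔼 → 𝔼} (h : ∀ i, MemW1p Ω p (w i) (k i))
    (hu : MemLp u (ENNReal.ofReal p) (volume.restrict Ω))
    (hg : MemLp g (ENNReal.ofReal p) (volume.restrict Ω))
    (hwu : Tendsto (fun i => eLpNorm (w i - u) (ENNReal.ofReal p) (volume.restrict Ω)) l (𝓝 0))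
    (hkg : Tendsto (fun i => eLpNorm (k i - g) (ENNReal.ofReal p) (volume.restrict Ω)) l (𝓝 0)) :
    MemW1p Ω p u g := by
  have hp' : 1 ≤ ENNReal.ofReal p := ENNReal.one_le_ofReal.2 hp
  exact ⟨hu, hg, .of_tendsto (fun i => (h i).2.2) (fun i => (h i).integrableOn_fun hp)
    (fun i => (h i).integrableOn_grad hp) (hu.integrable hp') (hg.integrable hp')
    (tendsto_eLpNorm_zero_of_exponent_le one_ne_zero hp' (fun i => ((h i).1.sub hu).1) hwu)
    (tendsto_eLpNorm_zero_of_exponent_le one_ne_zero hp' (fun i => ((h i).2.1.sub hg).1) hkg)⟩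

-- Weak lower semicontinuity without weak compactness: approximating functions whose gradients
-- have almost minimal norm have a convergent sequence of gradients.
theorem exists_memW1p_integral_norm_rpow_le (hp : 1 < p) {w : ℕ → 𝔼 → ℝ} {k : ℕ → 𝔼 → 𝔼}
    {ℓ : ℝ} (h : ∀ i, MemW1p Ω p (w i) (k i))
    (hu : MemLp u (ENNReal.ofReal p) (volume.restrict Ω))
    (hwu : Tendsto (fun i => eLpNorm (w i - u) (ENNReal.ofReal p) (volume.restrict Ω))
      atTop (𝓝 0))
    (hk : Tendsto (fun i => ∫ x in Ω, ‖k i x‖ ^ p) atTop (𝓝 ℓ)) :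
    ∃ g, MemW1p Ω p u g ∧ ∫ x in Ω, ‖g x‖ ^ p ≤ ℓ := by
  have hp0 : 0 < p := by linarith
  have : Fact (1 ≤ ENNReal.ofReal p) := ⟨ENNReal.one_le_ofReal.2 hp.le⟩
  have hℓ : 0 ≤ ℓ := ge_of_tendsto' hk fun i => integral_nonneg fun x => by positivity
  set C : ℕ → Set (Lp 𝔼 (ENNReal.ofReal p) (volume.restrict Ω)) := fun j => {k | ∃ w,
    MemW1p Ω p w k ∧ eLpNorm (w - u) (ENNReal.ofReal p) (volume.restrict Ω) ≤ (j : ℝ≥0∞)⁻¹}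
  have hC : ∀ j, ∀ᶠ i in atTop, (h i).2.1.toLp (k i) ∈ C j := fun j => by
    filter_upwards [hwu.eventually_le_const (ENNReal.inv_pos.2 (ENNReal.natCast_ne_top j))]
      with i hi
    exact ⟨w i, (h i).congr_ae ae_eq_rfl (h i).2.1.coeFn_toLp.symm, hi⟩
  have hnorm : Tendsto (fun i => ‖(h i).2.1.toLp (k i)‖) atTop (𝓝 (ℓ ^ p⁻¹)) := by
    refine (hk.rpow_const (Or.inr (inv_nonneg.2 hp0.le))).congr fun i => ?_
    rw [← norm_toLp_rpow hp0 (h i).2.1, Real.rpow_rpow_inv (norm_nonneg _) hp0.ne']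
  obtain ⟨a, g, haC, hag, hgℓ⟩ :=
    (uniformlyConvexRpow_of_strictConvexSpace hp).lp.exists_tendsto_of_antitone hp0
      (C := C) (R := ℓ ^ p⁻¹)
      (fun i j hij k ⟨w, hw, hwi⟩ => ⟨w, hw, hwi.trans (by gcongr)⟩)
      (fun j => convex_setOf_memW1p_eLpNorm_sub_le hp.le hu _)
      (fun j => ⟨_, (hC j).exists.choose_spec⟩)
      (fun j => ge_of_tendsto hnorm ((hC j).mono fun i hi => by
        simpa using Metric.infDist_le_dist_of_mem (x := 0) hi))
  choose w' hw' hw'u using haC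
  refine ⟨g, .of_tendsto hp.le hw' hu (Lp.memLp g) ?_
    ((Lp.tendsto_Lp_iff_tendsto_eLpNorm' _ _).1 hag), ?_⟩
  · exact tendsto_of_tendsto_of_tendsto_of_le_of_le tendsto_const_nhds
      ENNReal.tendsto_inv_nat_nhds_zero (fun _ => zero_le) hw'u
  · calc ∫ x in Ω, ‖g x‖ ^ p = ‖g‖ ^ p := by rw [← norm_toLp_rpow hp0 (Lp.memLp g), Lp.toLp_coeFn]
      _ ≤ (ℓ ^ p⁻¹) ^ p := by gcongr
      _ = ℓ := Real.rpow_inv_rpow hℓ hp0.ne'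

end LowerSemicontinuity

/-! ### Minimizers -/

section Existence

variable {p q α : ℝ}

theorem exists_memW1p_le_measure_zero_set [NeZero n] (hΩ : IsOpen Ω) (hne : Ω.Nonempty)
    [IsFiniteMeasure (volume.restrict Ω)] (hp : 1 ≤ p) (hq : 0 < q) (hα : 0 ≤ α) (hα1 : α < 1) :
    ∃ v g, MemW1p Ω p v g ∧ 0 < intLqPow Ω q v ∧
      ENNReal.ofReal α * volume Ω ≤ volume {x ∈ Ω | v x = 0} := by
  obtain ⟨x, hx⟩ := hne
  have hfin : volume Ω ≠ ⊤ := by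
    simpa using measure_ne_top (volume.restrict Ω) univ
  have hε : 0 < ENNReal.ofReal (1 - α) * volume Ω :=
    ENNReal.mul_pos (by simpa using hα1) (hΩ.measure_pos volume ⟨x, hx⟩).ne'
  obtain ⟨r, hr, -, hrv⟩ := exists_measure_closedBall_le volume x hε one_pos
  let f : ContDiffBump x := ⟨r / 2, r, half_pos hr, half_lt_self hr⟩
  have hone : MemW1p Ω p (fun _ => (1 : ℝ)) (fun _ => (0 : 𝔼)) :=
    ⟨memLp_const 1, memLp_const 0, isWeakGradient_const Ω 1⟩
  refine ⟨_, _, hone.smooth_mul hp f.contDiff f.hasCompactSupport, ?_, ?_⟩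
  · have hcont : Continuous fun y => |f y * 1| ^ q :=
      (f.continuous.mul continuous_const).abs.rpow_const fun _ => Or.inr hq.le
    have hint : IntegrableOn (fun y => |f y * 1| ^ q) Ω := by
      refine (hcont.integrable_of_hasCompactSupport ?_).integrableOn
      exact f.hasCompactSupport.comp_left (g := fun t : ℝ => |t * 1| ^ q)
        (by simp [Real.zero_rpow hq.ne'])
    rw [intLqPow,
      setIntegral_pos_iff_support_of_nonneg_ae (ae_of_all _ fun y => by positivity) hint]
    refine ((Metric.isOpen_ball.inter hΩ).measure_pos volume
      ⟨x, Metric.mem_ball_self hr, hx⟩).trans_le (measure_mono ?_)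
    refine inter_subset_inter_left _ fun y hy => ?_
    have : 0 < f y := f.pos_of_mem_ball hy
    exact (by positivity : 0 < |f y * 1| ^ q).ne'
  · have hsub : Ω \ Metric.closedBall x r ⊆ {y ∈ Ω | f y * 1 = 0} := fun y ⟨hy, hyr⟩ =>
      ⟨hy, by rw [mul_one]; exact f.zero_of_le_dist (not_le.1 hyr).le⟩
    refine le_trans ?_ (le_measure_sdiff.trans (measure_mono hsub))
    refine ENNReal.le_sub_of_add_le_right
      (ne_top_of_le_ne_top (ENNReal.mul_ne_top ENNReal.ofReal_ne_top hfin) hrv) ?_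
    calc ENNReal.ofReal α * volume Ω + volume (Metric.closedBall x r)
        ≤ ENNReal.ofReal α * volume Ω + ENNReal.ofReal (1 - α) * volume Ω := by gcongr
      _ = volume Ω := by
        rw [← add_mul, ← ENNReal.ofReal_add hα (by linarith), add_sub_cancel, ENNReal.ofReal_one,
          one_mul]

theorem le_measure_zero_set_of_tendstoInMeasure {X F ι : Type*} [MeasurableSpace X]
    {μ : Measure X} [IsFiniteMeasure μ] [NormedAddCommGroup F] {l : Filter ι} [l.NeBot]
    {f : ι → X → F} {f₀ : X → F} (hf₀ : AEStronglyMeasurable f₀ μ)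
    (h : TendstoInMeasure μ f l f₀) {c : ℝ≥0∞} (hc : ∀ i, c ≤ μ {x | f i x = 0}) :
    c ≤ μ {x | f₀ x = 0} := by
  have hsmall : ∀ ε : ℝ≥0∞, 0 < ε → c ≤ μ {x | ‖f₀ x‖ₑ < ε} := fun ε hε => by
    have hlim : Tendsto (fun i => μ {x | ‖f₀ x‖ₑ < ε} + μ {x | ε ≤ edist (f i x) (f₀ x)}) l
        (𝓝 (μ {x | ‖f₀ x‖ₑ < ε})) := by
      simpa using (h ε hε).const_add (μ {x | ‖f₀ x‖ₑ < ε})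
    refine ge_of_tendsto' hlim fun i => (hc i).trans ((measure_mono fun x hx => ?_).trans
      (measure_union_le _ _))
    refine (lt_or_ge ‖f₀ x‖ₑ ε).imp id fun hle => ?_
    have hx : f i x = 0 := hx
    rwa [mem_ofPred_eq, hx, edist_comm, edist_zero_right]
  have hInter : ⋂ k : ℕ, {x | ‖f₀ x‖ₑ < (k : ℝ≥0∞)⁻¹} = {x | f₀ x = 0} := by
    ext x
    simp only [mem_iInter, mem_ofPred_eq]
    refine ⟨fun hx => enorm_eq_zero.1 (le_zero_iff.1
      (ge_of_tendsto' ENNReal.tendsto_inv_nat_nhds_zero fun k => (hx k).le)), fun hx k => ?_⟩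
    rw [hx, enorm_zero]
    exact ENNReal.inv_pos.2 (ENNReal.natCast_ne_top k)
  rw [← hInter]
  refine ge_of_tendsto' (tendsto_measure_iInter_atTop
    (fun k => hf₀.enorm.nullMeasurable measurableSet_Iio) (fun i j hij x hx => ?_)
    ⟨0, measure_ne_top _ _⟩) fun k => hsmall _ (ENNReal.inv_pos.2 (ENNReal.natCast_ne_top k))
  exact lt_of_lt_of_le hx (ENNReal.inv_le_inv.2 (by exact_mod_cast hij))

theorem sobolevEnergy_const_mul (Ω : Set 𝔼) (p : ℝ) (u : 𝔼 → ℝ) (g : 𝔼 → 𝔼) (c : ℝ) :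
    sobolevEnergy Ω p (fun x => c * u x) (fun x => c • g x) = |c| ^ p * sobolevEnergy Ω p u g := by
  rw [sobolevEnergy, sobolevEnergy, ← integral_const_mul]
  refine integral_congr_ae (ae_of_all _ fun x => ?_)
  simp only [norm_smul, abs_mul, Real.norm_eq_abs]
  rw [Real.mul_rpow (abs_nonneg _) (norm_nonneg _), Real.mul_rpow (abs_nonneg _) (abs_nonneg _),
    mul_add]

theorem intLqPow_const_mul (Ω : Set 𝔼) (q : ℝ) (u : 𝔼 → ℝ) (c : ℝ) :
    intLqPow Ω q (fun x => c * u x) = |c| ^ q * intLqPow Ω q u := by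
  rw [intLqPow, intLqPow, ← integral_const_mul]
  refine integral_congr_ae (ae_of_all _ fun x => ?_)
  simp only [abs_mul]
  rw [Real.mul_rpow (abs_nonneg _) (abs_nonneg _)]

theorem MemW1p.exists_intLqPow_eq_one (h : MemW1p Ω p u g) (hq : 0 < q)
    (hN : 0 < intLqPow Ω q u) :
    ∃ v k, MemW1p Ω p v k ∧ intLqPow Ω q v = 1 ∧
      sobolevEnergy Ω p v k = sobolevQuotient Ω p q u g ∧ ∀ x, v x = 0 ↔ u x = 0 := by
  set c : ℝ := intLqPow Ω q u ^ (-(1 / q))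
  have hc : 0 < c := Real.rpow_pos_of_pos hN _
  refine ⟨_, _, h.const_mul c, ?_, ?_, fun x => by simp [hc.ne']⟩
  · rw [intLqPow_const_mul, abs_of_pos hc, ← Real.rpow_mul hN.le,
      show -(1 / q) * q = -1 by field_simp, Real.rpow_neg_one, inv_mul_cancel₀ hN.ne']
  · rw [sobolevEnergy_const_mul, abs_of_pos hc, ← Real.rpow_mul hN.le, sobolevQuotient,
      show -(1 / q) * p = -(p / q) by ring, Real.rpow_neg hN.le,
      div_eq_inv_mul (sobolevEnergy Ω p u g)]

theorem exists_seq_tendsto_interiorConst (hq : 0 < q)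
    (hne : ∃ v g, MemW1p Ω p v g ∧ 0 < intLqPow Ω q v ∧
      ENNReal.ofReal α * volume Ω ≤ volume {x ∈ Ω | v x = 0}) :
    ∃ (v : ℕ → 𝔼 → ℝ) (g : ℕ → 𝔼 → 𝔼), (∀ k, MemW1p Ω p (v k) (g k)) ∧
      (∀ k, intLqPow Ω q (v k) = 1) ∧
      (∀ k, ENNReal.ofReal α * volume Ω ≤ volume {x ∈ Ω | v k x = 0}) ∧
      Tendsto (fun k => sobolevEnergy Ω p (v k) (g k)) atTop (𝓝 (interiorConst Ω p q α)) := by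
  obtain ⟨s, -, hs, hmem⟩ := exists_seq_tendsto_sInf
    (S := {r | ∃ v g, MemW1p Ω p v g ∧ 0 < intLqPow Ω q v ∧
      ENNReal.ofReal α * volume Ω ≤ volume {x ∈ Ω | v x = 0} ∧ r = sobolevQuotient Ω p q v g})
    (let ⟨v, g, h, hN, hz⟩ := hne; ⟨_, v, g, h, hN, hz, rfl⟩)
    ⟨0, by rintro _ ⟨v, g, -, -, -, rfl⟩; exact sobolevQuotient_nonneg _ _ _ _ _⟩
  have hnormalized : ∀ k, ∃ v g, MemW1p Ω p v g ∧ intLqPow Ω q v = 1 ∧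
      ENNReal.ofReal α * volume Ω ≤ volume {x ∈ Ω | v x = 0} ∧ sobolevEnergy Ω p v g = s k := by
    intro k
    obtain ⟨v, g, h, hN, hz, hsk⟩ := hmem k
    obtain ⟨w, b, hw, hNw, hEw, hzw⟩ := h.exists_intLqPow_eq_one hq hN
    exact ⟨w, b, hw, hNw, by simpa only [hzw] using hz, hEw.trans hsk.symm⟩
  choose v g h hN hz hE using hnormalized
  exact ⟨v, g, h, hN, hz, by simpa only [hE, interiorConst] using hs⟩

theorem sobolevEnergy_eq_add (h : MemW1p Ω p u g) (hp : 0 < p) :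
    sobolevEnergy Ω p u g = (∫ x in Ω, ‖g x‖ ^ p) + ∫ x in Ω, ‖u x‖ ^ p :=
  integral_add (integrable_norm_rpow_of_memLp hp h.2.1) (integrable_norm_rpow_of_memLp hp h.1)

theorem eLpNorm_le_of_integral_norm_rpow_le {X F : Type*} [MeasurableSpace X] {μ : Measure X}
    [NormedAddCommGroup F] (hp : 0 < p) {f : X → F} (hf : MemLp f (ENNReal.ofReal p) μ) {B : ℝ}
    (h : ∫ x, ‖f x‖ ^ p ∂μ ≤ B) :
    eLpNorm f (ENNReal.ofReal p) μ ≤ ENNReal.ofReal (B ^ p⁻¹) := by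
  rw [hf.eLpNorm_eq_integral_rpow_norm (by simpa using hp) ENNReal.ofReal_ne_top,
    ENNReal.toReal_ofReal hp.le]
  exact ENNReal.ofReal_le_ofReal (Real.rpow_le_rpow (integral_nonneg fun x => by positivity) h
    (by positivity))

theorem exists_memW1p_sobolevEnergy_le [IsFiniteMeasure (volume.restrict Ω)] (hp : 1 < p)
    {w : ℕ → 𝔼 → ℝ} {k : ℕ → 𝔼 → 𝔼} {ℓ : ℝ} (h : ∀ i, MemW1p Ω p (w i) (k i))
    (hu : MemLp u (ENNReal.ofReal p) (volume.restrict Ω))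
    (hwu : Tendsto (fun i => eLpNorm (w i - u) (ENNReal.ofReal p) (volume.restrict Ω))
      atTop (𝓝 0))
    (hE : Tendsto (fun i => sobolevEnergy Ω p (w i) (k i)) atTop (𝓝 ℓ)) :
    ∃ g, MemW1p Ω p u g ∧ sobolevEnergy Ω p u g ≤ ℓ := by
  have hp0 : 0 < p := by linarith
  have hk : Tendsto (fun i => ∫ x in Ω, ‖k i x‖ ^ p) atTop (𝓝 (ℓ - ∫ x in Ω, ‖u x‖ ^ p)) := by
    refine (hE.sub (tendsto_integral_norm_rpow hp.le (fun i => (h i).1) hu hwu)).congr fun i => ?_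
    rw [sobolevEnergy_eq_add (h i) hp0, add_sub_cancel_right]
  obtain ⟨g, hg, hgℓ⟩ := exists_memW1p_integral_norm_rpow_le hp h hu hwu hk
  exact ⟨g, hg, by rw [sobolevEnergy_eq_add hg hp0]; linarith⟩

theorem one_sub_mul_one_div_sub_pos {d : ℝ} (hd : 0 < d) (hp : 0 < p) (hq : 0 < q)
    (hsub : p < d → q < p * d / (d - p)) : 0 < 1 - d * (1 / p - 1 / max p q) := by
  rcases le_total q p with hqp | hpq
  · simp [max_eq_left hqp]
  rw [max_eq_right hpq]
  rcases lt_or_ge p d with hpd | hdp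
  · have hcrit := hsub hpd
    rw [lt_div_iff₀ (by linarith)] at hcrit
    rw [show 1 - d * (1 / p - 1 / q) = (p * d - q * (d - p)) / (p * q) by field_simp; ring]
    exact div_pos (by linarith) (by positivity)
  · have : d * (1 / p) ≤ 1 := by rwa [mul_one_div, div_le_one hp]
    have : 0 < d * (1 / q) := by positivity
    linarith

theorem HasConeCondition.exists_subseq_tendsto_of_sobolevEnergy_le [NeZero n]
    (hcone : HasConeCondition Ω) (hΩ : IsOpen Ω) (hΩb : IsBounded Ω)
    [IsFiniteMeasure (volume.restrict Ω)] (hp : 1 < p) (hq : 1 ≤ q)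
    (hsub : p < n → q < p * n / (n - p)) {v : ℕ → 𝔼 → ℝ} {g : ℕ → 𝔼 → 𝔼}
    (h : ∀ k, MemW1p Ω p (v k) (g k))
    (hvq : ∀ k, MemLp (v k) (ENNReal.ofReal q) (volume.restrict Ω)) {B : ℝ}
    (hB : ∀ k, sobolevEnergy Ω p (v k) (g k) ≤ B) :
    ∃ φ : ℕ → ℕ, StrictMono φ ∧ ∃ w,
      (MemLp w (ENNReal.ofReal p) (volume.restrict Ω) ∧
        Tendsto (fun k => eLpNorm (v (φ k) - w) (ENNReal.ofReal p) (volume.restrict Ω))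
          atTop (𝓝 0)) ∧
      MemLp w (ENNReal.ofReal q) (volume.restrict Ω) ∧
        Tendsto (fun k => eLpNorm (v (φ k) - w) (ENNReal.ofReal q) (volume.restrict Ω))
          atTop (𝓝 0) := by
  have hp0 : 0 < p := by linarith
  have hmax : ∀ k, MemLp (v k) (ENNReal.ofReal (max p q)) (volume.restrict Ω) := fun k => by
    rcases max_choice p q with hr | hr <;> rw [hr]
    exacts [(h k).1, hvq k]
  have hv0 : ∀ k, 0 ≤ ∫ x in Ω, ‖v k x‖ ^ p := fun k => integral_nonneg fun x => by positivity
  have hg0 : ∀ k, 0 ≤ ∫ x in Ω, ‖g k x‖ ^ p := fun k => integral_nonneg fun x => by positivity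
  have hB' : ∀ k, (∫ x in Ω, ‖g k x‖ ^ p) + ∫ x in Ω, ‖v k x‖ ^ p ≤ B := fun k =>
    (sobolevEnergy_eq_add (h k) hp0).symm.trans_le (hB k)
  obtain ⟨φ, hφ, w, hw, hlim⟩ := hcone.exists_subseq_tendsto_eLpNorm hΩ hΩb hp (le_max_left p q)
    (M := ENNReal.ofReal (B ^ p⁻¹))
    (one_sub_mul_one_div_sub_pos (by exact_mod_cast NeZero.pos n) hp0 (by linarith) hsub)
    h hmax ENNReal.ofReal_ne_top
    (fun k => eLpNorm_le_of_integral_norm_rpow_le hp0 (h k).1 (by linarith [hB' k, hg0 k]))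
    (fun k => eLpNorm_le_of_integral_norm_rpow_le hp0 (h k).2.1 (by linarith [hB' k, hv0 k]))
  have hlower : ∀ r, 1 ≤ r → r ≤ max p q → MemLp w (ENNReal.ofReal r) (volume.restrict Ω) ∧
      Tendsto (fun k => eLpNorm (v (φ k) - w) (ENNReal.ofReal r) (volume.restrict Ω))
        atTop (𝓝 0) := fun r hr hrmax =>
    ⟨hw.mono_exponent (ENNReal.ofReal_le_ofReal hrmax),
      tendsto_eLpNorm_zero_of_exponent_le (by simp; linarith) (ENNReal.ofReal_le_ofReal hrmax)
        (fun k => ((hmax (φ k)).sub hw).1) hlim⟩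
  exact ⟨φ, hφ, w, hlower p hp.le (le_max_left p q), hlower q hq (le_max_right p q)⟩

theorem HasConeCondition.exists_sobolevQuotient_le_interiorConst [NeZero n]
    (hcone : HasConeCondition Ω) (hΩ : IsOpen Ω) (hΩb : IsBounded Ω) (hne : Ω.Nonempty)
    [IsFiniteMeasure (volume.restrict Ω)] (hp : 1 < p) (hq : 1 ≤ q)
    (hsub : p < n → q < p * n / (n - p)) (hα : 0 ≤ α) (hα1 : α < 1) :
    ∃ v g, MemW1p Ω p v g ∧ 0 < intLqPow Ω q v ∧
      ENNReal.ofReal α * volume Ω ≤ volume {x ∈ Ω | v x = 0} ∧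
      sobolevQuotient Ω p q v g ≤ interiorConst Ω p q α := by
  have hq0 : 0 < q := by linarith
  obtain ⟨v, g, h, hN, hz, hE⟩ := exists_seq_tendsto_interiorConst hq0
    (exists_memW1p_le_measure_zero_set hΩ hne hp.le hq0 hα hα1)
  obtain ⟨B, hB⟩ := hE.bddAbove_range
  have hvq : ∀ k, MemLp (v k) (ENNReal.ofReal q) (volume.restrict Ω) := fun k =>
    memLp_of_intLqPow_pos hq0 (h k).1.1 ((hN k).symm ▸ one_pos)
  obtain ⟨φ, hφ, w, ⟨hwp, hlimp⟩, hwq, hlimq⟩ :=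
    hcone.exists_subseq_tendsto_of_sobolevEnergy_le hΩ hΩb hp hq hsub h hvq fun k => hB ⟨k, rfl⟩
  obtain ⟨b, hb, hbE⟩ := exists_memW1p_sobolevEnergy_le hp (fun k => h (φ k)) hwp hlimp
    (hE.comp hφ.tendsto_atTop)
  have hNw : intLqPow Ω q w = 1 := tendsto_nhds_unique
    (tendsto_integral_norm_rpow hq (fun k => hvq (φ k)) hwq hlimq)
    (tendsto_const_nhds.congr fun k => (hN (φ k)).symm)
  have hzero : ∀ u : 𝔼 → ℝ,
      volume {x ∈ Ω | u x = 0} = volume.restrict Ω {x | u x = 0} := fun u => by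
    rw [Measure.restrict_apply' hΩ.measurableSet, inter_comm]
    rfl
  refine ⟨w, b, hb, hNw ▸ one_pos, ?_, ?_⟩
  · rw [hzero]
    exact le_measure_zero_set_of_tendstoInMeasure hwp.1
      (tendstoInMeasure_of_tendsto_eLpNorm (by simp; linarith) (fun k => (h (φ k)).1.1) hwp.1 hlimp)
      fun k => (hz (φ k)).trans_eq (hzero _)
  · rwa [sobolevQuotient, hNw, Real.one_rpow, div_one]

end Existence

theorem interiorConst_attained_and_strictMono_general [NeZero n] (hΩo : IsOpen Ω)
    (hΩb : IsBounded Ω) (hΩc : IsConnected Ω) (hcone : HasConeCondition Ω)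
    {p q : ℝ} (hp : 1 < p) (hq : 1 ≤ q) (hsub : p < n → q < p * n / (n - p)) :
    (∀ α ∈ Ioo (0 : ℝ) 1, ∃ (v : 𝔼 → ℝ) (g : 𝔼 → 𝔼), MemW1p Ω p v g ∧
      volume {x ∈ Ω | v x = 0} = ENNReal.ofReal α * volume Ω ∧ 0 < intLqPow Ω q v ∧
      interiorConst Ω p q α = sobolevQuotient Ω p q v g) ∧
    StrictMonoOn (interiorConst Ω p q) (Ioo (0 : ℝ) 1) := by
  have hpos : volume Ω ≠ 0 := (hΩo.measure_pos volume hΩc.nonempty).ne'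
  have hfin : volume Ω ≠ ⊤ := hΩb.measure_lt_top.ne
  have : IsFiniteMeasure (volume.restrict Ω) := isFiniteMeasure_restrict.2 hfin
  have hexact : ∀ {α v g}, MemW1p Ω p v g → 0 < intLqPow Ω q v →
      ENNReal.ofReal α * volume Ω ≤ volume {x ∈ Ω | v x = 0} →
      sobolevQuotient Ω p q v g ≤ interiorConst Ω p q α →
      volume {x ∈ Ω | v x = 0} = ENNReal.ofReal α * volume Ω :=
    fun h => h.measure_zero_set_eq_of_minimizer hΩo hΩc.isPreconnected hp (by linarith)
  have hattained : ∀ α ∈ Ioo (0 : ℝ) 1, ∃ v g, MemW1p Ω p v g ∧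
      volume {x ∈ Ω | v x = 0} = ENNReal.ofReal α * volume Ω ∧ 0 < intLqPow Ω q v ∧
      interiorConst Ω p q α = sobolevQuotient Ω p q v g := fun α hα => by
    obtain ⟨v, g, h, hN, hz, hmin⟩ := hcone.exists_sobolevQuotient_le_interiorConst hΩo hΩb
      hΩc.nonempty hp hq hsub hα.1.le hα.2
    exact ⟨v, g, h, hexact h hN hz hmin, hN, (interiorConst_le h hN hz).antisymm hmin⟩
  refine ⟨hattained, fun α _ β hβ hαβ => lt_of_not_ge fun hle => ?_⟩
  obtain ⟨v, g, h, hz, hN, hβv⟩ := hattained β hβ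
  have hlt : ENNReal.ofReal α * volume Ω < volume {x ∈ Ω | v x = 0} := hz ▸
    ENNReal.mul_lt_mul_left hpos hfin ((ENNReal.ofReal_lt_ofReal_iff hβ.1).2 hαβ)
  exact hlt.ne' (hexact h hN hlt.le (hβv ▸ hle))

/-- **Existence of extremals and strict monotonicity for the interior problem.**
For every `0 < α < 1` the constant `𝕊(α)` is attained at some `v_α ∈ W^{1,p}(Ω₁)` whose zero set
has measure exactly `α |Ω₁|`; moreover `α ↦ 𝕊(α)` is strictly increasing on `(0,1)`. -/
theorem interiorConst_attained_and_strictMono {n : ℕ} (hn : 1 ≤ n)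
    (Ω₁ : Set (EuclideanSpace ℝ (Fin n)))
    (hΩo : IsOpen Ω₁) (hΩb : IsBounded Ω₁) (hΩc : IsConnected Ω₁) (hΩs : HasSmoothBoundary Ω₁)
    (p q : ℝ) (hp : 1 < p) (hq : 1 ≤ q)
    (hsub : p < n → q < p * n / (n - p)) :
    (∀ α ∈ Ioo (0 : ℝ) 1,
      ∃ (v : EuclideanSpace ℝ (Fin n) → ℝ)
        (g : EuclideanSpace ℝ (Fin n) → EuclideanSpace ℝ (Fin n)),
        MemW1p Ω₁ p v g ∧
        volume {x ∈ Ω₁ | v x = 0} = ENNReal.ofReal α * volume Ω₁ ∧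
        0 < intLqPow Ω₁ q v ∧
        interiorConst Ω₁ p q α = sobolevQuotient Ω₁ p q v g) ∧
    StrictMonoOn (interiorConst Ω₁ p q) (Ioo (0 : ℝ) 1) := by
  have : NeZero n := ⟨Nat.one_le_iff_ne_zero.1 hn⟩
  exact interiorConst_attained_and_strictMono_general hΩo hΩb hΩc (hΩs.hasConeCondition hΩo)
    hp hq hsub
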